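/- arXiv:1402.1228 — 3 statements merged into one kernel-verified Lean document; each statement's English description precedes it below -/
import Mathlib

section
/- Let p be a prime with p ≡ 1 (mod 8) and k = ℚ(√(2p), i). Then the 2-Sylow subgroup of Cl(k) is isomorphic to ℤ/2ℤ × ℤ/4ℤ if and only if either (2/p)₄ = (p/2)₄ = −1, or (2/p)₄ = −1 and (p/2)₄ = 1. -/
/-!
Since `(1 - i)θ` is a square root of `2p` when `θ² = ip`, the ring of integers of `k` is `ℤ[i][θ]`
(`exists_ringEquiv`), a quadratic extension of the principal ideal domain `ℤ[i]` that is ramified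
exactly at `1 + i`, `π` and `π̄`, where `p = ππ̄`. The 2-part of its class group `C` is determined by
genus theory over `ℤ[i]`. The value of `(p/2)₄` plays no role: the right-hand side of the theorem
says just that `(2/p)₄ = -1`.

*Characters.* Reduction modulo `π` or `π̄` is a ring homomorphism `f : ℤ[i] → 𝔽_p`, and sending an
ideal prime to `p` to the quadratic character of the image under `f` of a generator of its relative
norm defines a character `χ_f` of `C` (`classChar`): units of `ℤ[i]` are squares modulo `p`
as `8 ∣ p - 1`, and norms of elements are squares modulo `θ`. Dirichlet's theorem shows that the
two characters are jointly surjective onto `{±1}²` (`exists_both_neg`, `exists_prod_neg`).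

*2-torsion.* A class of order dividing two is a product of classes of ramified primes and of the
ideal `𝔠 = (c, γ)`, `γ = (1 - i)x₀ + θ`, where `p = c² - 2x₀²`; here `𝔠² = (γ)` and `N(γ) = -ic²`
(`two_torsion`). A minimal solution of the Pell equation for `2p` gives one further relation
(`two_torsion_rel`), so that `C[2]` has at most four elements, among them the class of
`𝔓 = (π, θ)`, which is not trivial (`cls_idP_ne_one`). By counting, the squares of `C` are then the
common kernel of the two characters.

*Values.* Both characters are trivial on `[𝔓]`, so `[𝔓]` is a square, and both take the value
`(c/p) = (2/p)₄` on `[𝔠]` (`CData.qc`). The key point is that the product of the two characters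
takes the value `(2/p)₄` on every square root `W` of `[𝔓]` (`classChar_sqrt`). Let `I ∈ W` and
`I²𝔓 = (α)`, and let `τ` be the automorphism over complex conjugation with `θ ↦ iθ`. Then
`δ = α·τ(α)·γ/θ` generates the square of `I·τ(I)·𝔠`, has an integer `U` as rational part, and
has norm `m²` with `m = ±N(b)c`, where `b` generates the relative norm of `I`. The explicit form of
Hilbert 90 (`hilbert_ninety`) makes `2(m + U)` a square up to units and ramified primes; choosing
the sign so that `m ≡ U mod p` yields `(m/p) = 1`, that is `(N(b)/p) = (c/p)`.

If `(2/p)₄ = -1`, then no square root of `[𝔓]` is a square and `[𝔠]` is not a square, so the 2-part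
is `⟨[𝔠]⟩ × ⟨W⟩ ≅ ℤ/2 × ℤ/4`. If `(2/p)₄ = 1`, the 2-part cannot be `ℤ/2 × ℤ/4`: either `[𝔓]` is a
fourth power or all its square roots have characters `(-1, -1)`, which makes every 2-torsion class
a square. This is the group-theoretic statement `sylow_two_iff`.
-/

open Complex NumberField IntermediateField nonZeroDivisors

noncomputable section

/-- k = ℚ(√(2p), i) as a subfield of ℂ. -/
def kfield (p : ℕ) : IntermediateField ℚ ℂ := ℚ⟮(Real.sqrt (2 * p) : ℂ), (Complex.I : ℂ)⟯

/-! ### Group theory -/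

/-- In a finite commutative group a Sylow `2`-subgroup consists of all elements of `2`-power
order. -/
theorem mem_sylow_two {C : Type*} [CommGroup C] [Finite C] (A : Sylow 2 C) (x : C) :
    x ∈ A ↔ ∃ k : ℕ, x ^ (2 ^ k) = 1 := by
  constructor
  · intro hx
    obtain ⟨k, hk⟩ := A.isPGroup' ⟨x, hx⟩
    exact ⟨k, by simpa using congrArg Subtype.val hk⟩
  · rintro ⟨k, hk⟩
    have hpg : IsPGroup 2 (Subgroup.zpowers x) := by
      rintro ⟨y, hy⟩
      obtain ⟨n, rfl⟩ := Subgroup.mem_zpowers_iff.1 hy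
      refine ⟨k, ?_⟩
      ext
      simp only [SubmonoidClass.coe_pow, OneMemClass.coe_one]
      rw [← zpow_natCast, ← zpow_mul, mul_comm, zpow_mul, zpow_natCast, hk, one_zpow]
    obtain ⟨B, hB⟩ := hpg.exists_le_sylow
    have : B = A := by
      have : A.Normal := inferInstance
      have := Sylow.unique_of_normal A this
      exact Subsingleton.elim _ _
    exact this ▸ hB (Subgroup.mem_zpowers x)

/-- If the `2`-torsion has at most four elements and two sign characters are jointly surjective,
then every element of the common kernel of the characters is a square. -/
theorem exists_sq_of_chars {C : Type*} [CommGroup C] [Finite C] (χ₁ χ₂ : C →* ℤˣ)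
    (hx : ∃ x, χ₁ x = -1 ∧ χ₂ x = -1) (hy : ∃ y, χ₁ y * χ₂ y = -1)
    (g P : C) (h2 : ∀ x : C, x ^ 2 = 1 → x = 1 ∨ x = P ∨ x = g ∨ x = g * P)
    (z : C) (h1 : χ₁ z = 1) (h1' : χ₂ z = 1) : ∃ y, y ^ 2 = z := by
  set φ : C →* C := powMonoidHom 2
  set ψ : C →* ℤˣ × ℤˣ := χ₁.prod χ₂ with hψ
  have hsurj : Function.Surjective ψ := by
    obtain ⟨x, hx1, hx2⟩ := hx
    obtain ⟨y, hy⟩ := hy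
    rintro ⟨a, b⟩
    rcases Int.units_eq_one_or (χ₁ y) with e1 | e1 <;>
    rcases Int.units_eq_one_or (χ₂ y) with e2 | e2 <;>
    rcases Int.units_eq_one_or a with rfl | rfl <;> rcases Int.units_eq_one_or b with rfl | rfl <;>
    first
    | (exfalso; rw [e1, e2] at hy; revert hy; decide)
    | (refine ⟨1, ?_⟩; simp [hψ]; done)
    | (refine ⟨x, ?_⟩; simp [hψ, hx1, hx2]; done)
    | (refine ⟨y, ?_⟩; simp [hψ, e1, e2]; done)
    | (refine ⟨x * y, ?_⟩; simp [hψ, e1, e2, hx1, hx2])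
  have hcard1 : Nat.card φ.ker * Nat.card φ.range = Nat.card C := by
    rw [← Subgroup.card_mul_index φ.ker, Subgroup.index_ker]
  have hcard2 : Nat.card ψ.ker * 4 = Nat.card C := by
    rw [← Subgroup.card_mul_index ψ.ker, Subgroup.index_ker,
      MonoidHom.range_eq_top.2 hsurj, Subgroup.card_top]
    congr 1
    simp [Nat.card_eq_fintype_card]
  have hker : Nat.card φ.ker ≤ 4 := by
    classical
    have hsub : (φ.ker : Set C) ⊆ ({1, P, g, g * P} : Finset C) := by
      intro x hx
      have := h2 x (by simpa [φ] using hx)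
      simpa using this
    calc Nat.card φ.ker = Set.ncard (φ.ker : Set C) := rfl
      _ ≤ Set.ncard (({1, P, g, g * P} : Finset C) : Set C) :=
        Set.ncard_le_ncard hsub (Finset.finite_toSet _)
      _ ≤ 4 := by rw [Set.ncard_coe_finset]; exact Finset.card_le_four
  have hle : φ.range ≤ ψ.ker := by
    rintro _ ⟨x, rfl⟩
    simp only [φ, hψ, MonoidHom.mem_ker, powMonoidHom_apply, map_pow, MonoidHom.prod_apply]
    ext <;> simp [Int.units_sq]
  have heq : φ.range = ψ.ker := by
    apply Subgroup.eq_of_le_of_card_ge hle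
    have hpos : 0 < Nat.card φ.range := Nat.card_pos
    nlinarith
  have : z ∈ φ.range := by
    rw [heq, hψ]
    simp [MonoidHom.mem_ker, h1, h1']
  obtain ⟨y, hy⟩ := this
  exact ⟨y, by simpa [φ] using hy⟩

/-- The group-theoretic skeleton of the theorem: genus theory (two characters detecting squares,
`2`-torsion of order at most four) together with the value `s` of `χ₁χ₂` on square roots of `P`
decides whether the `2`-part is `ℤ/2 × ℤ/4`. -/
theorem sylow_two_iff {C : Type*} [CommGroup C] [Finite C] (χ₁ χ₂ : C →* ℤˣ) (s : ℤˣ)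
    (hx : ∃ x, χ₁ x = -1 ∧ χ₂ x = -1) (hy : ∃ y, χ₁ y * χ₂ y = -1)
    (g P : C) (hP : P ^ 2 = 1) (hP1 : P ≠ 1) (hPχ₁ : χ₁ P = 1) (hPχ₂ : χ₂ P = 1)
    (h2 : ∀ x : C, x ^ 2 = 1 → x = 1 ∨ x = P ∨ x = g ∨ x = g * P)
    (hW : ∀ W : C, W ^ 2 = P → χ₁ W * χ₂ W = s)
    (hc : s = -1 → ∃ c : C, c ^ 2 = 1 ∧ χ₁ c = -1) :
    (∀ A : Sylow 2 C, Nonempty (A ≃* Multiplicative (ZMod 2 × ZMod 4))) ↔ s = -1 := by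
  have hsq := exists_sq_of_chars χ₁ χ₂ hx hy g P h2
  obtain ⟨W, hWP⟩ := hsq P hPχ₁ hPχ₂
  have hW4 : W ^ 4 = 1 := by rw [show 4 = 2 * 2 by rfl, pow_mul, hWP, hP]
  have hχsq : ∀ (χ : C →* ℤˣ) (x : C), χ (x ^ 2) = 1 := fun χ x => by simp [Int.units_sq]
  constructor
  · intro h
    obtain ⟨A⟩ : Nonempty (Sylow 2 C) := inferInstance
    obtain ⟨e⟩ := h A
    have hexp : ∀ m : Multiplicative (ZMod 2 × ZMod 4), m ^ 4 = 1 := by decide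
    have hA4 : ∀ V ∈ A, V ^ 4 = 1 := by
      intro V hV
      have : (⟨V, hV⟩ : A) ^ 4 = 1 := e.injective (by rw [map_pow, hexp, map_one])
      simpa using congrArg Subtype.val this
    have hno : ∀ V : C, V ^ 4 ≠ P := by
      intro V hV
      have : V ^ 4 = 1 := hA4 V ((mem_sylow_two A V).2 ⟨3, by
        rw [show 2 ^ 3 = 4 * 2 by rfl, pow_mul, hV, hP]⟩)
      exact hP1 (hV ▸ this)
    by_contra hs
    have hs1 : s = 1 := (Int.units_eq_one_or s).resolve_right hs
    have hroot : ∀ U : C, U ^ 2 = P → χ₁ U = -1 ∧ χ₂ U = -1 := by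
      intro U hU
      have h12 := hW U hU
      rw [hs1] at h12
      rcases Int.units_eq_one_or (χ₁ U) with e1 | e1
      · rw [e1, one_mul] at h12
        obtain ⟨V, hV⟩ := hsq U e1 h12
        exact absurd (by rw [show 4 = 2 * 2 by rfl, pow_mul, hV, hU]) (hno V)
      · refine ⟨e1, ?_⟩
        rw [e1] at h12
        simpa using congrArg (fun t => -t) h12
    obtain ⟨γ, hγ⟩ := e.surjective (Multiplicative.ofAdd ((1, 0) : ZMod 2 × ZMod 4))
    have hγ2 : (γ : C) ^ 2 = 1 := by
      have : γ ^ 2 = 1 := e.injective (by rw [map_pow, hγ, map_one]; decide)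
      simpa using congrArg Subtype.val this
    have hWγ := hroot (W * γ) (by rw [mul_pow, hWP, hγ2, mul_one])
    have hW' := hroot W hWP
    obtain ⟨V, hV⟩ := hsq (γ : C) (by simpa [hW'.1] using hWγ.1) (by simpa [hW'.2] using hWγ.2)
    have hVA : V ∈ A := (mem_sylow_two A V).2 ⟨2, by
      rw [show 2 ^ 2 = 2 * 2 by rfl, pow_mul, hV, hγ2]⟩
    have hsqM : ∀ m : Multiplicative (ZMod 2 × ZMod 4),
        m ^ 2 ≠ Multiplicative.ofAdd ((1, 0) : ZMod 2 × ZMod 4) := by decide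
    apply hsqM (e ⟨V, hVA⟩)
    rw [← map_pow, ← hγ]
    congr 1
    ext
    simpa using hV
  · intro hs A
    obtain ⟨c, hc2, hcχ⟩ := hc hs
    have hg2 : ∀ x : C, x ^ 2 = 1 → x = 1 ∨ x = P ∨ x = c ∨ x = c * P := by
      have hcg : c = g ∨ c = g * P := by
        rcases h2 c hc2 with h | h | h | h
        · rw [h, map_one] at hcχ; exact absurd hcχ (by decide)
        · rw [h, hPχ₁] at hcχ; exact absurd hcχ (by decide)
        · exact Or.inl h
        · exact Or.inr h
      have hPP : P * P = 1 := by rw [← sq, hP]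
      intro x hx
      rcases hcg with rfl | rfl
      · exact h2 x hx
      · rw [mul_assoc, hPP, mul_one]
        rcases h2 x hx with h | h | h | h <;> simp [h]
    have hker : ∀ x : C, x ^ 2 = 1 → χ₁ x = 1 → x = 1 ∨ x = P := by
      intro x hx hxχ
      rcases hg2 x hx with h | h | h | h
      · exact Or.inl h
      · exact Or.inr h
      · rw [h, hcχ] at hxχ; exact absurd hxχ (by decide)
      · rw [h, map_mul, hcχ, hPχ₁] at hxχ; exact absurd hxχ (by decide)
    have h84 : ∀ V : C, V ^ 8 = 1 → V ^ 4 = 1 := by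
      intro V hV
      have h4 : V ^ 4 = (V ^ 2) ^ 2 := by rw [← pow_mul]
      rcases hker (V ^ 4) (by rw [← pow_mul]; exact hV) (by rw [h4]; exact hχsq _ _) with h | h
      · exact h
      · have := hW (V ^ 2) (by rw [← h4, h])
        rw [hχsq, hχsq, hs] at this
        exact absurd this (by decide)
    have hexp : ∀ (k : ℕ) (V : C), V ^ (2 ^ k) = 1 → V ^ 4 = 1 := by
      intro k
      induction k with
      | zero => intro V hV; rw [pow_zero, pow_one] at hV; rw [hV, one_pow]
      | succ k ih =>
        intro V hV
        have h1 : (V ^ 2) ^ 4 = 1 := ih (V ^ 2) (by rw [← pow_mul, ← pow_succ']; exact hV)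
        exact h84 V (by rw [← h1, ← pow_mul])
    have hc' : zmultiplesHom (Additive C) (Additive.ofMul c) (2 : ℕ) = 0 := by
      rw [zmultiplesHom_apply, natCast_zsmul, ← ofMul_pow, hc2, ofMul_one]
    have hW' : zmultiplesHom (Additive C) (Additive.ofMul W) (4 : ℕ) = 0 := by
      rw [zmultiplesHom_apply, natCast_zsmul, ← ofMul_pow, hW4, ofMul_one]
    let fc : ZMod 2 →+ Additive C :=
      ZMod.lift 2 ⟨zmultiplesHom (Additive C) (Additive.ofMul c), hc'⟩
    let fW : ZMod 4 →+ Additive C :=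
      ZMod.lift 4 ⟨zmultiplesHom (Additive C) (Additive.ofMul W), hW'⟩
    let F : Multiplicative (ZMod 2 × ZMod 4) →* C := AddMonoidHom.toMultiplicativeLeft (fc.coprod fW)
    have hF : ∀ a b : ℕ, F (Multiplicative.ofAdd ((a : ZMod 2), (b : ZMod 4))) = c ^ a * W ^ b := by
      intro a b
      have h1 : fc (a : ZMod 2) = Additive.ofMul (c ^ a) := by
        have := ZMod.lift_coe 2 ⟨zmultiplesHom (Additive C) (Additive.ofMul c), hc'⟩ (a : ℤ)
        simpa [fc] using this
      have h2 : fW (b : ZMod 4) = Additive.ofMul (W ^ b) := by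
        have := ZMod.lift_coe 4 ⟨zmultiplesHom (Additive C) (Additive.ofMul W), hW'⟩ (b : ℤ)
        simpa [fW] using this
      simp [F, h1, h2]
    have hFA : ∀ m, F m ∈ A := by
      intro m
      refine (mem_sylow_two A _).2 ⟨2, ?_⟩
      rw [← map_pow, show m ^ 2 ^ 2 = 1 by revert m; decide, map_one]
    have hχW := hW W hWP
    have hWA : W ^ 2 ≠ 1 := hWP ▸ hP1
    have hinj : Function.Injective F := by
      rw [injective_iff_map_eq_one]
      intro m hm
      obtain ⟨a, b, ha, hb, rfl⟩ : ∃ a b : ℕ, a < 2 ∧ b < 4 ∧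
          m = Multiplicative.ofAdd ((a : ZMod 2), (b : ZMod 4)) :=
        ⟨(m.toAdd.1).val, (m.toAdd.2).val, ZMod.val_lt _, ZMod.val_lt _, by simp⟩
      rw [hF] at hm
      have hsqm := congrArg (· ^ 2) hm
      simp only [mul_pow, ← pow_mul, one_pow] at hsqm
      have hW6 : W ^ 6 = W ^ 2 := by rw [show 6 = 4 + 2 by rfl, pow_add, hW4, one_mul]
      have hχ₁c1 := congrArg χ₁ hm
      rcases (by omega : a = 0 ∨ a = 1) with rfl | rfl <;>
      rcases (by omega : b = 0 ∨ b = 1 ∨ b = 2 ∨ b = 3) with rfl | rfl | rfl | rfl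
      · rfl
      · exact absurd (by simpa using hsqm) hWA
      · exact absurd (by simpa using hm) hWA
      · exact absurd (by simpa [hW6] using hsqm) hWA
      · simp [hcχ] at hχ₁c1
      · exact absurd (by simpa [hc2] using hsqm) hWA
      · simp [hcχ, Int.units_sq] at hχ₁c1
      · exact absurd (by simpa [hc2, hW6] using hsqm) hWA
    have hsurj : ∀ V ∈ A, ∃ m, F m = V := by
      intro V hV
      obtain ⟨k, hk⟩ := (mem_sylow_two A V).1 hV
      have hV4 := hexp k V hk
      have htor : ∀ x : C, x ^ 2 = 1 → ∃ m, F m = x := by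
        intro x hx
        rcases hg2 x hx with h | h | h | h
        · exact ⟨1, by rw [map_one, h]⟩
        · exact ⟨_, by rw [hF 0 2, h, hWP]; simp⟩
        · exact ⟨_, by rw [hF 1 0, h]; simp⟩
        · exact ⟨_, by rw [hF 1 2, h, hWP]; simp⟩
      rcases hker (V ^ 2) (by rw [← pow_mul]; exact hV4) (hχsq _ _) with h | h
      · exact htor V h
      · obtain ⟨m, hm⟩ := htor (V * W⁻¹) (by rw [mul_pow, inv_pow, h, hWP, mul_inv_cancel])
        refine ⟨m * Multiplicative.ofAdd (((0 : ℕ) : ZMod 2), ((1 : ℕ) : ZMod 4)), ?_⟩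
        rw [map_mul, hm, hF]
        simp
    refine ⟨(MulEquiv.ofBijective (F.codRestrict (A : Subgroup C) hFA) ⟨?_, ?_⟩).symm⟩
    · intro a b hab
      exact hinj (congrArg Subtype.val hab)
    · rintro ⟨V, hV⟩
      obtain ⟨m, hm⟩ := hsurj V hV
      exact ⟨m, Subtype.ext hm⟩

/-! ### The order `ℤ[i][θ]`, `θ² = ip`, is the ring of integers -/

/-- The ring `ℤ[i][θ]` with `θ² = ip`. Since `(1 - i)θ` is a square root of `2p`, it is an order of
`ℚ(√(2p), i)`; it turns out to be the maximal one. -/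
abbrev SS (p : ℕ) := QuadraticAlgebra GaussianInt (⟨0, (p : ℤ)⟩ : GaussianInt) 0

/-- The imaginary unit of `ℤ[i]`. -/
def gaussI : GaussianInt := ⟨0, 1⟩

@[simp] theorem gaussI_re : gaussI.re = 0 := rfl
@[simp] theorem gaussI_im : gaussI.im = 1 := rfl

theorem gaussI_sq : gaussI ^ 2 = -1 := by
  ext <;> simp [sq]

theorem ip_eq (p : ℕ) : (⟨0, (p : ℤ)⟩ : GaussianInt) = gaussI * p := by
  ext <;> simp

theorem gauss_norm_eq (x : GaussianInt) : x.norm = x.re ^ 2 + x.im ^ 2 := by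
  rw [Zsqrtd.norm_def]; ring

theorem gauss_unit {u : GaussianInt} (h : IsUnit u) : u = 1 ∨ u = -1 ∨ u = gaussI ∨ u = -gaussI := by
  have h1 : u.norm = 1 := (Zsqrtd.norm_eq_one_iff' (by norm_num) u).2 h
  rw [gauss_norm_eq] at h1
  have h2 : u.re ≤ 1 := by nlinarith [sq_nonneg u.im]
  have h3 : -1 ≤ u.re := by nlinarith [sq_nonneg u.im]
  have h4 : u.im ≤ 1 := by nlinarith [sq_nonneg u.re]
  have h5 : -1 ≤ u.im := by nlinarith [sq_nonneg u.re]
  obtain ⟨a, b⟩ := u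
  simp only at h1 h2 h3 h4 h5
  interval_cases a <;> interval_cases b <;> simp_all [Zsqrtd.ext_iff]

theorem not_isSquare_two_mul {p : ℕ} (hp8 : p % 8 = 1) : ¬ IsSquare (2 * p) := by
  rintro ⟨r, hr⟩
  rcases Nat.even_or_odd' r with ⟨m, rfl | rfl⟩
  · have : p = 2 * (m * m) := by nlinarith
    omega
  · have : 2 * p = 2 * (2 * m * m + 2 * m) + 1 := by rw [hr]; ring
    omega

/-- `2p` is not the square of a quotient of integers. -/
theorem int_sq_ne {p : ℕ} (hp8 : p % 8 = 1) {A M : ℤ} (h : A ^ 2 = 2 * p * M ^ 2) : M = 0 := by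
  by_contra hM
  apply not_isSquare_two_mul hp8
  have h1 : M ^ 2 ∣ A ^ 2 := ⟨2 * p, by rw [h]; ring⟩
  obtain ⟨c, rfl⟩ := (Int.pow_dvd_pow_iff two_ne_zero).1 h1
  have h2 : c ^ 2 = 2 * p := by
    have : M ^ 2 * c ^ 2 = M ^ 2 * (2 * p) := by linear_combination h
    exact mul_left_cancel₀ (pow_ne_zero 2 hM) this
  refine ⟨c.natAbs, ?_⟩
  zify
  rw [← sq, sq_abs, h2]

/-- The image of `θ` in `ℂ`. -/
def thetaC (p : ℕ) : ℂ := (Real.sqrt (2 * p) : ℂ) / (1 - I)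

theorem one_sub_I_ne : (1 - I : ℂ) ≠ 0 := by
  intro h
  simpa using congrArg Complex.im h

theorem sqrtC_sq (p : ℕ) : ((Real.sqrt (2 * p) : ℝ) : ℂ) ^ 2 = 2 * p := by
  rw [← Complex.ofReal_pow, Real.sq_sqrt (by positivity)]
  push_cast; ring

theorem thetaC_sq (p : ℕ) : thetaC p ^ 2 = I * p := by
  have h := sqrtC_sq p
  rw [thetaC, div_pow, h, div_eq_iff (pow_ne_zero 2 one_sub_I_ne)]
  linear_combination (2 * (p : ℂ) - p * I) * Complex.I_sq

/-- The embedding of `ℤ[i][θ]` into `ℂ`. -/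
def emb (p : ℕ) : SS p →+* ℂ where
  toFun z := GaussianInt.toComplex z.re + GaussianInt.toComplex z.im * thetaC p
  map_one' := by
    simp [show (1 : SS p).re = 1 from rfl, show (1 : SS p).im = 0 from rfl]
  map_zero' := by simp
  map_add' x y := by simp; ring
  map_mul' x y := by
    have h : GaussianInt.toComplex (⟨0, (p : ℤ)⟩ : GaussianInt) = I * p := by
      simp [GaussianInt.toComplex_def]; ring
    simp only [QuadraticAlgebra.re_mul, QuadraticAlgebra.im_mul, map_add, map_mul, h, map_zero]
    linear_combination (-(GaussianInt.toComplex x.im * GaussianInt.toComplex y.im)) * thetaC_sq p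

theorem emb_apply (p : ℕ) (z : SS p) :
    emb p z = GaussianInt.toComplex z.re + GaussianInt.toComplex z.im * thetaC p := rfl

theorem gaussI_toComplex : GaussianInt.toComplex gaussI = I := by
  simp [GaussianInt.toComplex_def]

theorem emb_injective {p : ℕ} (hp8 : p % 8 = 1) : Function.Injective (emb p) := by
  rw [injective_iff_map_eq_zero]
  intro z hz
  rw [emb_apply] at hz
  have h1 : GaussianInt.toComplex ((1 - gaussI) * z.re * star z.im) =
      -((Real.sqrt (2 * p) : ℝ) : ℂ) * GaussianInt.toComplex (z.im * star z.im) := by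
    have h2 : GaussianInt.toComplex z.re * (1 - I) =
        - GaussianInt.toComplex z.im * (Real.sqrt (2 * p) : ℝ) := by
      have : thetaC p * (1 - I) = (Real.sqrt (2 * p) : ℝ) := div_mul_cancel₀ _ one_sub_I_ne
      linear_combination (1 - I) * hz - GaussianInt.toComplex z.im * this
    simp only [map_mul, map_sub, map_one, gaussI_toComplex]
    linear_combination GaussianInt.toComplex (star z.im) * h2
  rw [← Zsqrtd.norm_eq_mul_conj] at h1
  have h4 : ((((1 - gaussI) * z.re * star z.im).re : ℤ) : ℝ) ^ 2 = 2 * p * (z.im.norm : ℝ) ^ 2 := by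
    have h5 : ((((1 - gaussI) * z.re * star z.im).re : ℤ) : ℝ) =
        - Real.sqrt (2 * p) * (z.im.norm : ℝ) := by
      rw [GaussianInt.intCast_re, h1]
      simp
    rw [h5, mul_pow, neg_sq, Real.sq_sqrt (by positivity)]
  have h5 := int_sq_ne hp8 (by exact_mod_cast h4)
  have h6 : z.im = 0 := GaussianInt.norm_eq_zero.1 h5
  rw [h6, map_zero, zero_mul, add_zero] at hz
  have h7 : z.re = 0 := GaussianInt.toComplex_injective (by rw [hz, map_zero])
  exact QuadraticAlgebra.ext h7 h6

theorem SS_isDomain {p : ℕ} (hp8 : p % 8 = 1) : IsDomain (SS p) :=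
  (emb_injective hp8).isDomain (emb p)

theorem SS_norm_ne_zero {p : ℕ} (hp8 : p % 8 = 1) {z : SS p} (hz : z ≠ 0) :
    QuadraticAlgebra.norm z ≠ 0 := by
  have := SS_isDomain hp8
  intro h
  have h2 := QuadraticAlgebra.algebraMap_norm_eq_mul_star z
  rw [h, map_zero] at h2
  rcases mul_eq_zero.1 h2.symm with h | h
  · exact hz h
  · exact hz (star_eq_zero.1 h)

theorem emb_algebraMap (p : ℕ) (x : GaussianInt) :
    emb p (algebraMap GaussianInt (SS p) x) = GaussianInt.toComplex x := by
  rw [emb_apply]; simp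

theorem emb_isIntegral (p : ℕ) (z : SS p) : IsIntegral ℤ (emb p z) := by
  have hI : IsIntegral ℤ I := by
    refine IsIntegral.of_pow (n := 2) (by norm_num) ?_
    rw [Complex.I_sq]
    exact isIntegral_one.neg
  have hg : ∀ x : GaussianInt, IsIntegral ℤ (GaussianInt.toComplex x) := by
    intro x
    rw [GaussianInt.toComplex_def]
    have hint : ∀ m : ℤ, IsIntegral ℤ ((m : ℤ) : ℂ) := fun m => isIntegral_algebraMap (R := ℤ) (x := m)
    exact (hint _).add ((hint _).mul hI)
  rw [emb_apply]
  refine (hg _).add ((hg _).mul ?_)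
  refine IsIntegral.of_pow (n := 2) (by norm_num) ?_
  rw [thetaC_sq]
  exact hI.mul (isIntegral_algebraMap (R := ℤ) (x := (p : ℤ)))

theorem emb_mem (p : ℕ) (z : SS p) : emb p z ∈ kfield p := by
  have hI : I ∈ kfield p := subset_adjoin _ _ (by simp)
  have hs : ((Real.sqrt (2 * p) : ℝ) : ℂ) ∈ kfield p := subset_adjoin _ _ (by simp)
  have hg : ∀ x : GaussianInt, GaussianInt.toComplex x ∈ kfield p := by
    intro x
    rw [GaussianInt.toComplex_def]
    exact add_mem (intCast_mem _ _) (mul_mem (intCast_mem _ _) hI)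
  rw [emb_apply, thetaC]
  exact add_mem (hg _) (mul_mem (hg _) (div_mem hs (sub_mem (one_mem _) hI)))

/-- Every element of `ℚ(√(2p), i)` has an integer multiple in `ℤ[i][θ]`. -/
theorem exists_int_mul_eq_emb {p : ℕ} (hp8 : p % 8 = 1) (x : ℂ) (hx : x ∈ kfield p) :
    ∃ n : ℤ, n ≠ 0 ∧ ∃ s : SS p, n * x = emb p s := by
  induction hx using IntermediateField.adjoin_induction with
  | mem x hx =>
    simp only [Set.mem_insert_iff, Set.mem_singleton_iff] at hx
    rcases hx with rfl | rfl
    · refine ⟨1, one_ne_zero, ⟨0, 1 - gaussI⟩, ?_⟩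
      simp only [emb_apply, map_sub, map_one, map_zero, gaussI_toComplex, thetaC]
      rw [mul_div_cancel₀ _ one_sub_I_ne]
      simp
    · exact ⟨1, one_ne_zero, ⟨gaussI, 0⟩, by simp [emb_apply, gaussI_toComplex]⟩
  | algebraMap q =>
    refine ⟨q.den, by simp, (q.num : SS p), ?_⟩
    have : ((q.den : ℚ) * q : ℚ) = q.num := Rat.den_mul_eq_num q
    have h2 := congrArg (Rat.cast : ℚ → ℂ) this
    push_cast at h2
    simpa only [map_intCast, eq_ratCast, Int.cast_natCast] using h2
  | add x y _ _ hx hy =>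
    obtain ⟨n, hn, s, hs⟩ := hx
    obtain ⟨m, hm, t, ht⟩ := hy
    refine ⟨n * m, mul_ne_zero hn hm, (m : SS p) * s + (n : SS p) * t, ?_⟩
    simp only [map_add, map_mul, map_intCast, ← hs, ← ht]
    push_cast; ring
  | inv x _ hx =>
    obtain ⟨n, hn, s, hs⟩ := hx
    by_cases h0 : s = 0
    · have hx0 : x = 0 := by
        rw [h0, map_zero] at hs
        exact (mul_eq_zero.1 hs).resolve_left (by exact_mod_cast hn)
      exact ⟨1, one_ne_zero, 0, by simp [hx0]⟩
    · set r := QuadraticAlgebra.norm s with hr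
      have hr0 : r ≠ 0 := SS_norm_ne_zero hp8 h0
      have hM : r.norm ≠ 0 := fun h => hr0 (GaussianInt.norm_eq_zero.1 h)
      refine ⟨r.norm, hM, (n : SS p) * star s * algebraMap _ _ (star r), ?_⟩
      have h1 : emb p s * emb p (star s) = GaussianInt.toComplex r := by
        rw [← emb_algebraMap p, hr, QuadraticAlgebra.algebraMap_norm_eq_mul_star, map_mul]
      have h2 : GaussianInt.toComplex r * GaussianInt.toComplex (star r) = r.norm := by
        rw [← map_mul, ← Zsqrtd.norm_eq_mul_conj, map_intCast]
      have hx0 : x ≠ 0 := by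
        rintro rfl
        rw [mul_zero] at hs
        exact h0 (emb_injective hp8 (by rw [← hs, map_zero]))
      simp only [map_mul, map_intCast, emb_algebraMap]
      rw [← h2, ← h1, ← hs]
      field_simp
  | mul x y _ _ hx hy =>
    obtain ⟨n, hn, s, hs⟩ := hx
    obtain ⟨m, hm, t, ht⟩ := hy
    refine ⟨n * m, mul_ne_zero hn hm, s * t, ?_⟩
    simp only [map_mul, ← hs, ← ht]
    push_cast; ring

theorem gauss_squarefree {p : ℕ} (hp : p.Prime) (hp8 : p % 8 = 1) : Squarefree (p : GaussianInt) := by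
  rintro x ⟨w, hw⟩
  have h1 := congrArg Zsqrtd.norm hw
  rw [Zsqrtd.norm_mul, Zsqrtd.norm_mul, Zsqrtd.norm_natCast, ← sq, ← sq] at h1
  have h2 : x.norm ∣ p := by
    rw [← Int.pow_dvd_pow_iff two_ne_zero]
    exact ⟨w.norm, h1⟩
  have hx0 := GaussianInt.norm_nonneg x
  have h3 : x.norm = 1 ∨ x.norm = p := by
    obtain ⟨m, hm⟩ := Int.eq_ofNat_of_zero_le hx0
    rw [hm] at h2 ⊢
    rcases (Nat.dvd_prime hp).1 (by exact_mod_cast h2) with h | h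
    · left; exact_mod_cast h
    · right; exact_mod_cast h
  rcases h3 with h3 | h3
  · exact (Zsqrtd.norm_eq_one_iff' (by norm_num) x).1 h3
  exfalso
  have hp0 : (p : ℤ) ≠ 0 := by exact_mod_cast hp.ne_zero
  have hw1 : IsUnit w := by
    rw [← Zsqrtd.norm_eq_one_iff' (by norm_num) w]
    rw [h3] at h1
    exact (mul_left_cancel₀ (pow_ne_zero 2 hp0) (by rw [mul_one]; exact h1)).symm
  rw [gauss_norm_eq] at h3
  -- `x²` is a unit times a rational integer, so one of `re x`, `im x`, `(re x)² - (im x)²` vanishes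
  have h4 : x.re * x.im = 0 ∨ x.re ^ 2 = x.im ^ 2 := by
    have hre := congrArg Zsqrtd.re hw
    have him := congrArg Zsqrtd.im hw
    rcases gauss_unit hw1 with rfl | rfl | rfl | rfl <;>
    simp at hre him <;> first | (left; linarith) | (right; linarith)
  have hsq : ∀ m : ℤ, m ^ 2 ≠ p := by
    intro m hm
    have : IsSquare p := ⟨m.natAbs, by zify; rw [← sq, sq_abs, hm]⟩
    exact hp.prime.irreducible.not_isSquare this
  rcases h4 with h4 | h4
  · rcases mul_eq_zero.1 h4 with h | h
    · exact hsq x.im (by rw [← h3, h]; ring)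
    · exact hsq x.re (by rw [← h3, h]; ring)
  · omega

/-- An element of `ℚ(i)` integral over `ℤ` lies in `ℤ[i]`. -/
theorem gauss_dvd_of_isIntegral {u : GaussianInt} {n : ℤ} (hn : n ≠ 0)
    (h : IsIntegral ℤ (GaussianInt.toComplex u / n)) : (n : GaussianInt) ∣ u := by
  obtain ⟨P, hP, hroot⟩ := h
  have hnC : (n : ℂ) ≠ 0 := by exact_mod_cast hn
  have h1 : Polynomial.eval₂ (Int.castRingHom GaussianInt) u (P.scaleRoots n) = 0 := by
    apply GaussianInt.toComplex_injective
    rw [Polynomial.hom_eval₂, map_zero]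
    have h2 := Polynomial.scaleRoots_eval₂_mul (p := P) (algebraMap ℤ ℂ)
      (GaussianInt.toComplex u / n) n
    rw [hroot, mul_zero] at h2
    rw [show GaussianInt.toComplex u = algebraMap ℤ ℂ n * (GaussianInt.toComplex u / n) by
      simp; field_simp]
    rw [← h2]
    congr 1
    exact RingHom.ext_int _ _
  let K := FractionRing GaussianInt
  have hnK : (n : K) ≠ 0 := by
    have : ((n : GaussianInt) : GaussianInt) ≠ 0 := by exact_mod_cast hn
    intro h
    exact this ((IsFractionRing.injective GaussianInt K) (by rw [map_intCast, h, map_zero]))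
  have h3 : IsIntegral ℤ (algebraMap GaussianInt K u / n) := by
    refine ⟨P, hP, ?_⟩
    have h2 := Polynomial.scaleRoots_eval₂_mul (p := P) (algebraMap ℤ K)
      (algebraMap GaussianInt K u / n) n
    have h4 := congrArg (algebraMap GaussianInt K) h1
    rw [Polynomial.hom_eval₂, map_zero,
      show algebraMap GaussianInt K u = algebraMap ℤ K n * (algebraMap GaussianInt K u / n) by
      rw [eq_intCast, mul_div_cancel₀ _ hnK],
      show (algebraMap GaussianInt K).comp (Int.castRingHom GaussianInt) = algebraMap ℤ K from
        RingHom.ext_int _ _, h2] at h4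
    refine (mul_eq_zero.1 h4).resolve_left (pow_ne_zero _ (by simpa using hnK))
  have h5 : IsIntegral GaussianInt (algebraMap GaussianInt K u / n) := h3.tower_top
  obtain ⟨v, hv⟩ := IsIntegrallyClosed.isIntegral_iff.1 h5
  refine ⟨v, (IsFractionRing.injective GaussianInt K) ?_⟩
  rw [map_mul, hv, map_intCast, mul_div_cancel₀ _ hnK]

/-- The parity argument at `2`: for `p ≡ 1 mod 4`, `A² ≡ ipB² mod 4` forces `2 ∣ A, B`. -/
theorem gauss_two_dvd {p : ℕ} (hp8 : p % 8 = 1) {A B : GaussianInt}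
    (h : (4 : GaussianInt) ∣ A ^ 2 - gaussI * p * B ^ 2) :
    (2 : GaussianInt) ∣ A ∧ (2 : GaussianInt) ∣ B := by
  obtain ⟨c, hc⟩ := h
  have hre := congrArg Zsqrtd.re hc
  have him := congrArg Zsqrtd.im hc
  have hpz : ((p : ℤ) : ZMod 4) = 1 := by
    have : (p : ZMod 4) = ((p % 4 : ℕ) : ZMod 4) := by simp
    rw [show p % 4 = 1 by omega] at this
    exact_mod_cast this
  simp [sq] at hre him
  have hre' := congrArg (Int.cast : ℤ → ZMod 4) hre
  have him' := congrArg (Int.cast : ℤ → ZMod 4) him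
  push_cast at hre' him' hpz
  have h4 : (4 : ZMod 4) = 0 := by decide
  rw [hpz, h4] at hre' him'
  have key : ∀ a b c d : ZMod 4, a * a - b * b + (c * d + d * c) = 0 →
      a * b + b * a - (c * c - d * d) = 0 →
      (a = 0 ∨ a = 2) ∧ (b = 0 ∨ b = 2) ∧ (c = 0 ∨ c = 2) ∧ (d = 0 ∨ d = 2) := by decide
  have hk := key A.re A.im B.re B.im (by linear_combination hre') (by linear_combination him')
  have hev : ∀ m : ℤ, ((m : ZMod 4) = 0 ∨ (m : ZMod 4) = 2) → (2 : ℤ) ∣ m := by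
    rintro m (hm | hm)
    · have := (ZMod.intCast_zmod_eq_zero_iff_dvd m 4).1 hm
      omega
    · have : ((m - 2 : ℤ) : ZMod 4) = 0 := by push_cast; rw [hm]; simp
      have := (ZMod.intCast_zmod_eq_zero_iff_dvd _ 4).1 this
      omega
  have h2 : ∀ z : GaussianInt, 2 ∣ z.re → 2 ∣ z.im → (2 : GaussianInt) ∣ z := fun z h1 h2 => by
    have := (Zsqrtd.intCast_dvd (d := -1) 2 z).2 ⟨h1, h2⟩
    exact_mod_cast this
  exact ⟨h2 _ (hev _ hk.1) (hev _ hk.2.1), h2 _ (hev _ hk.2.2.1) (hev _ hk.2.2.2)⟩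

/-- An integral element of `ℚ(√(2p), i)` lies in `ℤ[i][θ]`: its trace and norm over `ℚ(i)` are in
`ℤ[i]`, which puts its double in `ℤ[i][θ]`, and `gauss_two_dvd` removes the factor `2`. -/
theorem exists_emb_of_isIntegral {p : ℕ} (hp : p.Prime) (hp8 : p % 8 = 1) (x : ℂ)
    (hx : x ∈ kfield p) (hint : IsIntegral ℤ x) : ∃ s : SS p, emb p s = x := by
  obtain ⟨n, hn, s, hs⟩ := exists_int_mul_eq_emb hp8 x hx
  have hnC : (n : ℂ) ≠ 0 := by exact_mod_cast hn
  have hnR : (n : GaussianInt) ≠ 0 := by exact_mod_cast hn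
  -- the conjugate of `x` under `θ ↦ -θ` is integral as well
  have hint' : IsIntegral ℤ (emb p (star s) / n) := by
    obtain ⟨P, hP, hroot⟩ := hint
    refine ⟨P, hP, ?_⟩
    have h2 := Polynomial.scaleRoots_eval₂_mul (p := P) (algebraMap ℤ ℂ) x n
    rw [hroot, mul_zero] at h2
    have h1 : Polynomial.eval₂ (Int.castRingHom (SS p)) s (P.scaleRoots n) = 0 := by
      apply emb_injective hp8
      rw [Polynomial.hom_eval₂, map_zero, ← hs, ← h2]
      congr 1
      exact RingHom.ext_int _ _
    have h3 := congrArg (fun t => emb p (starRingEnd (SS p) t)) h1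
    simp only [Polynomial.hom_eval₂, map_zero] at h3
    have h4 := Polynomial.scaleRoots_eval₂_mul (p := P) (algebraMap ℤ ℂ) (emb p (star s) / n) n
    rw [show algebraMap ℤ ℂ n * (emb p (star s) / n) = emb p (star s) by simp; field_simp] at h4
    rw [show ((emb p).comp ((starRingEnd (SS p)).comp (Int.castRingHom (SS p)))) = algebraMap ℤ ℂ
      from RingHom.ext_int _ _, starRingEnd_apply, h4] at h3
    exact (mul_eq_zero.1 h3).resolve_left (pow_ne_zero _ (by simpa using hnC))
  have hx' : x = emb p s / n := by rw [← hs]; field_simp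
  have htr : (n : GaussianInt) ∣ 2 * s.re := by
    apply gauss_dvd_of_isIntegral hn
    have := hint.add hint'
    rw [hx', ← add_div, ← map_add] at this
    have h : emb p (s + star s) = GaussianInt.toComplex (2 * s.re) := by
      rw [← emb_algebraMap p]
      congr 1
      ext <;> simp <;> ring
    rwa [h] at this
  have hnm : ((n ^ 2 : ℤ) : GaussianInt) ∣ QuadraticAlgebra.norm s := by
    apply gauss_dvd_of_isIntegral (pow_ne_zero 2 hn)
    have := hint.mul hint'
    rw [hx', div_mul_div_comm, ← map_mul, ← QuadraticAlgebra.algebraMap_norm_eq_mul_star,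
      emb_algebraMap, ← sq] at this
    exact_mod_cast this
  obtain ⟨A, hA⟩ := htr
  obtain ⟨m, hm⟩ := hnm
  have hnorm : QuadraticAlgebra.norm s = s.re ^ 2 - gaussI * p * s.im ^ 2 := by
    rw [← ip_eq, QuadraticAlgebra.norm_def]; ring
  rw [hnorm] at hm
  push_cast at hm
  have hp0 : (p : GaussianInt) ≠ 0 := by exact_mod_cast hp.ne_zero
  -- `n² ∣ p (2b)²`, and `p` is squarefree, so `n ∣ 2b`
  obtain ⟨B, hB⟩ : (n : GaussianInt) ∣ 2 * s.im := by
    have h1 : (p : GaussianInt) * (2 * s.im) ^ 2 = n ^ 2 * (gaussI * (4 * m - A ^ 2)) := by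
      linear_combination (4 * gaussI) * hm - gaussI * (2 * s.re + n * A) * hA
        + 4 * p * s.im ^ 2 * gaussI_sq
    have h2 : (n : GaussianInt) ^ 2 ∣ (p * (2 * s.im)) ^ 2 :=
      ⟨p * (gaussI * (4 * m - A ^ 2)), by linear_combination p * h1⟩
    obtain ⟨c, hc⟩ := (UniqueFactorizationMonoid.pow_dvd_pow_iff_dvd two_ne_zero).1 h2
    have h3 : c ^ 2 = p * (gaussI * (4 * m - A ^ 2)) := by
      apply mul_left_cancel₀ (pow_ne_zero 2 hnR)
      linear_combination p * h1 - (n * c + p * (2 * s.im)) * hc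
    obtain ⟨c', rfl⟩ := ((gauss_squarefree hp hp8).dvd_pow_iff_dvd two_ne_zero).1 ⟨_, h3⟩
    exact ⟨c', mul_left_cancel₀ hp0 (by linear_combination hc)⟩
  obtain ⟨⟨A', rfl⟩, ⟨B', rfl⟩⟩ := gauss_two_dvd (A := A) (B := B) hp8 ⟨m, by
    apply mul_left_cancel₀ (pow_ne_zero 2 hnR)
    linear_combination (-(n * A + 2 * s.re)) * hA + gaussI * p * (n * B + 2 * s.im) * hB + 4 * hm⟩
  have h2 : (2 : GaussianInt) ≠ 0 := by norm_num
  have ha : s.re = n * A' := mul_left_cancel₀ h2 (by linear_combination hA)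
  have hb : s.im = n * B' := mul_left_cancel₀ h2 (by linear_combination hB)
  refine ⟨⟨A', B'⟩, ?_⟩
  rw [hx', emb_apply, emb_apply, ha, hb]
  simp only [map_mul, map_intCast]
  field_simp

/-- `ℤ[i][θ]` is the ring of integers of `ℚ(√(2p), i)`. -/
theorem exists_ringEquiv {p : ℕ} (hp : p.Prime) (hp8 : p % 8 = 1) :
    Nonempty (SS p ≃+* 𝓞 (kfield p)) := by
  have hint : ∀ z : SS p, IsIntegral ℤ (⟨emb p z, emb_mem p z⟩ : kfield p) := fun z => by
    rw [← isIntegral_algHom_iff (((kfield p).val).restrictScalars ℤ) Subtype.val_injective]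
    exact emb_isIntegral p z
  let g : SS p →+* kfield p := (emb p).codRestrict (kfield p) (emb_mem p)
  let f : SS p →+* 𝓞 (kfield p) := g.codRestrict (integralClosure ℤ (kfield p)) hint
  have hf : ∀ z, ((f z : kfield p) : ℂ) = emb p z := fun z => rfl
  refine ⟨RingEquiv.ofBijective f ⟨?_, ?_⟩⟩
  · intro a b hab
    apply emb_injective hp8
    rw [← hf, ← hf, hab]
  · intro y
    have hy : IsIntegral ℤ ((y : kfield p) : ℂ) :=
      (isIntegral_algHom_iff (((kfield p).val).restrictScalars ℤ) Subtype.val_injective).2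
        (RingOfIntegers.isIntegral_coe y)
    obtain ⟨s, hs⟩ := exists_emb_of_isIntegral hp hp8 _ (y : kfield p).2 hy
    exact ⟨s, RingOfIntegers.ext (Subtype.ext (by rw [hf, hs]))⟩

theorem kfield_numberField (p : ℕ) : NumberField (kfield p) := by
  have : FiniteDimensional ℚ (kfield p) := by
    have hI : IsIntegral ℚ I := by
      refine IsIntegral.of_pow (n := 2) (by norm_num) ?_
      rw [Complex.I_sq]
      exact isIntegral_one.neg
    have hs : IsIntegral ℚ ((Real.sqrt (2 * p) : ℝ) : ℂ) := by
      refine IsIntegral.of_pow (n := 2) (by norm_num) ?_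
      rw [sqrtC_sq]
      simpa using (isIntegral_algebraMap (R := ℚ) (A := ℂ) (x := 2 * p))
    apply IntermediateField.finiteDimensional_adjoin
    intro x hx
    simp only [Set.mem_insert_iff, Set.mem_singleton_iff] at hx
    rcases hx with rfl | rfl
    · exact hs
    · exact hI
  exact ⟨⟩

theorem SS_isDedekindDomain {p : ℕ} (hp : p.Prime) (hp8 : p % 8 = 1) :
    IsDedekindDomain (SS p) := by
  have := kfield_numberField p
  obtain ⟨e⟩ := exists_ringEquiv hp hp8
  have h1 := SS_isDomain hp8
  have h2 : IsNoetherianRing (SS p) := isNoetherianRing_of_ringEquiv _ e.symm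
  have h3 : IsIntegrallyClosed (SS p) := IsIntegrallyClosed.of_equiv e.symm
  have h4 : Ring.DimensionLEOne (SS p) := Ring.DimensionLEOne.of_ringEquiv e
  have h5 : IsDedekindRing (SS p) := (isDedekindRing_iff _ (FractionRing (SS p))).2
    ⟨h2, h4, (isIntegrallyClosed_iff _).1 h3⟩
  exact {}

/-! ### Relative norms of ideals and the two genus characters -/

theorem SS_norm_eq {p : ℕ} (z : SS p) :
    QuadraticAlgebra.norm z = z.re ^ 2 - gaussI * p * z.im ^ 2 := by
  rw [← ip_eq, QuadraticAlgebra.norm_def]; ring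

theorem relNorm_span {p : ℕ} [IsDedekindDomain (SS p)] (z : SS p) :
    Ideal.relNorm GaussianInt (Ideal.span {z}) = Ideal.span {QuadraticAlgebra.norm z} := by
  rw [Ideal.relNorm_singleton, Algebra.intNorm_eq_norm, Algebra.norm_apply,
    ← QuadraticAlgebra.det_toLinearMap_eq_norm]
  congr 3

theorem norm_mem_relNorm' {p : ℕ} [IsDedekindDomain (SS p)] {z : SS p} {I : Ideal (SS p)}
    (hz : z ∈ I) : QuadraticAlgebra.norm z ∈ Ideal.relNorm GaussianInt I := by
  have h := Ideal.relNorm_mono GaussianInt ((Ideal.span_singleton_le_iff_mem I).2 hz)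
  rw [relNorm_span] at h
  exact h (Ideal.mem_span_singleton_self _)

/-- A generator of the relative norm in `ℤ[i]` of an ideal of `ℤ[i][θ]`. -/
def nrm {p : ℕ} [IsDedekindDomain (SS p)] (I : Ideal (SS p)) : GaussianInt :=
  Submodule.IsPrincipal.generator (Ideal.relNorm GaussianInt I)

theorem span_nrm {p : ℕ} [IsDedekindDomain (SS p)] (I : Ideal (SS p)) :
    Ideal.span {nrm I} = Ideal.relNorm GaussianInt I :=
  Ideal.span_singleton_generator _

theorem nrm_eq_zero {p : ℕ} [IsDedekindDomain (SS p)] {I : Ideal (SS p)} :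
    nrm I = 0 ↔ I = ⊥ := by
  rw [← Ideal.span_singleton_eq_bot, span_nrm, Ideal.relNorm_eq_bot_iff]

theorem nrm_dvd_norm {p : ℕ} [IsDedekindDomain (SS p)] {z : SS p} {I : Ideal (SS p)}
    (hz : z ∈ I) : nrm I ∣ QuadraticAlgebra.norm z := by
  rw [← Ideal.mem_span_singleton, span_nrm]
  exact norm_mem_relNorm' hz

theorem nrm_mul {p : ℕ} [IsDedekindDomain (SS p)] (I J : Ideal (SS p)) :
    Associated (nrm (I * J)) (nrm I * nrm J) := by
  rw [← Ideal.span_singleton_eq_span_singleton, ← Ideal.span_singleton_mul_span_singleton,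
    span_nrm, span_nrm, span_nrm, map_mul]

theorem nrm_span {p : ℕ} [IsDedekindDomain (SS p)] (z : SS p) :
    Associated (nrm (Ideal.span {z})) (QuadraticAlgebra.norm z) := by
  rw [← Ideal.span_singleton_eq_span_singleton, span_nrm, relNorm_span]

/-- Since `8 ∣ p - 1`, fourth roots of unity are squares modulo `p`. -/
theorem qc_of_pow_four {p : ℕ} [Fact p.Prime] (hp8 : p % 8 = 1) {x : ZMod p} (hx : x ^ 4 = 1) :
    quadraticChar (ZMod p) x = 1 := by
  have hx0 : x ≠ 0 := by rintro rfl; norm_num at hx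
  rw [quadraticChar_one_iff_isSquare hx0, ZMod.euler_criterion p hx0]
  obtain ⟨k, hk⟩ : ∃ k, p / 2 = 4 * k := ⟨p / 8, by omega⟩
  rw [hk, pow_mul, hx, one_pow]

theorem qc_unit {p : ℕ} [Fact p.Prime] (hp8 : p % 8 = 1) (f : GaussianInt →+* ZMod p)
    {u : GaussianInt} (hu : IsUnit u) : quadraticChar (ZMod p) (f u) = 1 := by
  apply qc_of_pow_four hp8
  rw [← map_pow]
  have : u ^ 4 = 1 := by rcases gauss_unit hu with rfl | rfl | rfl | rfl <;> rfl
  rw [this, map_one]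

theorem qc_assoc {p : ℕ} [Fact p.Prime] (hp8 : p % 8 = 1) (f : GaussianInt →+* ZMod p)
    {a b : GaussianInt} (h : Associated a b) :
    quadraticChar (ZMod p) (f a) = quadraticChar (ZMod p) (f b) := by
  obtain ⟨u, rfl⟩ := h
  rw [map_mul, map_mul, qc_unit hp8 f u.isUnit, mul_one]

/-- The quadratic residue symbol, at the prime of `ℤ[i]` that is the kernel of `f`, of the norm of
an ideal. -/
def idealChar {p : ℕ} [Fact p.Prime] [IsDedekindDomain (SS p)] (f : GaussianInt →+* ZMod p)
    (I : Ideal (SS p)) : ℤ :=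
  quadraticChar (ZMod p) (f (nrm I))

theorem idealChar_mul {p : ℕ} [Fact p.Prime] [IsDedekindDomain (SS p)] (hp8 : p % 8 = 1)
    (f : GaussianInt →+* ZMod p) (I J : Ideal (SS p)) :
    idealChar f (I * J) = idealChar f I * idealChar f J := by
  rw [idealChar, qc_assoc hp8 f (nrm_mul I J), map_mul, map_mul]
  rfl

/-- Every ring homomorphism `f : ℤ[i] → 𝔽_p` kills `θ² = ip`, so it maps norms to squares. -/
theorem f_norm {p : ℕ} (f : GaussianInt →+* ZMod p) (z : SS p) :
    f (QuadraticAlgebra.norm z) = f z.re ^ 2 := by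
  rw [SS_norm_eq]
  simp

theorem idealChar_span {p : ℕ} [Fact p.Prime] [IsDedekindDomain (SS p)] (hp8 : p % 8 = 1)
    (f : GaussianInt →+* ZMod p) (z : SS p) (h : idealChar f (Ideal.span {z}) ≠ 0) :
    idealChar f (Ideal.span {z}) = 1 := by
  rw [idealChar, qc_assoc hp8 f (nrm_span z), f_norm] at h ⊢
  have h0 : f z.re ≠ 0 := fun h0 => h (by simp [h0])
  exact (quadraticChar_sq_one' h0)

/-- Every ideal class contains an integral ideal coprime to `p`. -/
theorem exists_coprime_rep {p : ℕ} [Fact p.Prime] [IsDedekindDomain (SS p)]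
    (c : ClassGroup (SS p)) : ∃ I : (Ideal (SS p))⁰, ClassGroup.mk0 I = c ∧
      ∀ f : GaussianInt →+* ZMod p, f (nrm (I : Ideal (SS p))) ≠ 0 := by
  obtain ⟨J, hJ⟩ := ClassGroup.mk0_surjective c⁻¹
  have hJ0 : (J : Ideal (SS p)) ≠ 0 := nonZeroDivisors.coe_ne_zero J
  have hp0 : ((p : ℕ) : SS p) ≠ 0 := by exact_mod_cast (Fact.out : p.Prime).ne_zero
  have hsp : Ideal.span {(p : SS p)} ≠ 0 := by
    rw [Ne, Ideal.zero_eq_bot, Ideal.span_singleton_eq_bot]; exact hp0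
  obtain ⟨a, ha⟩ := IsDedekindDomain.exists_sup_span_eq
    (Ideal.mul_le_left : (J : Ideal (SS p)) * Ideal.span {(p : SS p)} ≤ J)
    (mul_ne_zero hJ0 hsp)
  have haJ : Ideal.span {a} ≤ (J : Ideal (SS p)) := by rw [← ha]; exact le_sup_right
  obtain ⟨I, hI⟩ := Ideal.dvd_iff_le.2 haJ
  have hcop : Ideal.span {(p : SS p)} ⊔ I = ⊤ := by
    apply mul_left_cancel₀ hJ0
    rw [← Ideal.add_eq_sup, mul_add, ← hI, Ideal.add_eq_sup, ha, ← Ideal.one_eq_top, mul_one]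
  obtain ⟨y, hy, z, hz, hyz⟩ := Submodule.mem_sup.1 (hcop ▸ Submodule.mem_top : (1 : SS p) ∈ _)
  obtain ⟨w, rfl⟩ := Ideal.mem_span_singleton.1 hy
  have key : ∀ f : GaussianInt →+* ZMod p, f (nrm I) ≠ 0 := by
    intro f h0
    obtain ⟨t, ht⟩ := nrm_dvd_norm hz
    have h1 := congrArg f ht
    have hz' : z = 1 - p * w := by rw [← hyz]; ring
    rw [f_norm, map_mul, h0, zero_mul, hz'] at h1
    have : ((1 : SS p) - p * w).re = 1 - p * w.re := by
      simp [show (1 : SS p).re = 1 from rfl, show ((p : SS p)).re = p from rfl,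
        show ((p : SS p)).im = 0 from rfl]
    rw [this] at h1
    simp at h1
  have hI0 : I ≠ 0 := by
    rintro rfl
    rw [Ideal.zero_eq_bot, sup_bot_eq, Ideal.span_singleton_eq_top] at hcop
    have h1 := (QuadraticAlgebra.isUnit_iff_norm_isUnit).1 hcop
    rw [QuadraticAlgebra.norm_natCast, isUnit_pow_iff two_ne_zero,
      ← Zsqrtd.norm_eq_one_iff' (by norm_num), Zsqrtd.norm_natCast] at h1
    have := (Fact.out : p.Prime).one_lt
    have h2 : p * p = 1 := by exact_mod_cast h1
    nlinarith
  refine ⟨⟨I, mem_nonZeroDivisors_of_ne_zero hI0⟩, ?_, key⟩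
  have : ClassGroup.mk0 (J * ⟨I, mem_nonZeroDivisors_of_ne_zero hI0⟩) = 1 := by
    rw [ClassGroup.mk0_eq_one_iff]
    refine ⟨⟨a, ?_⟩⟩
    simpa using hI.symm
  rw [map_mul, hJ] at this
  exact (inv_mul_eq_one.1 this).symm

/-- The symbol of an ideal prime to `p` depends only on its class: both ideals are compared with a
third one in the inverse class. -/
theorem idealChar_eq_of_class {p : ℕ} [Fact p.Prime] [IsDedekindDomain (SS p)] (hp8 : p % 8 = 1)
    (f : GaussianInt →+* ZMod p) (I J : (Ideal (SS p))⁰)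
    (h : ClassGroup.mk0 I = ClassGroup.mk0 J) (hI : f (nrm (I : Ideal (SS p))) ≠ 0)
    (hJ : f (nrm (J : Ideal (SS p))) ≠ 0) :
    idealChar f (I : Ideal (SS p)) = idealChar f (J : Ideal (SS p)) := by
  obtain ⟨K, hK, hK0⟩ := exists_coprime_rep (ClassGroup.mk0 I)⁻¹
  have hne : ∀ L : Ideal (SS p), f (nrm L) ≠ 0 → idealChar f L ≠ 0 := fun L hL h =>
    hL (quadraticChar_eq_zero_iff.1 h)
  have main : ∀ L : (Ideal (SS p))⁰, ClassGroup.mk0 L = ClassGroup.mk0 I →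
      f (nrm (L : Ideal (SS p))) ≠ 0 →
      idealChar f (L : Ideal (SS p)) * idealChar f (K : Ideal (SS p)) = 1 := by
    intro L hL hL0
    have h1 : ClassGroup.mk0 (L * K) = 1 := by rw [map_mul, hL, hK, mul_inv_cancel]
    rw [ClassGroup.mk0_eq_one_iff] at h1
    obtain ⟨⟨a, ha⟩⟩ := h1
    have ha' : (L : Ideal (SS p)) * (K : Ideal (SS p)) = Ideal.span {a} := by simpa using ha
    rw [← idealChar_mul hp8, ha']
    apply idealChar_span hp8
    rw [← ha', idealChar_mul hp8]
    exact mul_ne_zero (hne _ hL0) (hne _ (hK0 f))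
  exact mul_right_cancel₀ (hne _ (hK0 f)) ((main I rfl hI).trans (main J h.symm hJ).symm)

/-- The genus character of the class group attached to `f`. -/
def classChar {p : ℕ} [Fact p.Prime] [IsDedekindDomain (SS p)] (hp8 : p % 8 = 1)
    (f : GaussianInt →+* ZMod p) : ClassGroup (SS p) →* ℤ where
  toFun c := idealChar f ((exists_coprime_rep c).choose : Ideal (SS p))
  map_one' := by
    have h := (exists_coprime_rep (1 : ClassGroup (SS p))).choose_spec
    have h1 : nrm (Ideal.span {(1 : SS p)}) = nrm ((1 : (Ideal (SS p))⁰) : Ideal (SS p)) := by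
      simp [Ideal.one_eq_top]
    have hu : f (nrm ((1 : (Ideal (SS p))⁰) : Ideal (SS p))) ≠ 0 := by
      have : IsUnit (nrm ((1 : (Ideal (SS p))⁰) : Ideal (SS p))) := by
        rw [← h1, (nrm_span _).isUnit_iff, map_one]; exact isUnit_one
      exact (this.map f).ne_zero
    rw [idealChar_eq_of_class hp8 f _ 1 (by rw [h.1, map_one]) (h.2 f) hu]
    have := idealChar_span hp8 f (1 : SS p)
      (by rw [idealChar, h1]; exact fun h => hu (quadraticChar_eq_zero_iff.1 h))
    rw [idealChar, h1] at this
    exact this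
  map_mul' c d := by
    have hc := (exists_coprime_rep c).choose_spec
    have hd := (exists_coprime_rep d).choose_spec
    have hcd := (exists_coprime_rep (c * d)).choose_spec
    rw [← idealChar_mul hp8, ← Submonoid.coe_mul]
    apply idealChar_eq_of_class hp8 f _ _ _ (hcd.2 f)
    · rw [Submonoid.coe_mul]
      have h1 := (nrm_mul ((exists_coprime_rep c).choose : Ideal (SS p))
        ((exists_coprime_rep d).choose : Ideal (SS p))).symm.map f
      intro h0
      rw [h0, associated_zero_iff_eq_zero, map_mul] at h1
      exact mul_ne_zero (hc.2 f) (hd.2 f) h1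
    · rw [map_mul, hc.1, hd.1, hcd.1]

theorem classChar_mk0 {p : ℕ} [Fact p.Prime] [IsDedekindDomain (SS p)] (hp8 : p % 8 = 1)
    (f : GaussianInt →+* ZMod p) (I : (Ideal (SS p))⁰) (b : GaussianInt)
    (hb : Ideal.relNorm GaussianInt (I : Ideal (SS p)) = Ideal.span {b}) (hb0 : f b ≠ 0) :
    classChar hp8 f (ClassGroup.mk0 I) = quadraticChar (ZMod p) (f b) := by
  have h := (exists_coprime_rep (ClassGroup.mk0 I)).choose_spec
  have hass : Associated (nrm (I : Ideal (SS p))) b := by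
    rw [← Ideal.span_singleton_eq_span_singleton, span_nrm, hb]
  have h0 : f (nrm (I : Ideal (SS p))) ≠ 0 := by
    intro h0
    have := hass.symm.map f
    rw [h0, associated_zero_iff_eq_zero] at this
    exact hb0 this
  rw [← qc_assoc hp8 f hass]
  exact idealChar_eq_of_class hp8 f _ _ h.1 (h.2 f) h0

/-! ### Ideal classes and the distinguished ideals -/

open Classical in
/-- The class of an ideal (with the junk value `1` for the zero ideal). -/
def cls {p : ℕ} [IsDedekindDomain (SS p)] (I : Ideal (SS p)) : ClassGroup (SS p) :=
  if h : I = 0 then 1 else ClassGroup.mk0 ⟨I, mem_nonZeroDivisors_of_ne_zero h⟩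

theorem cls_of_ne {p : ℕ} [IsDedekindDomain (SS p)] {I : Ideal (SS p)} (h : I ≠ 0) :
    cls I = ClassGroup.mk0 ⟨I, mem_nonZeroDivisors_of_ne_zero h⟩ := dif_neg h

theorem cls_surjective {p : ℕ} [IsDedekindDomain (SS p)] (c : ClassGroup (SS p)) :
    ∃ I : Ideal (SS p), I ≠ 0 ∧ cls I = c := by
  obtain ⟨I, rfl⟩ := ClassGroup.mk0_surjective c
  exact ⟨I, nonZeroDivisors.coe_ne_zero I, cls_of_ne (nonZeroDivisors.coe_ne_zero I)⟩

theorem cls_mul {p : ℕ} [IsDedekindDomain (SS p)] {I J : Ideal (SS p)} (hI : I ≠ 0) (hJ : J ≠ 0) :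
    cls (I * J) = cls I * cls J := by
  rw [cls_of_ne hI, cls_of_ne hJ, cls_of_ne (mul_ne_zero hI hJ), ← map_mul]
  rfl

theorem cls_pow {p : ℕ} [IsDedekindDomain (SS p)] {I : Ideal (SS p)} (hI : I ≠ 0) (n : ℕ) :
    cls (I ^ n) = cls I ^ n := by
  rw [cls_of_ne hI, cls_of_ne (pow_ne_zero n hI), ← map_pow]
  rfl

theorem cls_eq_one_iff {p : ℕ} [IsDedekindDomain (SS p)] {I : Ideal (SS p)} (hI : I ≠ 0) :
    cls I = 1 ↔ ∃ a, I = Ideal.span {a} := by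
  rw [cls_of_ne hI, ClassGroup.mk0_eq_one_iff]
  exact ⟨fun h => h.1, fun h => ⟨h⟩⟩

theorem span_ne_zero {p : ℕ} {z : SS p} (hz : z ≠ 0) : (Ideal.span {z} : Ideal (SS p)) ≠ 0 := by
  rwa [Ne, Ideal.zero_eq_bot, Ideal.span_singleton_eq_bot]

theorem cls_span {p : ℕ} [IsDedekindDomain (SS p)] (z : SS p) : cls (Ideal.span {z}) = 1 := by
  by_cases hz : z = 0
  · exact dif_pos (by simp [hz])
  · exact (cls_eq_one_iff (span_ne_zero hz)).2 ⟨z, rfl⟩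

theorem cls_span_mul {p : ℕ} [IsDedekindDomain (SS p)] {z : SS p} (hz : z ≠ 0)
    {I : Ideal (SS p)} (hI : I ≠ 0) : cls (Ideal.span {z} * I) = cls I := by
  rw [cls_mul (span_ne_zero hz) hI, cls_span, one_mul]

theorem classChar_cls {p : ℕ} [Fact p.Prime] [IsDedekindDomain (SS p)] (hp8 : p % 8 = 1)
    (f : GaussianInt →+* ZMod p) {I : Ideal (SS p)} {b : GaussianInt}
    (hb : Ideal.relNorm GaussianInt I = Ideal.span {b}) (hb0 : f b ≠ 0) :
    classChar hp8 f (cls I) = quadraticChar (ZMod p) (f b) := by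
  have hI : I ≠ 0 := by
    rintro rfl
    rw [map_zero] at hb
    have : b = 0 := Ideal.span_singleton_eq_bot.1 hb.symm
    exact hb0 (by rw [this, map_zero])
  rw [cls_of_ne hI]
  exact classChar_mk0 hp8 f _ b hb hb0

/-- If `I² = (δ)` and `N(δ)` is `b²` up to a unit, then `I` has relative norm `(b)`. -/
theorem relNorm_of_sq {p : ℕ} [IsDedekindDomain (SS p)] {I : Ideal (SS p)} {δ : SS p}
    {b : GaussianInt} (h : I * I = Ideal.span {δ})
    (hb : Associated (QuadraticAlgebra.norm δ) (b ^ 2)) :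
    Ideal.relNorm GaussianInt I = Ideal.span {b} := by
  have h1 := congrArg (Ideal.relNorm GaussianInt) h
  rw [relNorm_span, map_mul, ← span_nrm, Ideal.span_singleton_mul_span_singleton,
    Ideal.span_singleton_eq_span_singleton, ← sq] at h1
  have h2 := h1.trans hb
  rw [← span_nrm, Ideal.span_singleton_eq_span_singleton]
  exact associated_of_dvd_dvd
    ((UniqueFactorizationMonoid.pow_dvd_pow_iff_dvd two_ne_zero).1 h2.dvd)
    ((UniqueFactorizationMonoid.pow_dvd_pow_iff_dvd two_ne_zero).1 h2.symm.dvd)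

/-- The element `θ`. -/
def theta (p : ℕ) : SS p := ⟨0, 1⟩

/-- The inclusion of `ℤ[i]` into `ℤ[i][θ]`. -/
abbrev cc (p : ℕ) : GaussianInt →+* SS p := algebraMap GaussianInt (SS p)

theorem theta_sq (p : ℕ) : theta p ^ 2 = cc p gaussI * p := by
  apply QuadraticAlgebra.ext
  · have h : (p : GaussianInt) * gaussI = gaussI * p := mul_comm _ _
    simp [theta, sq, ip_eq]
  · simp [theta, sq]

theorem cc_gaussI_sq (p : ℕ) : cc p gaussI ^ 2 = -1 := by
  rw [← map_pow, gaussI_sq, map_neg, map_one]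

theorem SS_eq {p : ℕ} (z : SS p) : z = cc p z.re + cc p z.im * theta p := by
  apply QuadraticAlgebra.ext <;> simp [theta]

@[simp] theorem theta_re (p : ℕ) : (theta p).re = 0 := rfl
@[simp] theorem theta_im (p : ℕ) : (theta p).im = 1 := rfl

theorem cc_norm_eq {p : ℕ} (z : SS p) : cc p (QuadraticAlgebra.norm z) = z * star z :=
  QuadraticAlgebra.algebraMap_norm_eq_mul_star z

theorem star_theta (p : ℕ) : star (theta p) = -theta p := by
  apply QuadraticAlgebra.ext <;> simp [theta]

theorem star_cc {p : ℕ} (x : GaussianInt) : star (cc p x) = cc p x := by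
  apply QuadraticAlgebra.ext <;> simp

theorem SS_add_star {p : ℕ} (z : SS p) : z + star z = cc p (2 * z.re) := by
  apply QuadraticAlgebra.ext <;> simp; ring

theorem cc_dvd {p : ℕ} {r : GaussianInt} {z : SS p} : cc p r ∣ z ↔ r ∣ z.re ∧ r ∣ z.im :=
  QuadraticAlgebra.algebraMap_dvd_iff

theorem cc_ne_zero {p : ℕ} {r : GaussianInt} (h : r ≠ 0) : cc p r ≠ 0 := fun h0 =>
  h (QuadraticAlgebra.algebraMap_injective (by rw [h0, map_zero]))

/-- Recognising a product of two-generated ideals as principal. -/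
theorem span_pair_mul_eq {A : Type*} [CommRing A] {a b a' b' c : A} (r s t u : A)
    (h1 : c ∣ a * a') (h2 : c ∣ a * b') (h3 : c ∣ b * a') (h4 : c ∣ b * b')
    (h : c = r * (a * a') + s * (a * b') + t * (b * a') + u * (b * b')) :
    Ideal.span {a, b} * Ideal.span {a', b'} = Ideal.span {c} := by
  rw [Ideal.span_pair_mul_span_pair]
  apply le_antisymm
  · rw [Ideal.span_le]
    rintro x (rfl | rfl | rfl | rfl) <;> exact Ideal.mem_span_singleton.2 (by assumption)
  · rw [Ideal.span_singleton_le_iff_mem, h]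
    refine add_mem (add_mem (add_mem ?_ ?_) ?_) ?_ <;>
    exact Ideal.mul_mem_left _ _ (Ideal.subset_span (by simp))

/-- The prime `(π, θ)` above a prime `π` of `ℤ[i]` dividing `p`. -/
def idP (p : ℕ) (π : GaussianInt) : Ideal (SS p) := Ideal.span {cc p π, theta p}

/-- The prime above `1 + i`. -/
def idQ (p : ℕ) : Ideal (SS p) := Ideal.span {cc p (1 + gaussI), 1 + theta p}

theorem idQ_mul_self {p : ℕ} (hp8 : p % 8 = 1) :
    idQ p * idQ p = Ideal.span {cc p (1 + gaussI)} := by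
  obtain ⟨k, hk⟩ : ∃ k, p = 8 * k + 1 := ⟨p / 8, by omega⟩
  have hpk : ((p : ℕ) : SS p) = 8 * k + 1 := by
    have h : (p : SS p) = ((8 * k + 1 : ℕ) : SS p) := congrArg Nat.cast hk
    rw [h]; push_cast; ring
  have hθ := theta_sq p
  have hi := cc_gaussI_sq p
  have e4 : (1 + theta p) * (1 + theta p) = cc p (1 + gaussI) *
      ((4 * k + 1) + cc p gaussI * (4 * k) + (1 - cc p gaussI) * theta p) := by
    simp only [map_add, map_one]
    rw [hpk] at hθ
    linear_combination hθ + (-4 * k + theta p) * hi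
  refine span_pair_mul_eq (-(4 * k - cc p gaussI * theta p)) 0 0 1 (Dvd.intro _ rfl)
    (Dvd.intro _ rfl) (Dvd.intro_left _ rfl) ⟨_, e4⟩ ?_
  rw [e4]
  simp only [map_add, map_one]
  linear_combination (- theta p - cc p gaussI * theta p) * hi

theorem idP_mul_idP' {p : ℕ} {π π' : GaussianInt} (h : π * π' = p) (u v : GaussianInt)
    (huv : u * π + v * π' = 1) :
    idP p π * idP p π' = Ideal.span {theta p} := by
  have hθ := theta_sq p
  have hi := cc_gaussI_sq p
  have h' : cc p π * cc p π' = p := by rw [← map_mul, h, map_natCast]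
  have huv' : cc p u * cc p π + cc p v * cc p π' = 1 := by
    rw [← map_mul, ← map_mul, ← map_add, huv, map_one]
  refine span_pair_mul_eq 0 (cc p u) (cc p v) 0
    ⟨-cc p gaussI * theta p, ?_⟩ (Dvd.intro_left _ rfl) (Dvd.intro _ rfl) (Dvd.intro _ rfl) ?_
  · linear_combination h' + cc p gaussI * hθ + p * hi
  · linear_combination -theta p * huv'

theorem idP_mul_self {p : ℕ} {π π' : GaussianInt} (h : π * π' = p) (u v : GaussianInt)
    (huv : u * π + v * π' = 1) :
    idP p π * idP p π = Ideal.span {cc p π} := by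
  have hθ := theta_sq p
  have hi := cc_gaussI_sq p
  have h' : cc p π * cc p π' = p := by rw [← map_mul, h, map_natCast]
  have huv' : cc p u * cc p π + cc p v * cc p π' = 1 := by
    rw [← map_mul, ← map_mul, ← map_add, huv, map_one]
  refine span_pair_mul_eq (cc p u) 0 0 (-cc p gaussI * cc p v)
    (Dvd.intro _ rfl) (Dvd.intro _ rfl) (Dvd.intro_left _ rfl) ⟨cc p gaussI * cc p π', ?_⟩ ?_
  · linear_combination hθ - cc p gaussI * h'
  · linear_combination -cc p π * huv' + cc p v * h' + cc p gaussI * cc p v * hθ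
      + p * cc p v * hi

/-- The element `(1 - i)x₀ + θ`; when `p = c² - 2x₀²` its norm is `-ic²`. -/
def gam (p : ℕ) (x₀ : ℤ) : SS p := (1 - cc p gaussI) * (x₀ : SS p) + theta p

/-- The ideal `(c, (1 - i)x₀ + θ)`, whose square is principal when `p = c² - 2x₀²`. -/
def idC (p : ℕ) (c x₀ : ℤ) : Ideal (SS p) := Ideal.span {(c : SS p), gam p x₀}

theorem star_gam (p : ℕ) (x₀ : ℤ) : star (gam p x₀) = (1 - cc p gaussI) * (x₀ : SS p) - theta p := by
  rw [gam, star_add, star_mul', star_sub, star_one, star_cc, star_theta, star_intCast]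
  ring

theorem gam_mul_star {p : ℕ} {c x₀ : ℤ} (h : (p : ℤ) = c ^ 2 - 2 * x₀ ^ 2) :
    gam p x₀ * star (gam p x₀) = -cc p gaussI * (c : SS p) ^ 2 := by
  have h' : (p : SS p) = c ^ 2 - 2 * x₀ ^ 2 := by exact_mod_cast congrArg (Int.cast : ℤ → SS p) h
  rw [star_gam, gam]
  linear_combination -theta_sq p + (x₀ : SS p) ^ 2 * cc_gaussI_sq p - cc p gaussI * h'

theorem norm_gam {p : ℕ} {c x₀ : ℤ} (h : (p : ℤ) = c ^ 2 - 2 * x₀ ^ 2) :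
    QuadraticAlgebra.norm (gam p x₀) = -gaussI * (c : GaussianInt) ^ 2 := by
  apply QuadraticAlgebra.algebraMap_injective (a := (⟨0, (p : ℤ)⟩ : GaussianInt)) (b := 0)
  rw [QuadraticAlgebra.algebraMap_norm_eq_mul_star, gam_mul_star h]
  simp

theorem idC_mul_self {p : ℕ} {c x₀ : ℤ} (h : (p : ℤ) = c ^ 2 - 2 * x₀ ^ 2) (U V : ℤ)
    (hUV : U * c + V * (4 * x₀) = 1) :
    idC p c x₀ * idC p c x₀ = Ideal.span {gam p x₀} := by
  have hg := gam_mul_star h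
  have hi := cc_gaussI_sq p
  have hadd : (1 + cc p gaussI) * (gam p x₀ + star (gam p x₀)) = 4 * (x₀ : SS p) := by
    rw [star_gam, gam]
    linear_combination -2 * (x₀ : SS p) * hi
  have h' : (U : SS p) * c + V * (4 * x₀) = 1 := by
    exact_mod_cast congrArg (Int.cast : ℤ → SS p) hUV
  refine span_pair_mul_eq (-(V * (1 + cc p gaussI) * cc p gaussI)) (U : SS p) 0
    (V * (1 + cc p gaussI))
    ⟨cc p gaussI * star (gam p x₀), ?_⟩ (Dvd.intro_left _ rfl) (Dvd.intro _ rfl) (Dvd.intro _ rfl) ?_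
  · linear_combination -cc p gaussI * hg + (c : SS p) ^ 2 * hi
  · linear_combination -gam p x₀ * h' - V * gam p x₀ * hadd + V * (1 + cc p gaussI) * hg

theorem isUnit_gaussI : IsUnit gaussI := by
  rw [← Zsqrtd.norm_eq_one_iff' (by norm_num), gauss_norm_eq]; simp

theorem relNorm_idC {p : ℕ} [IsDedekindDomain (SS p)] {c x₀ : ℤ}
    (h : (p : ℤ) = c ^ 2 - 2 * x₀ ^ 2) (U V : ℤ)
    (hUV : U * c + V * (4 * x₀) = 1) :
    Ideal.relNorm GaussianInt (idC p c x₀) = Ideal.span {(c : GaussianInt)} := by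
  apply relNorm_of_sq (idC_mul_self h U V hUV)
  rw [norm_gam h]
  exact (associated_unit_mul_left _ _ isUnit_gaussI.neg)

theorem relNorm_idP {p : ℕ} [IsDedekindDomain (SS p)] {π π' : GaussianInt} (h : π * π' = p)
    (u v : GaussianInt) (huv : u * π + v * π' = 1) :
    Ideal.relNorm GaussianInt (idP p π) = Ideal.span {π} := by
  apply relNorm_of_sq (idP_mul_self h u v huv)
  rw [QuadraticAlgebra.norm_algebraMap]

/-- The conjugation `θ ↦ -θ` over `ℤ[i]`. -/
def conjE (p : ℕ) : SS p ≃ₐ[GaussianInt] SS p :=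
  AlgEquiv.ofRingEquiv (f := starRingAut (R := SS p)) (fun x => star_cc x)

/-- An element `λ` of `ℤ[i]` dividing `y² - 2p` and prime to `2y` is the norm of an ideal. -/
theorem exists_ideal_of_dvd {p : ℕ} [IsDedekindDomain (SS p)] {lam y u v : GaussianInt}
    (h : lam ∣ y ^ 2 - 2 * p) (huv : u * lam + v * (2 * y) = 1) :
    ∃ J : Ideal (SS p), Ideal.relNorm GaussianInt J = Ideal.span {lam} := by
  set η : SS p := (1 - cc p gaussI) * theta p with hη
  have hη2 : η ^ 2 = 2 * p := by
    rw [hη]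
    linear_combination (1 - cc p gaussI) ^ 2 * theta_sq p + p * (cc p gaussI - 2) * cc_gaussI_sq p
  obtain ⟨w, hw⟩ := h
  have hw' : cc p y ^ 2 - 2 * p = cc p lam * cc p w := by
    rw [← map_mul, ← hw]; simp [show cc p 2 = 2 from map_ofNat _ 2]
  have huv' : cc p u * cc p lam + cc p v * (2 * cc p y) = 1 := by
    simpa [show cc p 2 = 2 from map_ofNat _ 2] using congrArg (cc p) huv
  have hmul : Ideal.span {cc p lam, cc p y + η} * Ideal.span {cc p lam, cc p y - η} =
      Ideal.span {cc p lam} := by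
    refine span_pair_mul_eq (cc p u) (cc p v) (cc p v) 0 (Dvd.intro _ rfl) (Dvd.intro _ rfl)
      (Dvd.intro_left _ rfl) ⟨cc p w, ?_⟩ ?_
    · linear_combination hw' - hη2
    · linear_combination -cc p lam * huv'
  have hstar : star η = -η := by
    rw [hη, star_mul', star_sub, star_one, star_cc, star_theta]; ring
  have hconj : (Ideal.span {cc p lam, cc p y + η}).map (conjE p) =
      Ideal.span {cc p lam, cc p y - η} := by
    rw [Ideal.map_span, Set.image_pair]
    have h1 : conjE p (cc p lam) = cc p lam := star_cc lam
    have h2 : conjE p (cc p y + η) = cc p y - η := by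
      change star (cc p y + η) = _
      rw [star_add, star_cc, hstar, sub_eq_add_neg]
    rw [h1, h2]
  refine ⟨Ideal.span {cc p lam, cc p y + η}, ?_⟩
  have h1 := congrArg (Ideal.relNorm GaussianInt) hmul
  rw [map_mul, ← hconj, Ideal.relNorm_map_algEquiv, relNorm_span,
    QuadraticAlgebra.norm_algebraMap, ← span_nrm, Ideal.span_singleton_mul_span_singleton,
    Ideal.span_singleton_eq_span_singleton, ← sq] at h1
  rw [← span_nrm, Ideal.span_singleton_eq_span_singleton]
  exact associated_of_dvd_dvd
    ((UniqueFactorizationMonoid.pow_dvd_pow_iff_dvd two_ne_zero).1 h1.dvd)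
    ((UniqueFactorizationMonoid.pow_dvd_pow_iff_dvd two_ne_zero).1 h1.symm.dvd)

/-! ### Ideals whose square is generated by a Gaussian integer -/

/-- A factorisation `p = ππ'` into coprime primes of `ℤ[i]`. -/
structure PiData (p : ℕ) (π π' : GaussianInt) : Prop where
  mul : π * π' = p
  bez : ∃ u v, u * π + v * π' = 1
  prime : Prime π
  prime' : Prime π'

theorem PiData.symm {p : ℕ} {π π' : GaussianInt} (h : PiData p π π') : PiData p π' π :=
  ⟨by rw [mul_comm, h.mul], by obtain ⟨u, v, e⟩ := h.bez; exact ⟨v, u, by rw [add_comm, e]⟩,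
    h.prime', h.prime⟩

theorem PiData.mul_self {p : ℕ} {π π' : GaussianInt} (h : PiData p π π') :
    idP p π * idP p π = Ideal.span {cc p π} := by
  obtain ⟨u, v, e⟩ := h.bez
  exact idP_mul_self h.mul u v e

theorem PiData.mul_conj {p : ℕ} {π π' : GaussianInt} (h : PiData p π π') :
    idP p π * idP p π' = Ideal.span {theta p} := by
  obtain ⟨u, v, e⟩ := h.bez
  exact idP_mul_idP' h.mul u v e

theorem PiData.relNorm {p : ℕ} [IsDedekindDomain (SS p)] {π π' : GaussianInt}
    (h : PiData p π π') : Ideal.relNorm GaussianInt (idP p π) = Ideal.span {π} := by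
  obtain ⟨u, v, e⟩ := h.bez
  exact relNorm_idP h.mul u v e

theorem theta_ne_zero (p : ℕ) : theta p ≠ 0 := fun h => by
  have := congrArg QuadraticAlgebra.im h
  exact one_ne_zero (α := GaussianInt) this

theorem ideal_ne_zero_of_sq {p : ℕ} {J : Ideal (SS p)} {z : SS p} (hz : z ≠ 0)
    (h : J * J = Ideal.span {z}) : J ≠ 0 := by
  rintro rfl
  rw [zero_mul] at h
  exact span_ne_zero hz h.symm

theorem one_add_gaussI_prime : Prime (1 + gaussI) := by
  rw [← irreducible_iff_prime]
  constructor
  · rw [← Zsqrtd.norm_eq_one_iff' (by norm_num), gauss_norm_eq]; simp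
  · intro x y hxy
    have h := congrArg Zsqrtd.norm hxy
    rw [Zsqrtd.norm_mul] at h
    have h2 : (1 + gaussI).norm = 2 := by rw [gauss_norm_eq]; simp
    rw [h2] at h
    rw [← Zsqrtd.norm_eq_one_iff' (by norm_num), ← Zsqrtd.norm_eq_one_iff' (by norm_num)]
    have hx := GaussianInt.norm_nonneg x
    have hy := GaussianInt.norm_nonneg y
    have : x.norm ≤ 2 := Int.le_of_dvd (by norm_num) (Dvd.intro _ h.symm)
    interval_cases hh : x.norm <;> omega

theorem one_add_gaussI_sq : (1 + gaussI) ^ 2 = 2 * gaussI := by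
  linear_combination gaussI_sq

/-- The coordinates of the square of an element of `J` when `J² = (λz)`. -/
theorem dvd_of_mem_sq {p : ℕ} {J : Ideal (SS p)} {lam z : GaussianInt}
    (h : J * J = Ideal.span {cc p (lam * z)}) {x : SS p} (hx : x ∈ J) :
    lam ∣ x.re ^ 2 + gaussI * p * x.im ^ 2 ∧ lam ∣ 2 * (x.re * x.im) := by
  have h1 : x * x ∈ Ideal.span {cc p (lam * z)} := h ▸ Ideal.mul_mem_mul hx hx
  have h2 : cc p lam ∣ x * x :=
    (Dvd.intro (cc p z) (map_mul (cc p) lam z).symm).trans (Ideal.mem_span_singleton.1 h1)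
  rw [cc_dvd] at h2
  have h3 := ip_eq p
  constructor
  · convert h2.1 using 1
    rw [QuadraticAlgebra.re_mul, ← h3]; ring
  · convert h2.2 using 1
    rw [QuadraticAlgebra.im_mul]; ring

/-- Descent step: a divisor `M` of `J` with `M² = (λ)` can be split off from `J² = (λz)`. -/
theorem exists_quot_of_le {p : ℕ} [IsDedekindDomain (SS p)] {J M : Ideal (SS p)}
    {lam z : GaussianInt} (hlam : lam ≠ 0) (h : J * J = Ideal.span {cc p (lam * z)})
    (hM : M * M = Ideal.span {cc p lam}) (hle : J ≤ M) :
    ∃ J', J = M * J' ∧ J' * J' = Ideal.span {cc p z} := by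
  obtain ⟨J', rfl⟩ := Ideal.dvd_iff_le.2 hle
  refine ⟨J', rfl, ?_⟩
  have hl : (Ideal.span {cc p lam} : Ideal (SS p)) ≠ 0 := span_ne_zero (cc_ne_zero hlam)
  apply mul_left_cancel₀ hl
  rw [Ideal.span_singleton_mul_span_singleton, ← map_mul, ← h, ← hM]
  ring

/-- An ideal whose square is generated by a Gaussian integer is a Gaussian integer times a product
of the ramified primes. -/
theorem square_lemma {p : ℕ} [IsDedekindDomain (SS p)] (hp8 : p % 8 = 1) {π π' : GaussianInt}
    (hπ : PiData p π π') (n : ℕ) : ∀ (z : GaussianInt) (J : Ideal (SS p)), z.norm.natAbs = n →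
    z ≠ 0 → J * J = Ideal.span {cc p z} → ∃ (w y : GaussianInt) (d b e : ℕ), IsUnit w ∧ y ≠ 0 ∧
      z = w * (1 + gaussI) ^ d * π ^ b * π' ^ e * y ^ 2 ∧
      J = Ideal.span {cc p y} * idQ p ^ d * idP p π ^ b * idP p π' ^ e := by
  induction n using Nat.strong_induction_on with
  | _ n ih =>
  intro z J hn hz hJ
  by_cases hu : IsUnit z
  · refine ⟨z, 1, 0, 0, 0, hu, one_ne_zero, by simp, ?_⟩
    have h1 : (Ideal.span {cc p z} : Ideal (SS p)) = ⊤ :=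
      Ideal.span_singleton_eq_top.2 (hu.map (cc p))
    have h2 : J = ⊤ := top_le_iff.1 (by rw [← h1, ← hJ]; exact Ideal.mul_le_left)
    rw [h2]; simp
  obtain ⟨lam, hirr, z', rfl⟩ := WfDvdMonoid.exists_irreducible_factor hu hz
  have hlam := hirr.prime
  have hz' : z' ≠ 0 := right_ne_zero_of_mul hz
  have hnn : ∀ x : GaussianInt, x ≠ 0 → 0 < x.norm.natAbs := fun x hx =>
    Int.natAbs_pos.2 (fun h => hx (GaussianInt.norm_eq_zero.1 h))
  have hl2 : 2 ≤ lam.norm.natAbs := by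
    have h0 := hnn lam hlam.ne_zero
    have h1 : lam.norm.natAbs ≠ 1 := fun h => hirr.not_isUnit (Zsqrtd.norm_eq_one_iff.1 h)
    omega
  have hlt : ∀ x y : GaussianInt, x ≠ 0 → x = lam * y → y.norm.natAbs < x.norm.natAbs := by
    rintro x y hx rfl
    rw [Zsqrtd.norm_mul, Int.natAbs_mul]
    have := hnn y (right_ne_zero_of_mul hx)
    nlinarith
  have hz'n : z'.norm.natAbs < n := hn ▸ hlt _ _ hz rfl
  by_cases hl1 : lam ∣ 1 + gaussI
  · obtain ⟨w₀, hw₀⟩ := hirr.associated_of_dvd one_add_gaussI_prime.irreducible hl1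
    have hM : idQ p * idQ p = Ideal.span {cc p lam} := by
      rw [idQ_mul_self hp8, Ideal.span_singleton_eq_span_singleton]
      exact (Associated.map (cc p) ⟨w₀, hw₀⟩ : Associated _ _).symm
    have hle : J ≤ idQ p := by
      intro x hx
      have h1 := (dvd_of_mem_sq hJ hx).1
      have h2 : lam ∣ x.re - x.im := by
        apply hlam.dvd_of_dvd_pow (n := 2)
        obtain ⟨k, hk⟩ : ∃ k, p = 8 * k + 1 := ⟨p / 8, by omega⟩
        have hpk : (p : GaussianInt) = 8 * k + 1 := by
          have h : (p : GaussianInt) = ((8 * k + 1 : ℕ) : GaussianInt) := congrArg Nat.cast hk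
          rw [h]; push_cast; ring
        have h3 : (x.re - x.im) ^ 2 = (x.re ^ 2 + gaussI * p * x.im ^ 2) + (1 + gaussI) *
            (-(1 - gaussI) * (x.re * x.im) - gaussI * x.im ^ 2
              - 4 * k * gaussI * (1 - gaussI) * x.im ^ 2) := by
          linear_combination (-(x.re * x.im - x.im ^ 2 + 4 * k * gaussI * x.im ^ 2)) * gaussI_sq
            - gaussI * x.im ^ 2 * hpk
        rw [h3]
        exact dvd_add h1 (hl1.mul_right _)
      have h3 : x = cc p (x.re - x.im) + cc p x.im * (1 + theta p) := by
        rw [map_sub]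
        conv_lhs => rw [SS_eq x]
        ring
      rw [h3]
      refine add_mem ?_ (Ideal.mul_mem_left _ _ (Ideal.subset_span (by simp)))
      obtain ⟨k, hk⟩ := (Associated.symm ⟨w₀, hw₀⟩ : Associated (1 + gaussI) lam).dvd.trans h2
      rw [hk, map_mul]
      exact Ideal.mul_mem_right _ _ (Ideal.subset_span (by simp))
    obtain ⟨J', rfl, hJ'⟩ := exists_quot_of_le hlam.ne_zero hJ hM hle
    obtain ⟨w, y, d, b, e, hw, hy, rfl, rfl⟩ := ih _ hz'n z' J' rfl hz' hJ'
    refine ⟨w * ↑w₀⁻¹, y, d + 1, b, e, hw.mul w₀⁻¹.isUnit, hy, ?_, by ring⟩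
    rw [pow_succ, ← hw₀]
    have := w₀.inv_mul
    linear_combination (-(lam * w * (lam * ↑w₀) ^ d * π ^ b * π' ^ e * y ^ 2)) * this
  by_cases hl2 : lam ∣ p
  · have key : ∀ {ρ ρ' : GaussianInt}, PiData p ρ ρ' → lam ∣ ρ → J ≤ idP p ρ ∧
        idP p ρ * idP p ρ = Ideal.span {cc p lam} ∧ Associated lam ρ := by
      intro ρ ρ' hρ hd
      have hass := hirr.associated_of_dvd hρ.prime.irreducible hd
      have hass' : Associated (cc p lam) (cc p ρ) := Associated.map (cc p) hass
      refine ⟨fun x hx => ?_, ?_, hass⟩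
      · have h1 := (dvd_of_mem_sq hJ hx).1
        have h2 : lam ∣ x.re := by
          apply hlam.dvd_of_dvd_pow (n := 2)
          exact (dvd_add_left ((hl2.mul_left gaussI).mul_right _)).1 h1
        obtain ⟨k, hk⟩ := hass.symm.dvd.trans h2
        rw [SS_eq x, hk, map_mul]
        exact add_mem (Ideal.mul_mem_right _ _ (Ideal.subset_span (by simp)))
          (Ideal.mul_mem_left _ _ (Ideal.subset_span (by simp)))
      · rw [hρ.mul_self, Ideal.span_singleton_eq_span_singleton]
        exact hass'.symm
    rw [← hπ.mul] at hl2
    rcases hlam.dvd_or_dvd hl2 with hd | hd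
    · obtain ⟨hle, hM, w₀, hw₀⟩ := key hπ hd
      obtain ⟨J', rfl, hJ'⟩ := exists_quot_of_le hlam.ne_zero hJ hM hle
      obtain ⟨w, y, d, b, e, hw, hy, rfl, rfl⟩ := ih _ hz'n z' J' rfl hz' hJ'
      refine ⟨w * ↑w₀⁻¹, y, d, b + 1, e, hw.mul w₀⁻¹.isUnit, hy, ?_, by ring⟩
      have := w₀.inv_mul
      linear_combination (-(lam * w * (1 + gaussI) ^ d * π ^ b * π' ^ e * y ^ 2)) * this
        + w * ↑w₀⁻¹ * (1 + gaussI) ^ d * π ^ b * π' ^ e * y ^ 2 * hw₀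
    · obtain ⟨hle, hM, w₀, hw₀⟩ := key hπ.symm hd
      obtain ⟨J', rfl, hJ'⟩ := exists_quot_of_le hlam.ne_zero hJ hM hle
      obtain ⟨w, y, d, b, e, hw, hy, rfl, rfl⟩ := ih _ hz'n z' J' rfl hz' hJ'
      refine ⟨w * ↑w₀⁻¹, y, d, b, e + 1, hw.mul w₀⁻¹.isUnit, hy, ?_, by ring⟩
      have := w₀.inv_mul
      linear_combination (-(lam * w * (1 + gaussI) ^ d * π ^ b * π' ^ e * y ^ 2)) * this
        + w * ↑w₀⁻¹ * (1 + gaussI) ^ d * π ^ b * π' ^ e * y ^ 2 * hw₀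
  have hl3 : ¬ lam ∣ 2 := by
    intro h
    apply hl1
    apply hlam.dvd_of_dvd_pow (n := 2)
    rw [one_add_gaussI_sq]
    exact h.mul_right _
  have hgI : ¬ lam ∣ gaussI := fun h => hlam.not_isUnit (isUnit_of_dvd_unit h isUnit_gaussI)
  have hle : J ≤ Ideal.span {cc p lam} := by
    intro x hx
    obtain ⟨h1, h2⟩ := dvd_of_mem_sq hJ hx
    rw [Ideal.mem_span_singleton, cc_dvd]
    have h3 : lam ∣ x.re ↔ lam ∣ x.im := by
      constructor
      · intro h
        have := (dvd_add_right (h.pow two_ne_zero)).1 h1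
        rcases hlam.dvd_or_dvd this with h | h
        · rcases hlam.dvd_or_dvd h with h | h
          · exact absurd h hgI
          · exact absurd h hl2
        · exact hlam.dvd_of_dvd_pow h
      · intro h
        exact hlam.dvd_of_dvd_pow ((dvd_add_left ((h.pow two_ne_zero).mul_left _)).1 h1)
    rcases (hlam.dvd_or_dvd h2).resolve_left hl3 |> hlam.dvd_or_dvd with h | h
    · exact ⟨h, h3.1 h⟩
    · exact ⟨h3.2 h, h⟩
  obtain ⟨J', rfl⟩ := Ideal.dvd_iff_le.2 hle
  have hl : (Ideal.span {cc p lam} : Ideal (SS p)) ≠ 0 := span_ne_zero (cc_ne_zero hlam.ne_zero)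
  have h1 : Ideal.span {cc p lam} * (J' * J') = Ideal.span {cc p z'} := by
    apply mul_left_cancel₀ hl
    rw [Ideal.span_singleton_mul_span_singleton, ← map_mul, ← hJ]
    ring
  have h2 : lam ∣ z' := by
    have h3 : cc p z' ∈ Ideal.span {cc p lam} := by
      have : (Ideal.span {cc p z'} : Ideal (SS p)) ≤ Ideal.span {cc p lam} := by
        rw [← h1]; exact Ideal.mul_le_left
      exact this (Ideal.mem_span_singleton_self _)
    rw [Ideal.mem_span_singleton, cc_dvd] at h3
    simpa using h3.1
  obtain ⟨z'', rfl⟩ := h2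
  have hz'' : z'' ≠ 0 := right_ne_zero_of_mul hz'
  have h3 : J' * J' = Ideal.span {cc p z''} := by
    apply mul_left_cancel₀ hl
    rw [Ideal.span_singleton_mul_span_singleton, ← map_mul, ← h1]
  obtain ⟨w, y, d, b, e, hw, hy, rfl, rfl⟩ := ih _ ((hlt _ _ hz' rfl).trans hz'n) z'' J' rfl hz'' h3
  refine ⟨w, lam * y, d, b, e, hw, mul_ne_zero hlam.ne_zero hy, by ring, ?_⟩
  rw [map_mul, ← Ideal.span_singleton_mul_span_singleton]
  ring

/-! ### The 2-torsion of the class group -/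

theorem cls_mul_self {p : ℕ} [IsDedekindDomain (SS p)] {I : Ideal (SS p)} {z : SS p} (hz : z ≠ 0)
    (h : I * I = Ideal.span {z}) : cls I ^ 2 = 1 := by
  have hI := ideal_ne_zero_of_sq hz h
  rw [sq, ← cls_mul hI hI, h, cls_span]

theorem idQ_ne_zero {p : ℕ} (hp8 : p % 8 = 1) : idQ p ≠ 0 :=
  ideal_ne_zero_of_sq (cc_ne_zero one_add_gaussI_prime.ne_zero) (idQ_mul_self hp8)

theorem cls_idQ_sq {p : ℕ} [IsDedekindDomain (SS p)] (hp8 : p % 8 = 1) : cls (idQ p) ^ 2 = 1 :=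
  cls_mul_self (cc_ne_zero one_add_gaussI_prime.ne_zero) (idQ_mul_self hp8)

theorem PiData.ne_zero {p : ℕ} {π π' : GaussianInt} (h : PiData p π π') : idP p π ≠ 0 :=
  ideal_ne_zero_of_sq (cc_ne_zero h.prime.ne_zero) h.mul_self

theorem PiData.cls_sq {p : ℕ} [IsDedekindDomain (SS p)] {π π' : GaussianInt}
    (h : PiData p π π') : cls (idP p π) ^ 2 = 1 :=
  cls_mul_self (cc_ne_zero h.prime.ne_zero) h.mul_self

theorem PiData.cls_conj {p : ℕ} [IsDedekindDomain (SS p)] {π π' : GaussianInt}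
    (h : PiData p π π') : cls (idP p π') = cls (idP p π) := by
  have h1 : cls (idP p π) * cls (idP p π') = 1 := by
    rw [← cls_mul h.ne_zero h.symm.ne_zero, h.mul_conj, cls_span]
  have h2 := h.cls_sq
  rw [sq] at h2
  exact mul_left_cancel (h1.trans h2.symm)

/-- If `K² = (δ)` and `N(δ) = m²`, then multiplying `K` by the conjugate of `δ + m` gives an ideal
whose square is generated by a Gaussian integer, so `K` is equivalent to a product of ramified
primes. -/
theorem hilbert_ninety {p : ℕ} [IsDedekindDomain (SS p)] (hp8 : p % 8 = 1) {π π' : GaussianInt}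
    (hπ : PiData p π π') {K : Ideal (SS p)} {δ : SS p} {m : GaussianInt}
    (hK : K * K = Ideal.span {δ}) (hδ : QuadraticAlgebra.norm δ = m ^ 2) (hm : m ≠ 0)
    (hz : 2 * (m + δ.re) ≠ 0) :
    ∃ (w y : GaussianInt) (d b e : ℕ), IsUnit w ∧ y ≠ 0 ∧
      m ^ 2 * (2 * (m + δ.re)) = w * (1 + gaussI) ^ d * π ^ b * π' ^ e * y ^ 2 ∧
      cls K = cls (idQ p) ^ d * cls (idP p π) ^ (b + e) := by
  have hδ0 : δ ≠ 0 := by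
    rintro rfl
    rw [SS_norm_eq] at hδ
    refine pow_ne_zero 2 hm (hδ.symm.trans ?_)
    rw [show (0 : SS p).re = 0 from rfl, show (0 : SS p).im = 0 from rfl]; ring
  have hn : δ * star δ = cc p m ^ 2 := by rw [← cc_norm_eq, hδ, map_pow]
  have ht : δ + star δ = 2 * cc p δ.re := by
    rw [SS_add_star, map_mul, show cc p 2 = 2 from map_ofNat _ 2]
  have e1 : (star δ + cc p m) * (star δ + cc p m) * δ = cc p (m ^ 2 * (2 * (m + δ.re))) := by
    simp only [map_mul, map_pow, map_add, show cc p 2 = 2 from map_ofNat _ 2]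
    linear_combination (star δ + 2 * cc p m) * hn + cc p m ^ 2 * ht
  have hz' : m ^ 2 * (2 * (m + δ.re)) ≠ 0 := mul_ne_zero (pow_ne_zero 2 hm) hz
  have hρ : star δ + cc p m ≠ 0 := by
    intro h
    rw [h, zero_mul, zero_mul] at e1
    exact cc_ne_zero hz' e1.symm
  have hJ : (Ideal.span {star δ + cc p m} * K) * (Ideal.span {star δ + cc p m} * K) =
      Ideal.span {cc p (m ^ 2 * (2 * (m + δ.re)))} := by
    rw [mul_mul_mul_comm, hK, Ideal.span_singleton_mul_span_singleton,
      Ideal.span_singleton_mul_span_singleton, e1]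
  obtain ⟨w, y, d, b, e, hw, hy, h1, h2⟩ := square_lemma hp8 hπ _ _ _ rfl hz' hJ
  refine ⟨w, y, d, b, e, hw, hy, h1, ?_⟩
  have hQ := idQ_ne_zero hp8
  have hP := hπ.ne_zero
  have hP' := hπ.symm.ne_zero
  have hy' := span_ne_zero (cc_ne_zero (p := p) hy)
  rw [← cls_span_mul hρ (ideal_ne_zero_of_sq hδ0 hK), h2,
    cls_mul (mul_ne_zero (mul_ne_zero hy' (pow_ne_zero _ hQ)) (pow_ne_zero _ hP))
      (pow_ne_zero _ hP'), cls_mul (mul_ne_zero hy' (pow_ne_zero _ hQ)) (pow_ne_zero _ hP),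
    cls_mul hy' (pow_ne_zero _ hQ), cls_span, cls_pow hQ, cls_pow hP, cls_pow hP', hπ.cls_conj,
    one_mul, pow_add, mul_assoc]

/-- The conclusion of `hilbert_ninety` on classes; the sign of `m` can be changed if
`m + δ.re = 0`. -/
theorem exists_of_norm_sq {p : ℕ} [IsDedekindDomain (SS p)] (hp8 : p % 8 = 1) {π π' : GaussianInt}
    (hπ : PiData p π π') {K : Ideal (SS p)} {δ : SS p} {m : GaussianInt}
    (hK : K * K = Ideal.span {δ}) (hδ : QuadraticAlgebra.norm δ = m ^ 2) (hm : m ≠ 0) :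
    ∃ d n : ℕ, cls K = cls (idQ p) ^ d * cls (idP p π) ^ n := by
  by_cases hz : 2 * (m + δ.re) = 0
  · have hz' : 2 * (-m + δ.re) ≠ 0 := by
      intro h
      have h4 : 4 * m = 0 := by linear_combination hz - h
      exact hm ((mul_eq_zero.1 h4).resolve_left (by decide))
    obtain ⟨w, y, d, b, e, -, -, -, h⟩ := hilbert_ninety hp8 hπ hK (hδ.trans (neg_sq m).symm)
      (neg_ne_zero.2 hm) hz'
    exact ⟨d, _, h⟩
  · obtain ⟨w, y, d, b, e, -, -, -, h⟩ := hilbert_ninety hp8 hπ hK hδ hm hz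
    exact ⟨d, _, h⟩

/-- The same with `N(δ) = ±m²`. -/
theorem exists_of_norm_sq' {p : ℕ} [IsDedekindDomain (SS p)] (hp8 : p % 8 = 1) {π π' : GaussianInt}
    (hπ : PiData p π π') {K : Ideal (SS p)} {δ : SS p} {m : GaussianInt}
    (hK : K * K = Ideal.span {δ})
    (hδ : QuadraticAlgebra.norm δ = m ^ 2 ∨ QuadraticAlgebra.norm δ = - m ^ 2) (hm : m ≠ 0) :
    ∃ d n : ℕ, cls K = cls (idQ p) ^ d * cls (idP p π) ^ n := by
  rcases hδ with h | h
  · exact exists_of_norm_sq hp8 hπ hK h hm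
  · refine exists_of_norm_sq hp8 hπ hK (m := gaussI * m) ?_ (mul_ne_zero isUnit_gaussI.ne_zero hm)
    rw [h]; linear_combination -m ^ 2 * gaussI_sq

/-- A representation `p = c² - 2x₀²` with `c` prime to `4x₀`. -/
structure CData (p : ℕ) (c x₀ : ℤ) : Prop where
  eq : (p : ℤ) = c ^ 2 - 2 * x₀ ^ 2
  bez : ∃ U V, U * c + V * (4 * x₀) = 1

theorem CData.ne_zero {p : ℕ} [Fact p.Prime] {c x₀ : ℤ} (h : CData p c x₀) : c ≠ 0 := by
  rintro rfl
  have h1 := h.eq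
  have h2 : 0 < (p : ℤ) := by exact_mod_cast (Fact.out : p.Prime).pos
  nlinarith [sq_nonneg x₀]

theorem CData.mul_self {p : ℕ} {c x₀ : ℤ} (h : CData p c x₀) :
    idC p c x₀ * idC p c x₀ = Ideal.span {gam p x₀} := by
  obtain ⟨U, V, e⟩ := h.bez
  exact idC_mul_self h.eq U V e

theorem gam_ne_zero (p : ℕ) (x₀ : ℤ) : gam p x₀ ≠ 0 := fun h => by
  have h1 := congrArg QuadraticAlgebra.im h
  have h2 : (gam p x₀).im = 1 := by
    have h3 : gam p x₀ = cc p ((1 - gaussI) * x₀) + theta p := by simp [gam]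
    rw [h3, QuadraticAlgebra.im_add, QuadraticAlgebra.algebraMap_im, zero_add, theta_im]
  rw [h2] at h1
  exact one_ne_zero (α := GaussianInt) h1

theorem CData.idC_ne_zero {p : ℕ} {c x₀ : ℤ} (h : CData p c x₀) : idC p c x₀ ≠ 0 :=
  ideal_ne_zero_of_sq (gam_ne_zero p x₀) h.mul_self

theorem CData.cls_sq {p : ℕ} [IsDedekindDomain (SS p)] {c x₀ : ℤ} (h : CData p c x₀) :
    cls (idC p c x₀) ^ 2 = 1 := cls_mul_self (gam_ne_zero p x₀) h.mul_self

/-- If `I² = (α)`, then `N(α)` is a unit times a square. Multiplying by `𝔠`, whose square has a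
generator of norm `-ic²`, changes the unit to `±1` if necessary, and Hilbert 90 applies. -/
theorem two_torsion {p : ℕ} [Fact p.Prime] [IsDedekindDomain (SS p)] (hp8 : p % 8 = 1)
    {π π' : GaussianInt} (hπ : PiData p π π') {c x₀ : ℤ} (hc : CData p c x₀)
    (x : ClassGroup (SS p)) (hx : x ^ 2 = 1) :
    ∃ d n j : ℕ, x = cls (idQ p) ^ d * cls (idP p π) ^ n * cls (idC p c x₀) ^ j := by
  obtain ⟨I, hI, rfl⟩ := cls_surjective x
  rw [← cls_pow hI, cls_eq_one_iff (pow_ne_zero 2 hI)] at hx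
  obtain ⟨α, hα⟩ := hx
  rw [sq] at hα
  have hb := congrArg (Ideal.relNorm GaussianInt) hα
  rw [relNorm_span, map_mul, ← span_nrm, Ideal.span_singleton_mul_span_singleton,
    Ideal.span_singleton_eq_span_singleton, ← sq] at hb
  obtain ⟨u, hu⟩ := hb
  have hb0 : nrm I ≠ 0 := fun h => hI (nrm_eq_zero.1 h)
  set b := nrm I with hbdef
  have hK : (I * idC p c x₀) * (I * idC p c x₀) = Ideal.span {α * gam p x₀} := by
    rw [mul_mul_mul_comm, hα, hc.mul_self, Ideal.span_singleton_mul_span_singleton]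
  have hKn : QuadraticAlgebra.norm (α * gam p x₀) = (b ^ 2 * u) * (-gaussI * (c : GaussianInt) ^ 2) := by
    rw [map_mul, hu, norm_gam hc.eq]
  have hc0 : (c : GaussianInt) ≠ 0 := Int.cast_ne_zero.2 hc.ne_zero
  have caseC : (QuadraticAlgebra.norm (α * gam p x₀) = (b * c) ^ 2 ∨
      QuadraticAlgebra.norm (α * gam p x₀) = - (b * c) ^ 2) →
      ∃ d n j : ℕ, cls I = cls (idQ p) ^ d * cls (idP p π) ^ n * cls (idC p c x₀) ^ j := by
    intro h
    obtain ⟨d, n, e⟩ := exists_of_norm_sq' hp8 hπ hK h (mul_ne_zero hb0 hc0)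
    refine ⟨d, n, 1, ?_⟩
    rw [← e, cls_mul hI hc.idC_ne_zero, pow_one, mul_assoc, ← sq, hc.cls_sq, mul_one]
  rcases gauss_unit u.isUnit with h | h | h | h
  · obtain ⟨d, n, e⟩ := exists_of_norm_sq' hp8 hπ hα (m := b) (Or.inl (by rw [← hu, h, mul_one])) hb0
    exact ⟨d, n, 0, by rw [e, pow_zero, mul_one]⟩
  · obtain ⟨d, n, e⟩ := exists_of_norm_sq' hp8 hπ hα (m := b) (Or.inr (by rw [← hu, h]; ring)) hb0
    exact ⟨d, n, 0, by rw [e, pow_zero, mul_one]⟩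
  · apply caseC (Or.inl _)
    rw [hKn, h]; linear_combination -b ^ 2 * c ^ 2 * gaussI_sq
  · apply caseC (Or.inr _)
    rw [hKn, h]; linear_combination b ^ 2 * c ^ 2 * gaussI_sq

/-- From a minimal solution of `x² - 2py² = 1`: one of `2s² - pt² = ±1`, `s² + 1 = 2pt²` is
solvable. -/
theorem pell_trichotomy {p : ℕ} (hp : p.Prime) (hp8 : p % 8 = 1) :
    (∃ s t : ℕ, 2 * s ^ 2 = p * t ^ 2 + 1) ∨ (∃ s t : ℕ, 2 * s ^ 2 + 1 = p * t ^ 2) ∨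
      ∃ s t : ℕ, s ^ 2 + 1 = 2 * p * t ^ 2 := by
  classical
  have hex : ∃ y : ℕ, 0 < y ∧ ∃ x : ℕ, x ^ 2 = 2 * p * y ^ 2 + 1 := by
    obtain ⟨x, y, h, hy⟩ := Pell.exists_of_not_isSquare (d := (2 * p : ℤ))
      (by have := hp.pos; positivity) (by
        rintro ⟨k, hk⟩
        refine not_isSquare_two_mul hp8 ⟨k.natAbs, ?_⟩
        zify; rw [abs_mul_abs_self]; exact hk)
    refine ⟨y.natAbs, Int.natAbs_pos.2 hy, x.natAbs, ?_⟩
    zify; rw [sq_abs, sq_abs]; linarith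
  obtain ⟨hy, x, hx⟩ := Nat.find_spec hex
  have hmin := fun m (hm : m < Nat.find hex) => Nat.find_min hex hm
  set y := Nat.find hex with hydef
  have hxodd : x % 2 = 1 := by
    rcases Nat.mod_two_eq_zero_or_one x with h | h
    · have h1 : x ^ 2 % 2 = 0 := by rw [Nat.pow_mod, h]
      rw [hx, mul_assoc] at h1; omega
    · exact h
  obtain ⟨n, rfl⟩ : ∃ n, x = 2 * n + 1 := ⟨x / 2, by omega⟩
  have hn : 2 * (n * (n + 1)) = p * y ^ 2 := by nlinarith
  have hyev : 2 ∣ y := by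
    have h1 : 2 ∣ p * y ^ 2 := Dvd.intro _ hn
    rcases Nat.prime_two.dvd_mul.1 h1 with h | h
    · omega
    · exact Nat.prime_two.dvd_of_dvd_pow h
  obtain ⟨v, hv⟩ := hyev
  have hv0 : 0 < v := by omega
  have hnv : n * (n + 1) = 2 * p * v ^ 2 := by rw [hv] at hn; nlinarith
  have hcop : Nat.Coprime n (n + 1) := by simp
  have h2 : 2 ∣ n ∨ 2 ∣ n + 1 := by omega
  have hpd : p ∣ n ∨ p ∣ n + 1 := hp.dvd_mul.1 ⟨2 * v ^ 2, by rw [hnv]; ring⟩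
  have hp2 : Nat.Coprime 2 p := by
    rw [Nat.coprime_primes Nat.prime_two hp]; omega
  have key : ∀ α β a b : ℕ, 0 < α * β → α * β = 2 * p → n = α * a → n + 1 = β * b →
      ∃ s t, a = s ^ 2 ∧ b = t ^ 2 ∧ s * t = v := by
    intro α β a b hαβ h1 ha hb
    have h3 : a * b = v ^ 2 := by
      apply Nat.eq_of_mul_eq_mul_left hαβ
      rw [mul_mul_mul_comm, ← ha, ← hb, hnv, h1]
    have h4 : Nat.Coprime a b :=
      Nat.Coprime.of_dvd (Dvd.intro_left _ ha.symm) (Dvd.intro_left _ hb.symm) hcop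
    obtain ⟨s, hs⟩ := exists_eq_pow_of_mul_eq_pow (a := a) (b := b) (c := v) (k := 2)
      (by rw [gcd_eq_nat_gcd, h4.gcd_eq_one]; exact isUnit_one) h3
    obtain ⟨t, ht⟩ := exists_eq_pow_of_mul_eq_pow (a := b) (b := a) (c := v) (k := 2)
      (by rw [gcd_eq_nat_gcd, h4.symm.gcd_eq_one]; exact isUnit_one) (by rw [mul_comm, h3])
    refine ⟨s, t, hs, ht, ?_⟩
    rw [hs, ht, ← mul_pow] at h3
    exact Nat.pow_left_injective two_ne_zero h3
  have hpos := hp.pos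
  rcases h2 with ⟨a, ha⟩ | ⟨a, ha⟩ <;> rcases hpd with hd | hd
  · obtain ⟨a, ha⟩ := hp2.mul_dvd_of_dvd_of_dvd (Dvd.intro _ ha.symm) hd
    obtain ⟨s, t, hs, ht, hst⟩ := key (2 * p) 1 a (n + 1) (by omega) (by ring) ha (by ring)
    exfalso
    have hs0 : 0 < s := Nat.pos_of_ne_zero (by rintro rfl; omega)
    have ht0 : 0 < t := Nat.pos_of_ne_zero (by rintro rfl; omega)
    refine hmin s (by nlinarith) ⟨hs0, t, ?_⟩
    rw [← ht, ha, hs]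
  · obtain ⟨b, hb⟩ := hd
    obtain ⟨s, t, hs, ht, hst⟩ := key 2 p a b (by omega) rfl ha hb
    exact Or.inr (Or.inl ⟨s, t, by rw [← hs, ← ht, ← ha, ← hb]⟩)
  · obtain ⟨b, hb⟩ := hd
    obtain ⟨s, t, hs, ht, hst⟩ := key p 2 b a (by omega) (by ring) hb ha
    exact Or.inl ⟨t, s, by rw [← hs, ← ht, ← ha, ← hb]⟩
  · obtain ⟨a, ha⟩ := hp2.mul_dvd_of_dvd_of_dvd (Dvd.intro _ ha.symm) hd
    obtain ⟨s, t, hs, ht, hst⟩ := key 1 (2 * p) n a (by omega) (by ring) (by ring) ha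
    exact Or.inr (Or.inr ⟨s, t, by rw [← hs, ← ht, ← ha]⟩)

/-- Parity of the valuations at `2` and `p`. -/
theorem norm_parity {p d n t y : ℕ} (hp : p.Prime) (hp8 : p % 8 = 1) (ht : t ≠ 0) (hy : y ≠ 0)
    (h : 2 ^ 3 * p * t ^ 2 = 2 ^ d * p ^ n * y ^ 2) : d % 2 = 1 ∧ n % 2 = 1 := by
  have : Fact p.Prime := ⟨hp⟩
  have hp0 := hp.ne_zero
  have hp2 : p ≠ 2 := by omega
  have h2p : padicValNat 2 p = 0 := padicValNat_primes hp2.symm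
  have hp2' : padicValNat p 2 = 0 := padicValNat_primes hp2
  constructor
  · have h1 := congrArg (padicValNat 2) h
    rw [padicValNat.mul (by positivity) (by positivity), padicValNat.mul (by positivity) hp0,
      padicValNat.mul (by positivity) (by positivity),
      padicValNat.mul (by positivity) (by positivity)] at h1
    simp only [padicValNat.pow, h2p, padicValNat_self] at h1
    omega
  · have h1 := congrArg (padicValNat p) h
    rw [padicValNat.mul (by positivity) (by positivity), padicValNat.mul (by positivity) hp0,
      padicValNat.mul (by positivity) (by positivity),
      padicValNat.mul (by positivity) (by positivity)] at h1
    simp only [padicValNat.pow, hp2', padicValNat_self] at h1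
    omega

theorem PiData.norm {p : ℕ} {π π' : GaussianInt} (h : PiData p π π') (hp : p.Prime) :
    π.norm = p ∧ π'.norm = p := by
  have h1 := congrArg Zsqrtd.norm h.mul
  rw [Zsqrtd.norm_mul, Zsqrtd.norm_natCast] at h1
  have h2 : π.norm ≠ 1 := fun e => h.prime.not_isUnit ((Zsqrtd.norm_eq_one_iff' (by norm_num) _).1 e)
  have h3 : π'.norm ≠ 1 := fun e => h.prime'.not_isUnit ((Zsqrtd.norm_eq_one_iff' (by norm_num) _).1 e)
  have h4 := GaussianInt.norm_nonneg π
  have h5 := GaussianInt.norm_nonneg π'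
  lift π.norm to ℕ using h4 with a ha
  lift π'.norm to ℕ using h5 with b hb
  norm_cast at *
  have h6 : a ∣ p ^ 2 := ⟨b, by rw [h1, _root_.sq]⟩
  obtain ⟨i, hi, rfl⟩ := (Nat.dvd_prime_pow hp).1 h6
  have hpp := hp.pos
  interval_cases i
  · simp at h2
  · refine ⟨pow_one _, ?_⟩
    rw [pow_one] at h1
    exact Nat.eq_of_mul_eq_mul_left hpp h1
  · exfalso
    apply h3
    have : p ^ 2 * b = p ^ 2 * 1 := by rw [h1, mul_one, _root_.sq]
    exact Nat.eq_of_mul_eq_mul_left (by positivity) this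

/-- The relation among `[𝔮]`, `[𝔓]` and `[𝔠]` furnished by the units: `2s² - pt² = ±1` gives a unit
`(1 + i)s + tθ` of norm `±i`, which corrects the norm of `γ` to `±c²`; `s² + 1 = 2pt²` gives a unit
`i(s + (1 - i)tθ)` of norm `1`, and Hilbert 90 applied to it makes `𝔮𝔓` principal. -/
theorem two_torsion_rel {p : ℕ} [Fact p.Prime] [IsDedekindDomain (SS p)] (hp8 : p % 8 = 1)
    {π π' : GaussianInt} (hπ : PiData p π π') {c x₀ : ℤ} (hc : CData p c x₀) :
    (∃ d n : ℕ, cls (idC p c x₀) = cls (idQ p) ^ d * cls (idP p π) ^ n) ∨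
      cls (idQ p) * cls (idP p π) = 1 := by
  have hp : p.Prime := Fact.out
  have hc0 : (c : GaussianInt) ≠ 0 := Int.cast_ne_zero.2 hc.ne_zero
  have caseA : ∀ s t : ℤ, (2 * s ^ 2 - p * t ^ 2 = 1 ∨ 2 * s ^ 2 - p * t ^ 2 = -1) →
      ∃ d n : ℕ, cls (idC p c x₀) = cls (idQ p) ^ d * cls (idP p π) ^ n := by
    intro s t hst
    set η : SS p := ⟨(1 + gaussI) * s, t⟩ with hη
    have hn : QuadraticAlgebra.norm η = gaussI * ((2 * s ^ 2 - p * t ^ 2 : ℤ) : GaussianInt) := by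
      rw [SS_norm_eq]
      push_cast
      linear_combination (s : GaussianInt) ^ 2 * gaussI_sq
    have hu : IsUnit η := by
      apply isUnit_of_dvd_unit (y := cc p (QuadraticAlgebra.norm η))
      · rw [cc_norm_eq]; exact Dvd.intro _ rfl
      · apply IsUnit.map
        rw [hn]
        apply isUnit_gaussI.mul
        rcases hst with h | h <;> rw [h] <;> simp
    have hK : idC p c x₀ * idC p c x₀ = Ideal.span {gam p x₀ * η} := by
      rw [hc.mul_self]
      exact (Ideal.span_singleton_mul_right_unit hu _).symm
    refine exists_of_norm_sq' hp8 hπ hK (m := c) ?_ hc0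
    rw [map_mul, norm_gam hc.eq, hn]
    rcases hst with h | h
    · left; rw [h]; push_cast; linear_combination -(c : GaussianInt) ^ 2 * gaussI_sq
    · right; rw [h]; push_cast; linear_combination (c : GaussianInt) ^ 2 * gaussI_sq
  rcases pell_trichotomy hp hp8 with ⟨s, t, h⟩ | ⟨s, t, h⟩ | ⟨s, t, h⟩
  · left; apply caseA s t; left; zify at h; linarith
  · left; apply caseA s t; right; zify at h; linarith
  right
  set δ : SS p := ⟨gaussI * s, gaussI * (1 - gaussI) * t⟩ with hδ
  have h' : (s : GaussianInt) ^ 2 + 1 = 2 * p * t ^ 2 := by exact_mod_cast congrArg (Nat.cast : ℕ → GaussianInt) h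
  have hn : QuadraticAlgebra.norm δ = 1 ^ 2 := by
    rw [SS_norm_eq]
    linear_combination (s ^ 2 - gaussI * p * (1 - gaussI) ^ 2 * t ^ 2 - p * t ^ 2 * (2 - gaussI)) * gaussI_sq - h'
  have hu : IsUnit δ := by
    apply isUnit_of_dvd_unit (y := cc p (QuadraticAlgebra.norm δ))
    · rw [cc_norm_eq]; exact Dvd.intro _ rfl
    · rw [hn]; simp
  have hK : (⊤ : Ideal (SS p)) * ⊤ = Ideal.span {δ} := by
    rw [Ideal.span_singleton_eq_top.2 hu, Ideal.top_mul]
  have hznorm : (2 * (1 + δ.re)).norm = 2 ^ 3 * p * t ^ 2 := by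
    have : (2 * (1 + δ.re)) = ⟨2, 2 * s⟩ := by
      rw [hδ]
      apply Zsqrtd.ext <;> simp
    rw [this, gauss_norm_eq]
    zify at h
    simp only
    linear_combination 4 * h
  have ht : t ≠ 0 := by rintro rfl; omega
  have hpp := hp.pos
  have hz : 2 * (1 + δ.re) ≠ 0 := by
    intro h0
    rw [h0, Zsqrtd.norm_zero] at hznorm
    have : (0 : ℤ) < 2 ^ 3 * p * t ^ 2 := by positivity
    omega
  obtain ⟨w, y, d, b, e, hw, hy, h1, h2⟩ := hilbert_ninety hp8 hπ hK hn one_ne_zero hz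
  have hN := congrArg Zsqrtd.norm h1
  have hpow : ∀ (x : GaussianInt) (n : ℕ), (x ^ n).norm = x.norm ^ n := fun x n =>
    map_pow (Zsqrtd.normMonoidHom (d := -1)) x n
  have hI2 : (1 + gaussI).norm = 2 := by rw [gauss_norm_eq]; simp
  rw [one_pow, one_mul, hznorm] at hN
  simp only [Zsqrtd.norm_mul, hpow, (hπ.norm hp).1, (hπ.norm hp).2, hI2,
    (Zsqrtd.norm_eq_one_iff' (by norm_num) _).2 hw, one_mul] at hN
  have hy0 : y.norm.natAbs ≠ 0 := fun h => hy (GaussianInt.norm_eq_zero.1 (Int.natAbs_eq_zero.1 h))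
  obtain ⟨hd, hbe⟩ := norm_parity (d := d) (n := b + e) hp hp8 ht hy0 (by
    zify
    rw [abs_of_nonneg (GaussianInt.norm_nonneg y), hN]; ring)
  have htop : cls (⊤ : Ideal (SS p)) = 1 := by
    rw [← Ideal.span_singleton_one, cls_span]
  have odd_pow : ∀ (g : ClassGroup (SS p)) (k : ℕ), g ^ 2 = 1 → k % 2 = 1 → g ^ k = g := by
    intro g k hg hk
    rw [← Nat.div_add_mod k 2, hk, pow_succ, pow_mul, hg, one_pow, one_mul]
  rw [htop, odd_pow _ _ (cls_idQ_sq hp8) hd, odd_pow _ _ hπ.cls_sq hbe] at h2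
  exact h2.symm

/-- The 2-torsion of the class group has at most four elements. -/
theorem exists_two_torsion {p : ℕ} [Fact p.Prime] [IsDedekindDomain (SS p)] (hp8 : p % 8 = 1)
    {π π' : GaussianInt} (hπ : PiData p π π') {c x₀ : ℤ} (hc : CData p c x₀) :
    ∃ g : ClassGroup (SS p), ∀ x, x ^ 2 = 1 →
      x = 1 ∨ x = cls (idP p π) ∨ x = g ∨ x = g * cls (idP p π) := by
  have hP := hπ.cls_sq
  have hQ := cls_idQ_sq hp8
  have hC := hc.cls_sq
  have red : ∀ (g : ClassGroup (SS p)) (k : ℕ), g ^ 2 = 1 → g ^ k = 1 ∨ g ^ k = g := by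
    intro g k hg
    rw [← Nat.div_add_mod k 2, pow_add, pow_mul, hg, one_pow, one_mul]
    rcases Nat.mod_two_eq_zero_or_one k with h | h <;> rw [h]
    · left; exact pow_zero _
    · right; exact pow_one _
  rcases two_torsion_rel hp8 hπ hc with ⟨d', n', h⟩ | h
  · refine ⟨cls (idQ p), fun x hx => ?_⟩
    obtain ⟨d, n, j, e⟩ := two_torsion hp8 hπ hc x hx
    have e' : x = cls (idQ p) ^ (d + d' * j) * cls (idP p π) ^ (n + n' * j) := by
      rw [e, h, mul_pow, ← pow_mul, ← pow_mul, pow_add, pow_add]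
      exact mul_mul_mul_comm _ _ _ _
    rw [e']
    rcases red _ (d + d' * j) hQ with h1 | h1 <;> rcases red _ (n + n' * j) hP with h2 | h2 <;>
      rw [h1, h2] <;> simp
  · refine ⟨cls (idC p c x₀), fun x hx => ?_⟩
    obtain ⟨d, n, j, e⟩ := two_torsion hp8 hπ hc x hx
    have hQP : cls (idQ p) = cls (idP p π) := by
      rw [pow_two] at hP
      exact mul_right_cancel (h.trans hP.symm)
    rw [hQP, ← pow_add] at e
    rw [e]
    rcases red _ (d + n) hP with h1 | h1 <;> rcases red _ j hC with h2 | h2 <;>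
      rw [h1, h2] <;> simp [mul_comm]

/-! ### Representations of `p` and values of the genus characters -/

theorem qc_two {p : ℕ} [Fact p.Prime] (hp8 : p % 8 = 1) : quadraticChar (ZMod p) 2 = 1 := by
  have hp2 : p ≠ 2 := by omega
  have h := (ZMod.exists_sq_eq_two_iff hp2).2 (Or.inl hp8)
  have h0 : (2 : ZMod p) ≠ 0 := by
    have : ((2 : ℕ) : ZMod p) ≠ 0 := by
      rw [Ne, ZMod.natCast_eq_zero_iff]
      intro hd
      have := Nat.le_of_dvd two_pos hd
      have := (Fact.out : p.Prime).two_le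
      omega
    exact_mod_cast this
  exact (quadraticChar_one_iff_isSquare h0).2 h

theorem qc_neg_one {p : ℕ} [Fact p.Prime] (hp8 : p % 8 = 1) :
    quadraticChar (ZMod p) (-1) = 1 :=
  qc_of_pow_four hp8 (by norm_num)

/-- By quadratic reciprocity, an integer `n` prime to `p` such that `p` is a square modulo `n` is
a square modulo `p` (using `p ≡ 1 mod 8` for the sign and the even part). -/
theorem qc_of_dvd {p : ℕ} [Fact p.Prime] (hp8 : p % 8 = 1) {n m : ℤ} (hn : (n : ZMod p) ≠ 0)
    (h : n ∣ p - m ^ 2) : quadraticChar (ZMod p) n = 1 := by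
  have hp : p.Prime := Fact.out
  have hn0 : n.natAbs ≠ 0 := by
    intro h0
    rw [Int.natAbs_eq_zero] at h0
    exact hn (by rw [h0, Int.cast_zero])
  obtain ⟨k, n', hodd, hk⟩ := Nat.exists_eq_two_pow_mul_odd hn0
  have hn' : (n' : ℤ) ∣ n := by
    rw [Int.natCast_dvd, hk]; exact Dvd.intro_left _ rfl
  have hpn' : ¬ p ∣ n' := by
    intro hd
    apply hn
    rw [ZMod.intCast_zmod_eq_zero_iff_dvd]
    exact (Int.natCast_dvd_natCast.2 hd).trans hn'
  have hgcd : m.gcd n' = 1 := by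
    by_contra hne
    obtain ⟨q, hq, hqd⟩ := Nat.exists_prime_and_dvd hne
    have h1 : (q : ℤ) ∣ m := (Int.natCast_dvd_natCast.2 hqd).trans (Int.gcd_dvd_left _ _)
    have h2 : (q : ℤ) ∣ n' := (Int.natCast_dvd_natCast.2 hqd).trans (Int.gcd_dvd_right _ _)
    have h3 : (q : ℤ) ∣ p := by
      have h4 := (h2.trans hn').trans h
      have h5 := dvd_add h4 (h1.pow two_ne_zero)
      simpa using h5
    have h6 := (Nat.prime_dvd_prime_iff_eq hq hp).1 (Int.natCast_dvd_natCast.1 h3)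
    exact hpn' (h6 ▸ Int.natCast_dvd_natCast.1 h2)
  have hJ : quadraticChar (ZMod p) (n' : ZMod p) = 1 := by
    have h1 : quadraticChar (ZMod p) (n' : ZMod p) = legendreSym p (n' : ℤ) := by
      rw [legendreSym, Int.cast_natCast]
    rw [h1, jacobiSym.legendreSym.to_jacobiSym, jacobiSym.quadratic_reciprocity_one_mod_four' hodd (by omega),
      jacobiSym.mod_left' (a₂ := m ^ 2), jacobiSym.sq_one' hgcd]
    exact (Int.modEq_iff_dvd.2 (hn'.trans h)).symm
  have habs : quadraticChar (ZMod p) ((n.natAbs : ℕ) : ZMod p) = 1 := by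
    rw [hk]; push_cast
    rw [map_mul, map_pow, qc_two hp8, hJ, one_pow, one_mul]
  rcases Int.natAbs_eq n with e | e
  · rw [e, Int.cast_natCast, habs]
  · rw [e, Int.cast_neg, Int.cast_natCast, neg_eq_neg_one_mul, map_mul, qc_neg_one hp8, habs,
      one_mul]

theorem gauss_prime_of_norm {p : ℕ} (hp : p.Prime) {π : GaussianInt} (h : π.norm = p) :
    Prime π := by
  rw [← irreducible_iff_prime]
  constructor
  · rw [← Zsqrtd.norm_eq_one_iff' (by norm_num), h]
    exact_mod_cast hp.ne_one
  · intro x y hxy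
    have h1 := congrArg (fun z => (Zsqrtd.norm z).natAbs) hxy
    simp only [Zsqrtd.norm_mul, Int.natAbs_mul, h, Int.natAbs_natCast] at h1
    rw [← Zsqrtd.norm_eq_one_iff, ← Zsqrtd.norm_eq_one_iff]
    rcases (Nat.dvd_prime hp).1 (Dvd.intro _ h1.symm) with h2 | h2
    · exact Or.inl h2
    · right
      rw [h2] at h1
      exact (Nat.mul_eq_left hp.ne_zero).1 h1.symm

/-- A factorisation `p = ππ̄` together with a reduction map modulo `π` whose value at `π̄` is a
nonzero square. -/
theorem exists_piData {p : ℕ} [Fact p.Prime] (hp8 : p % 8 = 1) :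
    ∃ (π : GaussianInt) (f : GaussianInt →+* ZMod p), PiData p π (star π) ∧ f π = 0 ∧
      f (star π) ≠ 0 ∧ quadraticChar (ZMod p) (f (star π)) = 1 := by
  have hp : p.Prime := Fact.out
  obtain ⟨a, b, hab, hodd⟩ : ∃ a b : ℤ, a ^ 2 + b ^ 2 = p ∧ a % 2 = 1 := by
    obtain ⟨a, b, h⟩ := Nat.Prime.sq_add_sq (p := p) (by omega)
    have h' : (a : ℤ) ^ 2 + (b : ℤ) ^ 2 = p := by exact_mod_cast h
    rcases Nat.mod_two_eq_zero_or_one a with h1 | h1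
    · refine ⟨b, a, by rw [add_comm, h'], ?_⟩
      have h2 : b % 2 = 1 := by
        by_contra hb
        have h3 : 2 ∣ a ^ 2 + b ^ 2 :=
          dvd_add (dvd_pow (by omega) two_ne_zero) (dvd_pow (by omega) two_ne_zero)
        omega
      omega
    · exact ⟨a, b, h', by omega⟩
  have hpp : (0 : ℤ) < p := by exact_mod_cast hp.pos
  have key : ∀ x y : ℤ, x ^ 2 + y ^ 2 = p → x ≠ 0 → (x : ZMod p) ≠ 0 := by
    intro x y hxy hx h0
    rw [ZMod.intCast_zmod_eq_zero_iff_dvd] at h0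
    have h1 : (p : ℤ) ≤ |x| := Int.le_of_dvd (abs_pos.2 hx) ((dvd_abs _ _).2 h0)
    have h2 : (p : ℤ) ^ 2 ≤ x ^ 2 := by rw [← sq_abs x]; exact pow_le_pow_left₀ hpp.le h1 2
    have h3 : (2 : ℤ) ≤ p := by exact_mod_cast hp.two_le
    nlinarith [sq_nonneg y]
  have ha0 : (a : ZMod p) ≠ 0 := key a b hab (by rintro rfl; simp at hodd)
  have hb0 : (b : ZMod p) ≠ 0 := by
    apply key b a (by rw [add_comm, hab])
    rintro rfl
    have h1 : (p : ℤ) = a * a := by rw [← hab]; ring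
    have h2 : p = a.natAbs * a.natAbs := by
      zify; rw [abs_mul_abs_self, h1]
    exact Irreducible.not_isSquare hp ⟨_, h2⟩
  have hab' : (a : ZMod p) ^ 2 + (b : ZMod p) ^ 2 = 0 := by
    have := congrArg (Int.cast : ℤ → ZMod p) hab
    push_cast at this
    rw [this, ZMod.natCast_self]
  have h20 : (2 : ZMod p) ≠ 0 := by
    intro h
    have := qc_two (p := p) hp8
    rw [h, MulChar.map_zero] at this
    exact zero_ne_one this
  set r : ZMod p := -(a : ZMod p) / b with hr
  have hrr : r * r = ((-1 : ℤ) : ZMod p) := by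
    rw [hr]; field_simp; push_cast; linear_combination hab'
  set f : GaussianInt →+* ZMod p := Zsqrtd.lift ⟨r, hrr⟩ with hf
  have hfv : ∀ z : GaussianInt, f z = z.re + z.im * r := fun z => rfl
  have hbr : (b : ZMod p) * r = -a := by rw [hr]; field_simp
  have hfπ : f ⟨a, b⟩ = 0 := by rw [hfv]; linear_combination hbr
  have hfπ' : f (star ⟨a, b⟩) = 2 * a := by
    rw [hfv]; simp only [Zsqrtd.star_mk]; push_cast; linear_combination -hbr
  have hcop : IsCoprime (2 * a) (p : ℤ) := by
    rw [isCoprime_comm]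
    apply (Nat.prime_iff_prime_int.1 hp).irreducible.coprime_iff_not_dvd.2
    rw [← ZMod.intCast_zmod_eq_zero_iff_dvd]
    push_cast
    exact mul_ne_zero h20 ha0
  have hmul : (⟨a, b⟩ : GaussianInt) * star ⟨a, b⟩ = p := by
    rw [Zsqrtd.star_mk]
    apply Zsqrtd.ext
    · simp; linarith
    · simp; ring
  have hadd : (⟨a, b⟩ : GaussianInt) + star ⟨a, b⟩ = ((2 * a : ℤ) : GaussianInt) := by
    rw [Zsqrtd.star_mk]
    apply Zsqrtd.ext
    · simp; ring
    · simp
  refine ⟨⟨a, b⟩, f, ⟨hmul, ?_, ?_, ?_⟩, hfπ, ?_, ?_⟩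
  · obtain ⟨x, y, hxy⟩ := hcop
    have hxy' : (x : GaussianInt) * ((2 * a : ℤ) : GaussianInt) + y * p = 1 := by
      exact_mod_cast congrArg (Int.cast : ℤ → GaussianInt) hxy
    refine ⟨x, x + y * ⟨a, b⟩, ?_⟩
    linear_combination hxy' + (x : GaussianInt) * hadd + (y : GaussianInt) * hmul
  · apply gauss_prime_of_norm hp
    rw [gauss_norm_eq, ← hab]
  · apply gauss_prime_of_norm hp
    rw [gauss_norm_eq, ← hab, Zsqrtd.star_mk]; ring
  · rw [hfπ']; exact mul_ne_zero h20 ha0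
  · rw [hfπ', map_mul, qc_two hp8, one_mul]
    exact qc_of_dvd hp8 ha0 (m := b) ⟨a, by rw [← hab]; ring⟩

/-- A representation `p = c² - 2x₀²` by Thue's argument: the pigeonhole principle gives `A² < p`,
`B² < p` with `p ∣ A² - 2B²`, which forces `A² - 2B² = -p`. -/
theorem exists_cData {p : ℕ} [Fact p.Prime] (hp8 : p % 8 = 1) : ∃ c x₀ : ℤ, CData p c x₀ := by
  have hp : p.Prime := Fact.out
  obtain ⟨r, hr⟩ := (ZMod.exists_sq_eq_two_iff (p := p) (by omega)).2 (Or.inl hp8)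
  set m := Nat.sqrt p with hm
  have hm1 : p < (m + 1) * (m + 1) := Nat.lt_succ_sqrt p
  have hm2 : m * m < p := by
    refine lt_of_le_of_ne (Nat.sqrt_le p) ?_
    intro h
    exact Irreducible.not_isSquare hp ⟨m, h.symm⟩
  obtain ⟨⟨i, j⟩, ⟨i', j'⟩, hne, he⟩ := Fintype.exists_ne_map_eq_of_card_lt
    (fun x : Fin (m + 1) × Fin (m + 1) => ((x.1 : ℕ) : ZMod p) - r * ((x.2 : ℕ) : ZMod p))
    (by simpa [ZMod.card] using hm1)
  set A : ℤ := (i : ℕ) - (i' : ℕ) with hA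
  set B : ℤ := (j : ℕ) - (j' : ℕ) with hB
  have hAB : (A : ZMod p) = r * B := by
    simp only at he
    rw [hA, hB]; push_cast; linear_combination he
  have hdvd : (p : ℤ) ∣ A ^ 2 - 2 * B ^ 2 := by
    rw [← ZMod.intCast_zmod_eq_zero_iff_dvd]
    push_cast
    rw [hAB, hr]; ring
  have hmm : (m : ℤ) * m < p := by exact_mod_cast hm2
  have hi := i.2; have hi' := i'.2; have hj := j.2; have hj' := j'.2
  have hA2 : A ^ 2 < p := by
    have h1 : |A| ≤ m := by rw [abs_le]; omega
    have h2 : |A| ^ 2 ≤ (m : ℤ) ^ 2 := pow_le_pow_left₀ (abs_nonneg _) h1 2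
    rw [sq_abs] at h2; nlinarith
  have hB2 : B ^ 2 < p := by
    have h1 : |B| ≤ m := by rw [abs_le]; omega
    have h2 : |B| ^ 2 ≤ (m : ℤ) ^ 2 := pow_le_pow_left₀ (abs_nonneg _) h1 2
    rw [sq_abs] at h2; nlinarith
  have hne0 : A ^ 2 - 2 * B ^ 2 ≠ 0 := by
    intro h
    have hB0 : B = 0 := by
      by_contra hB0
      have h1 : Irrational (Real.sqrt 2) := irrational_sqrt_two
      apply h1
      refine ⟨|(A : ℚ) / B|, ?_⟩
      have h2 : ((A : ℝ) / B) ^ 2 = 2 := by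
        have : (B : ℝ) ≠ 0 := by exact_mod_cast hB0
        field_simp
        have := congrArg (Int.cast : ℤ → ℝ) h
        push_cast at this; linarith
      push_cast
      rw [← h2, Real.sqrt_sq_eq_abs]
    have hA0 : A = 0 := by rw [hB0] at h; simpa using h
    apply hne
    ext <;> simp <;> omega
  have heq : A ^ 2 - 2 * B ^ 2 = -p := by
    obtain ⟨k, hk⟩ := hdvd
    have hpp : (0 : ℤ) < p := by exact_mod_cast hp.pos
    have h1 : k < 1 := by nlinarith [sq_nonneg B]
    have h2 : -2 < k := by nlinarith [sq_nonneg A]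
    have h3 : k ≠ 0 := by rintro rfl; exact hne0 (by rw [hk, mul_zero])
    have h4 : k = -1 := by omega
    rw [hk, h4]; ring
  have e : (p : ℤ) = (A + 2 * B) ^ 2 - 2 * (A + B) ^ 2 := by linear_combination heq
  refine ⟨A + 2 * B, A + B, e, ?_⟩
  have c1 : IsCoprime (A + 2 * B) (A + B) := by
    rw [Int.isCoprime_iff_gcd_eq_one]
    set g := Int.gcd (A + 2 * B) (A + B) with hg
    have h1 : (g : ℤ) ∣ A + 2 * B := (Int.gcd_dvd_left _ _)
    have h2 : (g : ℤ) ∣ A + B := (Int.gcd_dvd_right _ _)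
    have h3 : ((g * g : ℕ) : ℤ) ∣ (p : ℤ) := by
      rw [e]; push_cast; rw [← sq]
      exact dvd_sub (pow_dvd_pow_of_dvd h1 2) ((pow_dvd_pow_of_dvd h2 2).mul_left 2)
    exact Nat.isUnit_iff.1 (hp.prime.squarefree g (Int.natCast_dvd_natCast.1 h3))
  have c2 : IsCoprime (A + 2 * B) 4 := by
    have h1 : IsCoprime (A + 2 * B) 2 := by
      rw [isCoprime_comm]
      apply Int.prime_two.irreducible.coprime_iff_not_dvd.2
      intro h
      have h2 : (2 : ℤ) ∣ p := by
        rw [e]; exact dvd_sub (h.pow two_ne_zero) (Dvd.intro _ rfl)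
      omega
    have h2 := h1.pow_right (n := 2)
    norm_num at h2
    exact h2
  exact c2.mul_right c1

theorem CData.cast_ne_zero {p : ℕ} [Fact p.Prime] (hp8 : p % 8 = 1) {c x₀ : ℤ}
    (h : CData p c x₀) : (c : ZMod p) ≠ 0 ∧ (x₀ : ZMod p) ≠ 0 := by
  have e : (c : ZMod p) ^ 2 = 2 * (x₀ : ZMod p) ^ 2 := by
    have := congrArg (Int.cast : ℤ → ZMod p) h.eq
    push_cast at this
    rw [ZMod.natCast_self] at this
    linear_combination -this
  obtain ⟨U, V, hUV⟩ := h.bez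
  have hUV' := congrArg (Int.cast : ℤ → ZMod p) hUV
  push_cast at hUV'
  have h20 : (2 : ZMod p) ≠ 0 := by
    intro h
    have := qc_two (p := p) hp8
    rw [h, MulChar.map_zero] at this
    exact zero_ne_one this
  have hiff : (c : ZMod p) = 0 ↔ (x₀ : ZMod p) = 0 := by
    constructor
    · intro h0
      rw [h0] at e
      have : 2 * (x₀ : ZMod p) ^ 2 = 0 := by rw [← e]; ring
      exact pow_eq_zero_iff two_ne_zero |>.1 ((mul_eq_zero.1 this).resolve_left h20)
    · intro h0
      rw [h0] at e
      exact pow_eq_zero_iff two_ne_zero |>.1 (by rw [e]; ring)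
  have hc : (c : ZMod p) ≠ 0 := by
    intro h0
    rw [h0, hiff.1 h0] at hUV'
    simp at hUV'
  exact ⟨hc, fun h0 => hc (hiff.2 h0)⟩

/-- `(c/p) = (2/p)₄`. -/
theorem CData.qc {p : ℕ} [Fact p.Prime] (hp8 : p % 8 = 1) {c x₀ : ℤ} (h : CData p c x₀) :
    ((quadraticChar (ZMod p) c : ℤ) : ZMod p) = 2 ^ ((p - 1) / 4) := by
  have hch : ringChar (ZMod p) ≠ 2 := by rw [ZMod.ringChar_zmod_n]; omega
  have hx := qc_of_dvd hp8 (h.cast_ne_zero hp8).2 (m := c) ⟨-2 * x₀, by rw [h.eq]; ring⟩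
  have hx' := quadraticChar_eq_pow_of_char_ne_two' hch (x₀ : ZMod p)
  rw [hx, Int.cast_one] at hx'
  have e : (c : ZMod p) ^ 2 = 2 * (x₀ : ZMod p) ^ 2 := by
    have := congrArg (Int.cast : ℤ → ZMod p) h.eq
    push_cast at this
    rw [ZMod.natCast_self] at this
    linear_combination -this
  rw [quadraticChar_eq_pow_of_char_ne_two' hch]
  have h1 : Fintype.card (ZMod p) / 2 = 2 * ((p - 1) / 4) := by rw [ZMod.card]; omega
  rw [h1] at hx' ⊢
  rw [pow_mul] at hx' ⊢
  rw [e, mul_pow, ← hx', mul_one]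

/-- The absolute norm of `α = x + yθ` as a value of the form `X² + 2pY²`, that is as a norm from
`ℚ(√(-2p))`. -/
theorem gauss_norm_norm {p : ℕ} (α : SS p) : (QuadraticAlgebra.norm α).norm =
    (α.re.norm - p * α.im.norm) ^ 2 + 2 * p * ((α.im * star α.re).re + (α.im * star α.re).im) ^ 2 := by
  rw [SS_norm_eq]
  simp only [gauss_norm_eq]
  simp [sq]
  ring

/-- If `𝔓` were generated by `α`, the absolute norm of `α` would give `p = X² + 2pY²`, which is
impossible. -/
theorem cls_idP_ne_one {p : ℕ} [Fact p.Prime] [IsDedekindDomain (SS p)] {π π' : GaussianInt}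
    (hπ : PiData p π π') : cls (idP p π) ≠ 1 := by
  have hp : p.Prime := Fact.out
  intro h
  obtain ⟨α, hα⟩ := (cls_eq_one_iff hπ.ne_zero).1 h
  have h1 := hπ.relNorm
  rw [hα, relNorm_span, Ideal.span_singleton_eq_span_singleton] at h1
  obtain ⟨u, hu⟩ := h1
  have h2 := congrArg Zsqrtd.norm hu
  rw [Zsqrtd.norm_mul, (Zsqrtd.norm_eq_one_iff' (by norm_num) _).2 u.isUnit, mul_one, gauss_norm_norm,
    (hπ.norm hp).1] at h2
  set X := α.re.norm - p * α.im.norm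
  set Y := (α.im * star α.re).re + (α.im * star α.re).im
  have hpd : (p : ℤ) ∣ X := by
    apply (Nat.prime_iff_prime_int.1 hp).dvd_of_dvd_pow (n := 2)
    exact ⟨1 - 2 * Y ^ 2, by linear_combination h2⟩
  obtain ⟨X', hX'⟩ := hpd
  have hpp : (2 : ℤ) ≤ p := by exact_mod_cast hp.two_le
  have h3 : (p : ℤ) * X' ^ 2 + 2 * Y ^ 2 = 1 := by
    apply mul_left_cancel₀ (show (p : ℤ) ≠ 0 by omega)
    rw [hX'] at h2; linear_combination h2
  have hY : Y = 0 := by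
    by_contra hY
    have : 0 < Y ^ 2 := by positivity
    nlinarith [sq_nonneg X']
  rw [hY] at h3
  have h4 : (p : ℤ) ∣ 1 := ⟨X' ^ 2, by linear_combination -h3⟩
  have := Int.le_of_dvd one_pos h4
  omega

/-! ### Surjectivity of the genus characters -/

/-- Dirichlet's theorem provides primes `ℓ ≡ r mod 8` that are non-residues modulo `p`; for
`r ∈ {3, 5}` both `2` and `p` are non-residues modulo `ℓ`, so `2p` is a residue. -/
theorem exists_prime_nonresidue {p : ℕ} [Fact p.Prime] (hp8 : p % 8 = 1) {r : ℕ}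
    (hr : r = 3 ∨ r = 5) : ∃ (l : ℕ) (y u v : ℤ), l.Prime ∧ l % 8 = r ∧
      quadraticChar (ZMod p) (l : ZMod p) = -1 ∧ (l : ℤ) ∣ y ^ 2 - 2 * p ∧
      u * l + v * (2 * y) = 1 := by
  have hp : p.Prime := Fact.out
  have hch : ringChar (ZMod p) ≠ 2 := by rw [ZMod.ringChar_zmod_n]; omega
  obtain ⟨a, ha⟩ := quadraticChar_exists_neg_one hch
  have hcop : Nat.Coprime 8 p := by
    have h2 : Nat.Coprime 2 p := (Nat.coprime_primes Nat.prime_two hp).2 (by omega)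
    exact h2.pow_left 3
  obtain ⟨k, hk1, hk2⟩ := Nat.chineseRemainder hcop r a.val
  have hka : (k : ZMod p) = a := by
    rw [(ZMod.natCast_eq_natCast_iff k a.val p).2 hk2, ZMod.natCast_zmod_val]
  have hkc : k.Coprime (8 * p) := by
    apply Nat.Coprime.mul_right
    · have h2 : Nat.Coprime k 2 := by
        rw [Nat.coprime_two_right, Nat.odd_iff]
        have : k % 8 = r % 8 := hk1
        omega
      exact h2.pow_right 3
    · rw [Nat.coprime_comm, hp.coprime_iff_not_dvd, ← ZMod.natCast_eq_zero_iff, hka]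
      rintro rfl
      rw [MulChar.map_zero] at ha
      norm_num at ha
  obtain ⟨l, -, hl, hlk⟩ := Nat.forall_exists_prime_gt_and_modEq 0
    (q := 8 * p) (a := k) (mul_ne_zero (by norm_num) hp.ne_zero) hkc
  have hl8 : l % 8 = r := by
    have h1 : l ≡ k [MOD 8] := hlk.of_mul_right p
    have h2 : l % 8 = r % 8 := h1.trans hk1
    omega
  have hlp : (l : ZMod p) = a := by
    rw [← hka]
    exact (ZMod.natCast_eq_natCast_iff _ _ _).2 (hlk.of_mul_left 8)
  have : Fact l.Prime := ⟨hl⟩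
  have hne : l ≠ p := by rintro rfl; omega
  have hl2 : l ≠ 2 := by omega
  have hleg : legendreSym l p = -1 := by
    rw [legendreSym.quadratic_reciprocity_one_mod_four (p := p) (q := l) (by omega) hl2]
    rw [legendreSym, Int.cast_natCast, hlp, ha]
  have hleg2 : legendreSym l 2 = -1 := by
    have h0 : ((2 : ℤ) : ZMod l) ≠ 0 := by
      rw [Ne, ZMod.intCast_zmod_eq_zero_iff_dvd]
      intro h
      have := Int.le_of_dvd two_pos h
      have := hl.two_le
      omega
    rw [legendreSym.eq_neg_one_iff]
    push_cast
    rw [ZMod.exists_sq_eq_two_iff hl2]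
    omega
  have hleg3 : legendreSym l (2 * p) = 1 := by
    rw [legendreSym.mul, hleg, hleg2]; norm_num
  have h0 : ((2 * p : ℤ) : ZMod l) ≠ 0 := by
    intro h
    rw [(legendreSym.eq_zero_iff l _).2 h] at hleg3
    norm_num at hleg3
  obtain ⟨t, ht⟩ := (legendreSym.eq_one_iff l h0).1 hleg3
  have hty : (((t.val : ℕ) : ℤ) : ZMod l) = t := by
    rw [Int.cast_natCast, ZMod.natCast_zmod_val]
  have hc : IsCoprime (l : ℤ) (2 * ((t.val : ℕ) : ℤ)) := by
    apply (Nat.prime_iff_prime_int.1 hl).irreducible.coprime_iff_not_dvd.2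
    rw [← ZMod.intCast_zmod_eq_zero_iff_dvd, Int.cast_mul, hty]
    have h2 : ((2 : ℤ) : ZMod l) ≠ 0 := by
      intro h; apply h0; rw [Int.cast_mul, h, zero_mul]
    have h3 : t ≠ 0 := by
      rintro rfl; apply h0; rw [ht, mul_zero]
    exact mul_ne_zero h2 h3
  obtain ⟨u, v, huv⟩ := hc
  refine ⟨l, ((t.val : ℕ) : ℤ), u, v, hl, hl8, by rw [hlp, ha], ?_, huv⟩
  rw [← ZMod.intCast_zmod_eq_zero_iff_dvd, Int.cast_sub, Int.cast_pow, hty, ht]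
  ring

/-- The composite of a reduction map with complex conjugation. -/
def conjHom {p : ℕ} (f : GaussianInt →+* ZMod p) : GaussianInt →+* ZMod p :=
  f.comp (starRingEnd GaussianInt)

theorem conjHom_apply {p : ℕ} (f : GaussianInt →+* ZMod p) (z : GaussianInt) :
    conjHom f z = f (star z) := rfl

theorem mul_conjHom {p : ℕ} (f : GaussianInt →+* ZMod p) (z : GaussianInt) :
    f z * conjHom f z = ((z.norm : ℤ) : ZMod p) := by
  rw [conjHom_apply, ← map_mul, ← Zsqrtd.norm_eq_mul_conj, map_intCast]

/-- An ideal of relative norm `ℓ`, with `ℓ ≡ 3 mod 8` a prime non-residue modulo `p`. -/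
theorem exists_both_neg {p : ℕ} [Fact p.Prime] [IsDedekindDomain (SS p)] (hp8 : p % 8 = 1) :
    ∃ x : ClassGroup (SS p), ∀ f : GaussianInt →+* ZMod p, classChar hp8 f x = -1 := by
  obtain ⟨l, y, u, v, -, -, hq, ⟨t, ht⟩, huv⟩ := exists_prime_nonresidue hp8 (Or.inl rfl)
  have ht' := congrArg (Int.cast : ℤ → GaussianInt) ht
  have huv' := congrArg (Int.cast : ℤ → GaussianInt) huv
  push_cast at ht' huv'
  obtain ⟨J, hJ⟩ := exists_ideal_of_dvd (p := p) (lam := (l : GaussianInt)) ⟨(t : GaussianInt), ht'⟩ huv'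
  refine ⟨cls J, fun f => ?_⟩
  rw [classChar_cls hp8 f hJ, map_natCast, hq]
  rw [map_natCast]
  intro h
  rw [h, MulChar.map_zero] at hq
  norm_num at hq

/-- An ideal whose relative norm is a prime factor in `ℤ[i]` of a prime `ℓ ≡ 5 mod 8` that is a
non-residue modulo `p`. -/
theorem exists_prod_neg {p : ℕ} [Fact p.Prime] [IsDedekindDomain (SS p)] (hp8 : p % 8 = 1)
    (f : GaussianInt →+* ZMod p) :
    ∃ y : ClassGroup (SS p), classChar hp8 f y * classChar hp8 (conjHom f) y = -1 := by
  obtain ⟨l, y, u, v, hl, hl8, hq, ⟨t, ht⟩, huv⟩ := exists_prime_nonresidue hp8 (Or.inr rfl)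
  have : Fact l.Prime := ⟨hl⟩
  obtain ⟨a, b, hab⟩ := Nat.Prime.sq_add_sq (p := l) (by omega)
  set lam : GaussianInt := ⟨a, b⟩ with hlam
  have hnorm : lam.norm = l := by
    rw [gauss_norm_eq, hlam]; simp only; exact_mod_cast hab
  have hmul : (l : GaussianInt) = lam * star lam := by
    rw [← Zsqrtd.norm_eq_mul_conj, hnorm, Int.cast_natCast]
  have ht' := congrArg (Int.cast : ℤ → GaussianInt) ht
  have huv' := congrArg (Int.cast : ℤ → GaussianInt) huv
  push_cast at ht' huv'
  rw [hmul] at ht' huv'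
  obtain ⟨J, hJ⟩ := exists_ideal_of_dvd (p := p) (lam := lam) (y := y) (u := u * star lam) (v := v)
    ⟨star lam * t, by rw [ht']; ring⟩ (by rw [← huv']; ring)
  have hprod : f lam * conjHom f lam = l := by
    rw [mul_conjHom, hnorm, Int.cast_natCast]
  have hl0 : (l : ZMod p) ≠ 0 := by
    intro h
    rw [h, MulChar.map_zero] at hq
    norm_num at hq
  refine ⟨cls J, ?_⟩
  rw [classChar_cls hp8 f hJ (left_ne_zero_of_mul (hprod ▸ hl0)),
    classChar_cls hp8 _ hJ (right_ne_zero_of_mul (hprod ▸ hl0)), ← map_mul, hprod, hq]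

theorem classChar_idP {p : ℕ} [Fact p.Prime] [IsDedekindDomain (SS p)] (hp8 : p % 8 = 1)
    {π : GaussianInt} {f : GaussianInt →+* ZMod p} (hπ : PiData p π (star π))
    (h0 : f (star π) ≠ 0) (h1 : quadraticChar (ZMod p) (f (star π)) = 1) :
    classChar hp8 f (cls (idP p π)) = 1 ∧ classChar hp8 (conjHom f) (cls (idP p π)) = 1 := by
  constructor
  · rw [← hπ.cls_conj, classChar_cls hp8 f hπ.symm.relNorm h0, h1]
  · rw [classChar_cls hp8 (conjHom f) hπ.relNorm h0, conjHom_apply, h1]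

theorem classChar_idC {p : ℕ} [Fact p.Prime] [IsDedekindDomain (SS p)] (hp8 : p % 8 = 1)
    {c x₀ : ℤ} (hc : CData p c x₀) (f : GaussianInt →+* ZMod p) :
    classChar hp8 f (cls (idC p c x₀)) = quadraticChar (ZMod p) (c : ZMod p) := by
  obtain ⟨U, V, hUV⟩ := hc.bez
  rw [classChar_cls hp8 f (relNorm_idC hc.eq U V hUV), map_intCast]
  rw [map_intCast]
  exact (hc.cast_ne_zero hp8).1

/-! ### The square roots of the class of `𝔓` -/

/-- The automorphism of `ℤ[i][θ]` over complex conjugation with `θ ↦ iθ`; it fixes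
`√(2p) = (1 - i)θ`. -/
def twist (p : ℕ) : SS p →+* SS p where
  toFun z := ⟨star z.re, gaussI * star z.im⟩
  map_one' := by
    apply QuadraticAlgebra.ext
    · exact star_one _
    · show gaussI * star (0 : GaussianInt) = 0
      rw [star_zero, mul_zero]
  map_zero' := by
    apply QuadraticAlgebra.ext
    · simp
    · simp
  map_add' a b := by
    apply QuadraticAlgebra.ext
    · simp
    · simp [mul_add]
  map_mul' a b := by
    apply QuadraticAlgebra.ext
    · simp only [QuadraticAlgebra.re_mul]
      apply Zsqrtd.ext
      · simp; ring
      · simp; ring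
    · simp only [QuadraticAlgebra.im_mul]
      apply Zsqrtd.ext
      · simp; ring
      · simp; ring

theorem twist_re {p : ℕ} (z : SS p) : (twist p z).re = star z.re := rfl

theorem twist_im {p : ℕ} (z : SS p) : (twist p z).im = gaussI * star z.im := rfl

theorem twist_cc {p : ℕ} (a : GaussianInt) : twist p (cc p a) = cc p (star a) := by
  apply QuadraticAlgebra.ext
  · rw [twist_re]; rfl
  · rw [twist_im]
    show gaussI * star (0 : GaussianInt) = 0
    rw [star_zero, mul_zero]

theorem twist_theta {p : ℕ} : twist p (theta p) = cc p gaussI * theta p := by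
  apply QuadraticAlgebra.ext
  · simp [twist_re, theta]
  · simp [twist_im, theta]

theorem map_twist_idP {p : ℕ} (π : GaussianInt) :
    (idP p π).map (twist p) = idP p (star π) := by
  rw [idP, Ideal.map_span, Set.image_pair, twist_cc, twist_theta, idP, Ideal.span_insert,
    Ideal.span_insert, mul_comm (cc p gaussI),
    Ideal.span_singleton_mul_right_unit (isUnit_gaussI.map (cc p))]

/-- `α·τ(α)` is fixed by the twist `τ`, hence of the form `X + Y(1 + i)θ` with `X, Y` integers. -/
theorem mul_twist {p : ℕ} (α : SS p) : α * twist p α =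
    ⟨((α.re.norm - p * α.im.norm : ℤ) : GaussianInt),
      (((α.im * star α.re).re + (α.im * star α.re).im : ℤ) : GaussianInt) * (1 + gaussI)⟩ := by
  apply QuadraticAlgebra.ext
  · simp only [QuadraticAlgebra.re_mul, twist_re, twist_im, gauss_norm_eq, sq]
    apply Zsqrtd.ext
    · simp; ring
    · simp; ring
  · simp only [QuadraticAlgebra.im_mul, twist_re, twist_im]
    apply Zsqrtd.ext
    · simp; ring
    · simp; ring

/-- The identity `α·τ(α)·γ = δθ` in coordinates, for `α·τ(α) = pX + Y(1 + i)θ`. -/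
theorem delta_mul_theta {p : ℕ} (x₀ X Y : ℤ) :
    (⟨((p * X : ℤ) : GaussianInt), (Y : GaussianInt) * (1 + gaussI)⟩ : SS p) * gam p x₀ =
      ⟨((p * X + 2 * Y * x₀ : ℤ) : GaussianInt), ((Y - X * x₀ : ℤ) : GaussianInt) * (1 + gaussI)⟩
        * theta p := by
  have hg : gam p x₀ = ⟨(1 - gaussI) * x₀, 1⟩ := by
    rw [gam]
    apply QuadraticAlgebra.ext
    · simp [theta, show (1 : SS p).re = 1 from rfl]
    · simp [theta, show (1 : SS p).im = 0 from rfl]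
  rw [hg]
  apply QuadraticAlgebra.ext
  · simp only [QuadraticAlgebra.re_mul, theta]
    apply Zsqrtd.ext
    · simp; ring
    · simp; ring
  · simp only [QuadraticAlgebra.im_mul, theta]
    apply Zsqrtd.ext
    · simp; ring
    · simp

/-- The arithmetic core: if `I²𝔓 = (α)`, then `I·τ(I)·𝔠` has square `(δ)` with
`δ = α·τ(α)·γ/θ`, whose norm is the square of the integer `N(b)c`. -/
theorem exists_delta {p : ℕ} [Fact p.Prime] [IsDedekindDomain (SS p)]
    {π : GaussianInt} (hπ : PiData p π (star π)) {c x₀ : ℤ} (hc : CData p c x₀)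
    {I : Ideal (SS p)} {b : GaussianInt} (hb : Ideal.relNorm GaussianInt I = Ideal.span {b})
    {α : SS p} (hα : I * I * idP p π = Ideal.span {α}) :
    ∃ (K : Ideal (SS p)) (δ : SS p) (U V : ℤ), K * K = Ideal.span {δ} ∧
      QuadraticAlgebra.norm δ = (((b.norm * c : ℤ) : GaussianInt)) ^ 2 ∧ δ.re = (U : GaussianInt) ∧
      U ^ 2 + 2 * p * V ^ 2 = (b.norm * c) ^ 2 := by
  have hp : p.Prime := Fact.out
  have hp0 : (p : ℤ) ≠ 0 := by exact_mod_cast hp.ne_zero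
  set X := α.re.norm - p * α.im.norm with hX
  set Y := (α.im * star α.re).re + (α.im * star α.re).im with hY
  have hN : X ^ 2 + 2 * p * Y ^ 2 = b.norm ^ 2 * p := by
    have h1 := congrArg (Ideal.relNorm GaussianInt) hα
    rw [map_mul, map_mul, hb, hπ.relNorm, relNorm_span, Ideal.span_singleton_mul_span_singleton,
      Ideal.span_singleton_mul_span_singleton, Ideal.span_singleton_eq_span_singleton] at h1
    obtain ⟨u, hu⟩ := h1
    have h2 := congrArg Zsqrtd.norm hu
    rw [Zsqrtd.norm_mul, (Zsqrtd.norm_eq_one_iff' (by norm_num) _).2 u.isUnit, mul_one,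
      Zsqrtd.norm_mul, Zsqrtd.norm_mul, gauss_norm_norm, (hπ.norm hp).1] at h2
    rw [← h2]; ring
  obtain ⟨X', hX'⟩ : (p : ℤ) ∣ X := by
    apply (Nat.prime_iff_prime_int.1 hp).dvd_of_dvd_pow (n := 2)
    exact ⟨b.norm ^ 2 - 2 * Y ^ 2, by linear_combination hN⟩
  have hN' : p * X' ^ 2 + 2 * Y ^ 2 = b.norm ^ 2 := by
    apply mul_left_cancel₀ hp0
    rw [hX'] at hN; linear_combination hN
  have hUV : (p * X' + 2 * Y * x₀) ^ 2 + 2 * p * (Y - X' * x₀) ^ 2 = (b.norm * c) ^ 2 := by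
    linear_combination (p + 2 * x₀ ^ 2) * hN' + b.norm ^ 2 * hc.eq
  set δ : SS p := ⟨((p * X' + 2 * Y * x₀ : ℤ) : GaussianInt),
    ((Y - X' * x₀ : ℤ) : GaussianInt) * (1 + gaussI)⟩ with hδ
  refine ⟨I * I.map (twist p) * idC p c x₀, δ, p * X' + 2 * Y * x₀, Y - X' * x₀, ?_, ?_, rfl, hUV⟩
  · have h1 := congrArg (Ideal.map (twist p)) hα
    rw [Ideal.map_mul, Ideal.map_mul, map_twist_idP, Ideal.map_span, Set.image_singleton] at h1
    have h2 : Ideal.span {α * twist p α * gam p x₀} = Ideal.span {δ * theta p} := by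
      rw [mul_twist, ← hX, ← hY, hX', delta_mul_theta]
    have hth : Ideal.span {theta p} ≠ 0 := span_ne_zero (theta_ne_zero p)
    apply mul_right_cancel₀ hth
    rw [Ideal.span_singleton_mul_span_singleton, ← h2, ← Ideal.span_singleton_mul_span_singleton,
      ← Ideal.span_singleton_mul_span_singleton, ← hα, ← h1, ← hc.mul_self, ← hπ.mul_conj]
    ring
  · rw [SS_norm_eq]
    have h3 := congrArg (Int.cast : ℤ → GaussianInt) hUV
    push_cast at h3 ⊢
    rw [← h3, hδ]
    push_cast
    linear_combination (-2 * p * ((Y : GaussianInt) - X' * x₀) ^ 2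
      - gaussI * p * ((Y : GaussianInt) - X' * x₀) ^ 2) * gaussI_sq

/-- Parity of the valuation at `2`. -/
theorem even_of_two_pow_mul_sq {d t y : ℕ} (hy : y ≠ 0)
    (h : t ^ 2 = 2 ^ d * y ^ 2) : Even d := by
  have h1 := congrArg (fun n => n.factorization 2) h
  simp only [Nat.factorization_mul (pow_ne_zero d two_ne_zero) (pow_ne_zero 2 hy),
    Nat.factorization_pow, Finsupp.add_apply, Finsupp.smul_apply, smul_eq_mul,
    Nat.prime_two.factorization_self] at h1
  rw [Nat.even_iff]; omega

/-- The product of the two genus characters takes the value `(c/p)` on every square root of the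
class of `𝔓`. -/
theorem classChar_sqrt {p : ℕ} [Fact p.Prime] [IsDedekindDomain (SS p)] (hp8 : p % 8 = 1)
    {π : GaussianInt} {f : GaussianInt →+* ZMod p} (hπ : PiData p π (star π)) (hfπ : f π = 0)
    {c x₀ : ℤ} (hc : CData p c x₀) {W : ClassGroup (SS p)} (hW : W ^ 2 = cls (idP p π)) :
    classChar hp8 f W * classChar hp8 (conjHom f) W = quadraticChar (ZMod p) (c : ZMod p) := by
  have hp : p.Prime := Fact.out
  have hpP := Nat.prime_iff_prime_int.1 hp
  obtain ⟨⟨I, hI⟩, hIW, hIf⟩ := exists_coprime_rep W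
  have hI0 : I ≠ 0 := nonZeroDivisors.ne_zero hI
  have hcls : cls I = W := by rw [cls_of_ne hI0]; exact hIW
  simp only at hIf
  set b := nrm I with hb
  have hrel : Ideal.relNorm GaussianInt I = Ideal.span {b} := (span_nrm I).symm
  obtain ⟨α, hα⟩ := (cls_eq_one_iff (mul_ne_zero (mul_ne_zero hI0 hI0) hπ.ne_zero)).1 (by
    rw [cls_mul (mul_ne_zero hI0 hI0) hπ.ne_zero, cls_mul hI0 hI0, hcls, ← sq, hW, ← sq,
      hπ.cls_sq])
  obtain ⟨K, δ, U, V, hK, hδ, hre, hUV⟩ := exists_delta hπ hc hrel hα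
  have hn0 : ((b.norm : ℤ) : ZMod p) ≠ 0 := by
    rw [← mul_conjHom f]
    exact mul_ne_zero (hIf f) (hIf (conjHom f))
  have hc0 := (hc.cast_ne_zero hp8).1
  rw [← hcls, classChar_cls hp8 f hrel (hIf f), classChar_cls hp8 _ hrel (hIf _), ← map_mul,
    mul_conjHom]
  -- the sign of `m` is chosen so that `m ≡ U`
  obtain ⟨m, hmsq, hmq, hmU⟩ : ∃ m : ℤ, m ^ 2 = (b.norm * c) ^ 2 ∧
      quadraticChar (ZMod p) (m : ZMod p) = quadraticChar (ZMod p) ((b.norm * c : ℤ) : ZMod p) ∧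
      (U : ZMod p) = m := by
    have h1 : (p : ℤ) ∣ (U - b.norm * c) * (U + b.norm * c) :=
      ⟨-2 * V ^ 2, by linear_combination hUV⟩
    rcases hpP.dvd_or_dvd h1 with h | h
    · refine ⟨b.norm * c, rfl, rfl, ?_⟩
      rw [← sub_eq_zero, ← Int.cast_sub, ZMod.intCast_zmod_eq_zero_iff_dvd]
      exact h
    · refine ⟨-(b.norm * c), by ring, ?_, ?_⟩
      · rw [Int.cast_neg, neg_eq_neg_one_mul, map_mul, qc_neg_one hp8, one_mul]
      · rw [← sub_eq_zero, ← Int.cast_sub, ZMod.intCast_zmod_eq_zero_iff_dvd, sub_neg_eq_add]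
        exact h
  have hq2 := qc_two (p := p) hp8
  have h20 : (2 : ZMod p) ≠ 0 := by
    intro h
    rw [h, MulChar.map_zero] at hq2
    exact zero_ne_one hq2
  have hm0 : (m : ZMod p) ≠ 0 := by
    intro h
    rw [h, MulChar.map_zero, Int.cast_mul, map_mul, eq_comm, mul_eq_zero, quadraticChar_eq_zero_iff,
      quadraticChar_eq_zero_iff] at hmq
    exact hmq.elim hn0 hc0
  set T : ℤ := m ^ 2 * (2 * (m + U)) with hT
  have hTp : (T : ZMod p) = (2 * m) ^ 2 * m := by
    rw [hT]; push_cast; rw [hmU]; ring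
  have hTp0 : (T : ZMod p) ≠ 0 := by
    rw [hTp]; exact mul_ne_zero (pow_ne_zero 2 (mul_ne_zero h20 hm0)) hm0
  have hT0 : T ≠ 0 := by
    intro h
    rw [h, Int.cast_zero] at hTp0
    exact hTp0 rfl
  have hcast : (T : GaussianInt) = (m : GaussianInt) ^ 2 * (2 * ((m : GaussianInt) + δ.re)) := by
    rw [hT, hre]; push_cast; ring
  have hTG : (T : GaussianInt) ≠ 0 := by exact_mod_cast hT0
  obtain ⟨w, y, d, e₁, e₂, hw, hy, heq, -⟩ := hilbert_ninety hp8 hπ (m := (m : GaussianInt)) hK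
    (by rw [hδ]; exact_mod_cast congrArg (Int.cast : ℤ → GaussianInt) hmsq.symm)
    (left_ne_zero_of_mul (a := (m : GaussianInt))
      (b := (m : GaussianInt) * (2 * ((m : GaussianInt) + δ.re)))
      (by rw [← mul_assoc, ← sq, ← hcast]; exact hTG))
    (right_ne_zero_of_mul (a := (m : GaussianInt) ^ 2) (by rw [← hcast]; exact hTG))
  rw [← hcast] at heq
  -- `T` is prime to `p`, so `π` and `π̄` do not occur; the norm of `T` is a square, so `d` is even
  have he₁ : e₁ = 0 := by
    by_contra h
    apply hTp0
    rw [← map_intCast f, heq]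
    simp only [map_mul, map_pow, hfπ, zero_pow h]
    ring
  have he₂ : e₂ = 0 := by
    by_contra h
    apply hTp0
    have hfπ' : conjHom f (star π) = 0 := by rw [conjHom_apply, star_star, hfπ]
    rw [← map_intCast (conjHom f), heq]
    simp only [map_mul, map_pow, hfπ', zero_pow h]
    ring
  rw [he₁, he₂, pow_zero, pow_zero, mul_one, mul_one] at heq
  have hd : Even d := by
    have h1 := congrArg (fun z => (Zsqrtd.norm z).natAbs) heq
    have hnp : ∀ (z : GaussianInt) (n : ℕ), (z ^ n).norm = z.norm ^ n :=
      fun z n => map_pow Zsqrtd.normMonoidHom z n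
    have h2 : (1 + gaussI : GaussianInt).norm = 2 := by rw [gauss_norm_eq]; simp
    simp only [Zsqrtd.norm_mul, hnp, Zsqrtd.norm_intCast, Int.natAbs_mul, Int.natAbs_pow, h2,
      Zsqrtd.norm_eq_one_iff.2 hw, one_mul] at h1
    refine even_of_two_pow_mul_sq (t := T.natAbs) (y := y.norm.natAbs) ?_ (by
      rw [sq, h1]; rfl)
    rw [Ne, Int.natAbs_eq_zero, GaussianInt.norm_eq_zero]; exact hy
  obtain ⟨d', rfl⟩ := hd
  have hpow : (1 + gaussI) ^ (d' + d') = 2 ^ d' * gaussI ^ d' := by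
    rw [← two_mul, pow_mul, one_add_gaussI_sq, mul_pow]
  have hqT : quadraticChar (ZMod p) (T : ZMod p) = 1 := by
    have hfy : f y ≠ 0 := by
      intro h
      apply hTp0
      rw [← map_intCast f, heq, map_mul, map_pow, h]; ring
    rw [← map_intCast f, heq, hpow]
    simp only [map_mul, map_pow, map_ofNat]
    rw [hq2, qc_unit hp8 f hw, qc_unit hp8 f isUnit_gaussI, ← map_pow, quadraticChar_sq_one' hfy]
    ring
  rw [hTp, map_mul, quadraticChar_sq_one' (mul_ne_zero h20 hm0), one_mul, hmq, Int.cast_mul,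
    map_mul] at hqT
  have hcc : quadraticChar (ZMod p) (c : ZMod p) * quadraticChar (ZMod p) (c : ZMod p) = 1 := by
    rw [← sq]; exact quadraticChar_sq_one hc0
  linear_combination (quadraticChar (ZMod p) (c : ZMod p)) * hqT -
    (quadraticChar (ZMod p) ((b.norm : ℤ) : ZMod p)) * hcc

/-! ### Conclusion -/

theorem two_pow_quarter_eq {p : ℕ} [Fact p.Prime] (hp8 : p % 8 = 1) {c x₀ : ℤ} (hc : CData p c x₀)
    {s : ℤˣ} (hs : (s : ℤ) = quadraticChar (ZMod p) (c : ZMod p)) :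
    s = -1 ↔ (2 : ZMod p) ^ ((p - 1) / 4) = -1 := by
  rw [← hc.qc hp8, ← hs]
  rcases Int.units_eq_one_or s with rfl | rfl
  · have h20 : (1 : ZMod p) ≠ -1 := by
      intro h
      have h2 : (2 : ZMod p) = 0 := by linear_combination h
      have hq2 := qc_two (p := p) hp8
      rw [h2, MulChar.map_zero] at hq2
      exact zero_ne_one hq2
    simpa using h20
  · simp

theorem sylow_two_classGroup_iff {p : ℕ} (hp : p.Prime) (hp8 : p % 8 = 1) :
    (∀ P : Sylow 2 (ClassGroup (𝓞 (kfield p))),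
      Nonempty (P ≃* Multiplicative (ZMod 2 × ZMod 4))) ↔ (2 : ZMod p) ^ ((p - 1) / 4) = -1 := by
  have : Fact p.Prime := ⟨hp⟩
  have : NumberField (kfield p) := kfield_numberField p
  have : IsDedekindDomain (SS p) := SS_isDedekindDomain hp hp8
  obtain ⟨φ⟩ := exists_ringEquiv hp hp8
  let E : ClassGroup (𝓞 (kfield p)) ≃* ClassGroup (SS p) := (ClassGroup.mulEquiv φ).symm
  obtain ⟨π, f, hπ, hfπ, hf0, hf1⟩ := exists_piData (p := p) hp8
  obtain ⟨c, x₀, hc⟩ := exists_cData (p := p) hp8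
  obtain ⟨g, hg⟩ := exists_two_torsion hp8 hπ hc
  obtain ⟨s, hs⟩ : ∃ s : ℤˣ, (s : ℤ) = quadraticChar (ZMod p) (c : ZMod p) := by
    rcases quadraticChar_dichotomy (hc.cast_ne_zero hp8).1 with h | h
    · exact ⟨1, by rw [h]; rfl⟩
    · exact ⟨-1, by rw [h]; rfl⟩
  rw [← two_pow_quarter_eq hp8 hc hs]
  have hu : ∀ (F : GaussianInt →+* ZMod p) (x : ClassGroup (SS p)),
      (((classChar hp8 F).toHomUnits x : ℤˣ) : ℤ) = classChar hp8 F x := fun _ _ => rfl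
  have hneg : ((-1 : ℤˣ) : ℤ) = -1 := rfl
  have hP := classChar_idP hp8 hπ hf0 hf1
  refine sylow_two_iff ((classChar hp8 f).toHomUnits.comp E.toMonoidHom)
    ((classChar hp8 (conjHom f)).toHomUnits.comp E.toMonoidHom) s ?_ ?_
    (E.symm g) (E.symm (cls (idP p π))) ?_ ?_ ?_ ?_ ?_ ?_ ?_
  · obtain ⟨x, hx⟩ := exists_both_neg (p := p) hp8
    refine ⟨E.symm x, Units.ext ?_, Units.ext ?_⟩ <;>
      simp [hx, hu]
  · obtain ⟨y, hy⟩ := exists_prod_neg hp8 f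
    refine ⟨E.symm y, Units.ext ?_⟩
    simpa [hu] using hy
  · rw [← map_pow, hπ.cls_sq, map_one]
  · rw [Ne, map_eq_one_iff _ E.symm.injective]; exact cls_idP_ne_one hπ
  · apply Units.ext; simpa [hu] using hP.1
  · apply Units.ext; simpa [hu] using hP.2
  · intro x hx
    have h1 := hg (E x) (by rw [← map_pow, hx, map_one])
    rw [← map_mul]
    simp only [MulEquiv.eq_symm_apply]
    rwa [map_eq_one_iff _ E.injective] at h1
  · intro W hW
    have h1 := classChar_sqrt hp8 hπ hfπ hc (W := E W) (by
      rw [← map_pow, hW, MulEquiv.apply_symm_apply])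
    apply Units.ext
    simpa [hu, hs] using h1
  · intro hs1
    refine ⟨E.symm (cls (idC p c x₀)), by rw [← map_pow, hc.cls_sq, map_one], Units.ext ?_⟩
    have h1 := classChar_idC hp8 hc f
    rw [← hs, hs1] at h1
    simpa [hu] using h1

theorem statement_9 (p : ℕ) (hp : p.Prime) (hp8 : p % 8 = 1) :
    (∀ P : Sylow 2 (ClassGroup (𝓞 (kfield p))),
      Nonempty (P ≃* Multiplicative (ZMod 2 × ZMod 4))) ↔
      (((2 : ZMod p) ^ ((p - 1) / 4) = -1 ∧ (-1 : ℤ) ^ ((p - 1) / 8) = -1) ∨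
       ((2 : ZMod p) ^ ((p - 1) / 4) = -1 ∧ (-1 : ℤ) ^ ((p - 1) / 8) = 1)) := by
  rw [sylow_two_classGroup_iff hp hp8, ← and_or_left]
  exact ⟨fun h => ⟨h, (neg_one_pow_eq_or ℤ _).symm⟩, fun h => h.1⟩
end
end

section
/- Let p = c² − 32d² be a prime with p ≡ 1 (mod 8), and let π = c + 4d√2 ∈ ℤ[√2], which generates a prime ideal (π) of ℤ[√2] of residue field 𝔽_p. Then the image of the fundamental unit ε₀ = 1 + √2 in the residue field ℤ[√2]/(π) is a nonzero square if and only if (2/p)₄ = (p/2)₄. -/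
/-!
Write `s` for the image of `√2` in the residue field. The norm of `π = c + 4d√2` is
`c² - 32d² = p`, so the residue field has `p` elements and is identified with `ZMod p`; there
`s² = 2` (`norm_intCast_add_mul_sqrt_two`, `card_quotient_span`).

Since `p ≡ 1 (mod 8)`, there is `i` with `i² = -1`. Put `ζ = s(1 + i)/2`, a square root of `i`,
hence a primitive eighth root of unity, with `ζ s = 1 + i`. Then
`(1 + ζ)² = 1 + s(1 + i) + i = (1 + s)(1 + i) = (1 + s) ζ s`. With `p = 8m + 1`, raising to the
power `4m = (p - 1)/2` gives `1 = (1 + s)^(4m) · (-1)^m · 2^(2m)`. By Euler's criterion `1 + s` is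
a square exactly when `2^(2m) = (-1)^m`, which is the equality of the two quartic symbols
(`exists_sq_eq_one_add_iff`).
-/

open Complex NumberField IntermediateField nonZeroDivisors

noncomputable section

/-- ℚ(√2) as a subfield of ℂ. -/
def Q2 : IntermediateField ℚ ℂ := ℚ⟮(Real.sqrt 2 : ℂ)⟯

/-- The criterion in the prime field, for either square root `s` of `2`. -/
theorem exists_sq_eq_one_add_iff (p : ℕ) [Fact p.Prime] (hp8 : p % 8 = 1)
    (s : ZMod p) (hs : s ^ 2 = 2) :
    (∃ z : ZMod p, z ≠ 0 ∧ z ^ 2 = 1 + s) ↔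
      (2 : ZMod p) ^ ((p - 1) / 4) = (-1 : ZMod p) ^ ((p - 1) / 8) := by
  obtain ⟨m, hm⟩ : ∃ m, p = 8 * m + 1 := ⟨p / 8, by omega⟩
  have h4 : (p - 1) / 4 = 2 * m := by omega
  have h8 : (p - 1) / 8 = m := by omega
  have h2 : p / 2 = 4 * m := by omega
  have hp2 : ringChar (ZMod p) ≠ 2 := by rw [ZMod.ringChar_zmod_n]; omega
  have two_ne : (2 : ZMod p) ≠ 0 := Ring.two_ne_zero hp2
  obtain ⟨i, hi⟩ : ∃ i : ZMod p, -1 = i * i :=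
    ZMod.exists_sq_eq_neg_one_iff.mpr (by omega)
  obtain ⟨ζ, hζ⟩ : ∃ ζ : ZMod p, 2 * ζ = s * (1 + i) := ⟨s * (1 + i) / 2, by field_simp⟩
  have hζs : ζ * s = 1 + i := by
    apply mul_left_cancel₀ two_ne
    linear_combination s * hζ + (1 + i) * hs
  have hζ2 : ζ ^ 2 = i := by
    apply mul_left_cancel₀ (pow_ne_zero 2 two_ne)
    linear_combination (2 * ζ + s * (1 + i)) * hζ + (1 + i) ^ 2 * hs - 2 * hi
  have hζ4 : ζ ^ 4 = -1 := by linear_combination (ζ ^ 2 + i) * hζ2 - hi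
  have key : (1 + ζ) ^ 2 = (1 + s) * (ζ * s) := by
    linear_combination hζ + hζ2 - (1 + s) * hζs
  have h1ζ : 1 + ζ ≠ 0 := by
    intro h
    apply two_ne
    have : ζ = -1 := by linear_combination h
    rw [this] at hζ4
    linear_combination hζ4
  have h1s : 1 + s ≠ 0 := by
    intro h
    rw [h, zero_mul] at key
    exact pow_ne_zero 2 h1ζ key
  have hpow : (1 + s) ^ (4 * m) * ((-1) ^ m * 2 ^ (2 * m)) = 1 := by
    have hF : (1 + ζ) ^ (p - 1) = 1 := ZMod.pow_card_sub_one_eq_one h1ζ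
    rw [show p - 1 = 2 * (4 * m) by omega, pow_mul, key, mul_pow, mul_pow, pow_mul ζ, hζ4,
      show 4 * m = 2 * (2 * m) by ring, pow_mul s, hs] at hF
    rwa [show 4 * m = 2 * (2 * m) by ring]
  have hsq : ((-1 : ZMod p) ^ m) * (-1) ^ m = 1 := by
    rw [← mul_pow]; simp
  have hEuler := ZMod.euler_criterion p h1s
  rw [h2] at hEuler
  rw [h4, h8]
  have hex : (∃ z : ZMod p, z ≠ 0 ∧ z ^ 2 = 1 + s) ↔ IsSquare (1 + s) := by
    constructor
    · rintro ⟨z, -, hz⟩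
      exact ⟨z, by rw [← hz, sq]⟩
    · rintro ⟨z, hz⟩
      refine ⟨z, ?_, by rw [hz, sq]⟩
      rintro rfl
      exact h1s (by simpa using hz)
  rw [hex, hEuler]
  constructor
  · intro h
    rw [h, one_mul] at hpow
    linear_combination (-1) ^ m * hpow - 2 ^ (2 * m) * hsq
  · intro h
    rwa [h, hsq, mul_one] at hpow

theorem minpoly_sqrt_two :
    minpoly ℚ (Real.sqrt 2 : ℂ) = Polynomial.X ^ 2 - Polynomial.C 2 := by
  symm
  apply minpoly.eq_of_irreducible_of_monic
  · apply X_pow_sub_C_irreducible_of_prime Nat.prime_two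
    intro b hb
    apply irrational_sqrt_two
    refine ⟨|b|, ?_⟩
    rw [Rat.cast_abs, ← Real.sqrt_sq_eq_abs]
    congr 1
    exact_mod_cast hb
  · have : ((Real.sqrt 2 : ℝ) : ℂ) ^ 2 = 2 := by
      rw [← Complex.ofReal_pow, Real.sq_sqrt (by norm_num)]; norm_num
    simp [this]
  · exact Polynomial.monic_X_pow_sub_C _ two_ne_zero

theorem isIntegral_sqrt_two : IsIntegral ℚ (Real.sqrt 2 : ℂ) := by
  by_contra h
  have h2 := congrArg Polynomial.natDegree minpoly_sqrt_two
  rw [minpoly.eq_zero h, Polynomial.natDegree_X_pow_sub_C] at h2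
  simp at h2

theorem finrank_Q2 : Module.finrank ℚ Q2 = 2 := by
  unfold Q2
  rw [IntermediateField.adjoin.finrank isIntegral_sqrt_two, minpoly_sqrt_two,
    Polynomial.natDegree_X_pow_sub_C]

instance : NumberField Q2 where
  to_charZero := inferInstance
  to_finiteDimensional := Module.finite_of_finrank_pos (by rw [finrank_Q2]; norm_num)

/-- The norm is computed as the determinant of multiplication in the basis `1, √2`. -/
theorem norm_intCast_add_mul_sqrt_two (s : Q2) (hs : (s : ℂ) = (Real.sqrt 2 : ℂ)) (a b : ℤ) :
    Algebra.norm ℚ ((a : Q2) + b * s) = (a : ℚ) ^ 2 - 2 * b ^ 2 := by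
  have hs2 : s * s = 2 := by
    apply Subtype.ext
    push_cast
    rw [hs, ← Complex.ofReal_mul, Real.mul_self_sqrt (by norm_num)]
    norm_num
    rfl
  have hli : LinearIndependent ℚ ![(1 : Q2), s] := by
    rw [LinearIndependent.pair_iff]
    intro x y hxy
    have hy : y = 0 := by
      by_contra hy
      apply irrational_sqrt_two
      refine ⟨-x / y, ?_⟩
      have h1 := congrArg (fun t : Q2 => (t : ℂ)) hxy
      simp only [Algebra.smul_def, mul_one] at h1
      push_cast at h1
      rw [hs] at h1
      have h2 : (x : ℝ) + y * Real.sqrt 2 = 0 := by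
        have h3 : (x : ℂ) + y * (Real.sqrt 2 : ℂ) = 0 := by simpa using h1
        exact_mod_cast h3
      have hy' : (y : ℝ) ≠ 0 := by exact_mod_cast hy
      push_cast
      field_simp
      linarith
    subst hy
    simpa using hxy
  let B := basisOfLinearIndependentOfCardEqFinrank hli (by simp [finrank_Q2])
  have hB0 : B 0 = 1 := by simp [B]
  have hB1 : B 1 = s := by simp [B]
  have hM : Algebra.leftMulMatrix B ((a : Q2) + b * s) = !![(a : ℚ), 2 * b; (b : ℚ), a] := by
    have e0 : ((a : Q2) + b * s) * B 0 = (a : ℚ) • B 0 + (b : ℚ) • B 1 := by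
      rw [hB0, hB1]; simp [Algebra.smul_def]
    have e1 : ((a : Q2) + b * s) * B 1 = (2 * b : ℚ) • B 0 + (a : ℚ) • B 1 := by
      rw [hB0, hB1]; simp [Algebra.smul_def]; linear_combination (b : Q2) * hs2
    ext i j
    rw [Algebra.leftMulMatrix_eq_repr_mul]
    fin_cases j
    · simp only [Fin.zero_eta, e0, map_add, map_smul, Module.Basis.repr_self]
      fin_cases i <;> simp
    · simp only [Fin.mk_one, e1, map_add, map_smul, Module.Basis.repr_self]
      fin_cases i <;> simp
  rw [Algebra.norm_eq_matrix_det B, hM, Matrix.det_fin_two_of]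
  ring

theorem card_quotient_span (p : ℕ) (π : 𝓞 Q2) (h : Algebra.norm ℚ (π : Q2) = p) :
    Nat.card (𝓞 Q2 ⧸ (Ideal.span {π} : Ideal (𝓞 Q2))) = p := by
  have h1 : Algebra.norm ℤ π = (p : ℤ) := by
    have := Algebra.coe_norm_int π
    rw [h] at this
    exact_mod_cast this
  rw [← Submodule.cardQuot_apply, ← Ideal.absNorm_apply, Ideal.absNorm_span_singleton, h1]
  simp

theorem statement_11 (p : ℕ) (hp : p.Prime) (hp8 : p % 8 = 1)
    (c d : ℤ) (hcd : (p : ℤ) = c ^ 2 - 32 * d ^ 2)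
    -- π = c + 4d√2 as an element of the ring of integers of ℚ(√2) :
    (π : 𝓞 Q2) (hπ : ((π : Q2) : ℂ) = (c : ℂ) + 4 * (d : ℂ) * (Real.sqrt 2 : ℂ))
    (hprime : (Ideal.span {π} : Ideal (𝓞 Q2)).IsPrime)
    -- ε₀ = 1 + √2 :
    (ε₀ : 𝓞 Q2) (hε₀ : ((ε₀ : Q2) : ℂ) = 1 + (Real.sqrt 2 : ℂ)) :
    (∃ z : 𝓞 Q2 ⧸ (Ideal.span {π} : Ideal (𝓞 Q2)), z ≠ 0 ∧
        z ^ 2 = Ideal.Quotient.mk (Ideal.span {π}) ε₀) ↔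
      (2 : ZMod p) ^ ((p - 1) / 4) = (-1 : ZMod p) ^ ((p - 1) / 8) := by
  have : Fact p.Prime := ⟨hp⟩
  obtain ⟨s, rfl⟩ : ∃ s : 𝓞 Q2, ε₀ = 1 + s := ⟨ε₀ - 1, by ring⟩
  have hs : ((s : Q2) : ℂ) = (Real.sqrt 2 : ℂ) := by
    push_cast at hε₀
    exact add_left_cancel hε₀
  have hs2 : s ^ 2 = 2 := by
    apply RingOfIntegers.ext
    apply Subtype.ext
    push_cast
    rw [hs, ← Complex.ofReal_pow, Real.sq_sqrt (by norm_num)]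
    norm_num
    rfl
  have hπ' : (π : Q2) = (c : Q2) + (4 * d : ℤ) * (s : Q2) := by
    apply Subtype.ext
    push_cast
    rw [hπ, hs]
    rfl
  have hnorm : Algebra.norm ℚ (π : Q2) = p := by
    rw [hπ', norm_intCast_add_mul_sqrt_two _ hs]
    have : (p : ℚ) = c ^ 2 - 32 * d ^ 2 := by exact_mod_cast hcd
    rw [this]
    push_cast
    ring
  have hcard := card_quotient_span p π hnorm
  have : Finite (𝓞 Q2 ⧸ (Ideal.span {π} : Ideal (𝓞 Q2))) :=
    Nat.finite_of_card_ne_zero (by rw [hcard]; exact hp.ne_zero)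
  let _ := Fintype.ofFinite (𝓞 Q2 ⧸ (Ideal.span {π} : Ideal (𝓞 Q2)))
  let φ : ZMod p ≃+* (𝓞 Q2 ⧸ (Ideal.span {π} : Ideal (𝓞 Q2))) :=
    ZMod.ringEquivOfPrime _ hp (by rw [← Nat.card_eq_fintype_card, hcard])
  set t := φ.symm (Ideal.Quotient.mk (Ideal.span {π}) s) with ht
  have ht2 : t ^ 2 = 2 := by
    rw [ht, ← map_pow, ← map_pow, hs2, map_ofNat, map_ofNat]
  rw [← exists_sq_eq_one_add_iff p hp8 t ht2]
  have hmk : Ideal.Quotient.mk (Ideal.span {π}) (1 + s) = φ (1 + t) := by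
    simp [ht]
  rw [hmk]
  constructor
  · rintro ⟨z, hz, hz2⟩
    refine ⟨φ.symm z, by simpa using hz, ?_⟩
    rw [← map_pow, hz2, RingEquiv.symm_apply_apply]
  · rintro ⟨z, hz, hz2⟩
    exact ⟨φ z, by simpa using hz, by rw [← map_pow, hz2]⟩
end
end

section
/- Let p = c² − 32d² be a prime with p ≡ 1 (mod 8), and let π = c + 4d√2 ∈ ℤ[√2], which generates a prime ideal (π) of ℤ[√2] of residue field 𝔽_p. Then the image of 2 + √2 in the residue field ℤ[√2]/(π) is a nonzero square if and only if (p/2)₄ = 1. -/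
/-!
The hypothesis `p = c² − 32d²` says that `π = c + 4d√2` has norm `p`, so `K = ℤ[√2]/(π)` is a field
with `p` elements (`natCard_quotient_of_norm`, with the norm computed in the basis `1, √2` by
`norm_Q2`). The rest takes place in a finite field `K` with `p ≡ 1 (mod 8)` elements and an element
`s` with `s² = 2`, and rests on the identity `2 + √2 = (ζ + ζ⁻¹)²` for a suitable `ζ` with
`ζ⁸ = -1`.

If `16 ∣ p - 1`, such a `ζ` exists in `K`; then `ζ² + ζ⁻² = ± s`, and `ζ + ζ⁻¹` or `ζ³ + ζ⁻³` is a
square root of `2 + s`. Conversely, let `z² = 2 + s` and `i² = -1` in `K`. Since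
`(s + 2)(s - 2) = -2 = (i s)²`, the element `u = i s / z` satisfies `u² = s - 2 = z² - 4`, so
`ζ = (z + u) / 2` solves `ζ + ζ⁻¹ = z`, whence `ζ⁸ = -1`. Fermat's little theorem then gives
`1 = ζ ^ (p - 1) = (-1) ^ ((p - 1) / 8)`.
-/

/- STATEMENT 12: Let p = c² − 32d² be a prime, p ≡ 1 (mod 8), π = c + 4d√2 ∈ ℤ[√2]
(the ring of integers of ℚ(√2)), generating a prime ideal (π). The image of 2 + √2 in
ℤ[√2]/(π) is a nonzero square iff (p/2)₄ = 1. -/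

open Complex NumberField IntermediateField nonZeroDivisors

noncomputable section

/-! ### Squares in a finite field containing a square root of two -/

/-- The field with `16 k + 1` elements contains a primitive sixteenth root of unity. It is the
`k`-th power of a non-square. -/
theorem exists_pow_eight_eq_neg_one {K : Type*} [Field K] [Finite K] {k : ℕ}
    (hK : Nat.card K = 16 * k + 1) (h2 : (2 : K) ≠ 0) : ∃ ζ : K, ζ ^ 8 = -1 := by
  have := Fintype.ofFinite K
  have hc : ringChar K ≠ 2 := by
    intro h
    have h' := ringChar.Nat.cast_ringChar (R := K)
    rw [h] at h'
    exact h2 (by exact_mod_cast h')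
  obtain ⟨a, ha⟩ := FiniteField.exists_nonsquare (F := K) hc
  have ha0 : a ≠ 0 := by
    rintro rfl
    exact ha (IsSquare.zero)
  rw [Nat.card_eq_fintype_card] at hK
  have h := (FiniteField.pow_dichotomy hc ha0).resolve_left
    (fun h => ha ((FiniteField.isSquare_iff hc ha0).2 h))
  refine ⟨a ^ k, ?_⟩
  rw [← h, ← pow_mul]
  congr 1
  omega

/-- The supplementary law behind the theorem: `2 + √2` is a square in a finite field with
`q ≡ 1 (mod 8)` elements if and only if `q ≡ 1 (mod 16)`, whichever square root of two is used. -/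
theorem two_add_sqrt_two_isSquare_iff {K : Type*} [Field K] [Finite K]
    (hK : Nat.card K % 8 = 1) (h2 : (2 : K) ≠ 0) {s : K} (hs : s ^ 2 = 2) :
    (∃ z : K, z ≠ 0 ∧ z ^ 2 = 2 + s) ↔ (-1 : ℤ) ^ ((Nat.card K - 1) / 8) = 1 := by
  constructor
  · rintro ⟨z, hz0, hz⟩
    have := Fintype.ofFinite K
    obtain ⟨i, hi⟩ : IsSquare (-1 : K) := by
      rw [FiniteField.isSquare_neg_one_iff, ← Nat.card_eq_fintype_card]
      omega
    obtain ⟨u, hu⟩ : ∃ u, u * z = i * s := ⟨i * s / z, by field_simp⟩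
    have hu2 : u ^ 2 = s - 2 := by
      have : u ^ 2 * z ^ 2 = (s - 2) * z ^ 2 := by
        rw [← mul_pow, hu, hz]
        linear_combination (-s ^ 2) * hi - 2 * hs
      exact mul_right_cancel₀ (pow_ne_zero 2 hz0) this
    obtain ⟨ζ, hζ⟩ : ∃ ζ : K, 2 * ζ = z + u := ⟨(z + u) / 2, by field_simp⟩
    have h4 : (4 : K) ≠ 0 := by
      rw [show (4 : K) = 2 * 2 by norm_num]
      exact mul_ne_zero h2 h2
    -- These steps pass from `ζ + ζ⁻¹ = z` to `ζ² + ζ⁻² = s` and `ζ⁴ + ζ⁻⁴ = 0`.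
    have e1 : ζ ^ 2 + 1 = z * ζ := by
      apply mul_left_cancel₀ h4
      linear_combination (2 * ζ + u - z) * hζ + hu2 - hz
    have e2 : ζ ^ 4 + 1 = s * ζ ^ 2 := by
      linear_combination (ζ ^ 2 + 1 + z * ζ) * e1 + ζ ^ 2 * hz
    have e3 : ζ ^ 8 = -1 := by
      linear_combination (ζ ^ 4 + 1 + s * ζ ^ 2) * e2 + ζ ^ 4 * hs
    have hζ0 : ζ ≠ 0 := by
      rintro rfl
      simp at e2
    have hf : ζ ^ (Nat.card K - 1) = 1 := by
      rw [Nat.card_eq_fintype_card]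
      exact FiniteField.pow_card_sub_one_eq_one ζ hζ0
    have h8 : Nat.card K - 1 = 8 * ((Nat.card K - 1) / 8) := by omega
    rw [h8, pow_mul, e3] at hf
    rcases neg_one_pow_eq_or ℤ ((Nat.card K - 1) / 8) with h | h
    · exact h
    · exfalso
      have h' : (-1 : K) ^ ((Nat.card K - 1) / 8) = -1 := by
        exact_mod_cast congrArg (Int.cast : ℤ → K) h
      rw [hf] at h'
      exact h2 (by linear_combination h')
  · intro h
    have hev : Even ((Nat.card K - 1) / 8) := by
      rcases Nat.even_or_odd ((Nat.card K - 1) / 8) with h' | h'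
      · exact h'
      · rw [h'.neg_one_pow] at h
        norm_num at h
    obtain ⟨k, hk⟩ := hev
    have hpos : 0 < Nat.card K := Nat.card_pos
    obtain ⟨ζ, hζ⟩ := exists_pow_eight_eq_neg_one (K := K) (k := k) (by omega) h2
    have key : ∃ z : K, z ^ 2 = 2 + s := by
      -- As `ζ⁸ = -1`, the inverse of `ζ` is `-ζ⁷`.
      have ht : (ζ ^ 2 - ζ ^ 6 - s) * (ζ ^ 2 - ζ ^ 6 + s) = 0 := by
        linear_combination (ζ ^ 4 - 2) * hζ - hs
      rcases mul_eq_zero.1 ht with ht | ht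
      · exact ⟨ζ - ζ ^ 7, by linear_combination (ζ ^ 6 - 2) * hζ + ht⟩
      · exact ⟨ζ ^ 3 - ζ ^ 5, by linear_combination (ζ ^ 2 - 2) * hζ - ht⟩
    obtain ⟨z, hz⟩ := key
    refine ⟨z, ?_, hz⟩
    rintro rfl
    exact h2 (by linear_combination (s - 2) * hz + hs)

/-! ### The norm of `ℚ(√2)` and the residue field -/

theorem sqrt_two_complex_sq : (Real.sqrt 2 : ℂ) ^ 2 = 2 := by
  rw [← Complex.ofReal_pow, Real.sq_sqrt (by norm_num)]
  norm_num

instance numberField_Q2 : NumberField Q2 where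
  to_charZero := inferInstance
  to_finiteDimensional := IntermediateField.adjoin.finiteDimensional isIntegral_sqrt_two

theorem exists_basis_Q2 :
    ∃ b : Module.Basis (Fin 2) ℚ Q2, b 0 = 1 ∧ ((b 1 : Q2) : ℂ) = (Real.sqrt 2 : ℂ) := by
  have hdim : (IntermediateField.adjoin.powerBasis isIntegral_sqrt_two).dim = 2 := by
    rw [IntermediateField.adjoin.powerBasis_dim, minpoly_sqrt_two]
    exact Polynomial.natDegree_X_pow_sub_C
  have h : ∃ b : Module.Basis (Fin 2) ℚ ℚ⟮(Real.sqrt 2 : ℂ)⟯,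
      b 0 = 1 ∧ ((b 1 : ℚ⟮(Real.sqrt 2 : ℂ)⟯) : ℂ) = (Real.sqrt 2 : ℂ) := by
    refine ⟨(IntermediateField.adjoin.powerBasis isIntegral_sqrt_two).basis.reindex
      (finCongr hdim), ?_, ?_⟩
    · rw [Module.Basis.reindex_apply, PowerBasis.basis_eq_pow]
      simp
    · rw [Module.Basis.reindex_apply, PowerBasis.basis_eq_pow]
      simp
  exact h

theorem norm_Q2 (a e : ℚ) (x : Q2) (hx : (x : ℂ) = a + e * (Real.sqrt 2 : ℂ)) :
    Algebra.norm ℚ x = a ^ 2 - 2 * e ^ 2 := by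
  obtain ⟨b, hb0, hb1⟩ := exists_basis_Q2
  have h0 : x * b 0 = a • b 0 + e • b 1 := by
    apply Subtype.ext
    simp [hb0, hb1, hx, Algebra.smul_def]
  have h1 : x * b 1 = (2 * e) • b 0 + a • b 1 := by
    apply Subtype.ext
    simp [hb0, hb1, hx, Algebra.smul_def]
    rw [show ((2 : Q2) : ℂ) = 2 from rfl]
    linear_combination (e : ℂ) * sqrt_two_complex_sq
  rw [Algebra.norm_eq_matrix_det b, Matrix.det_fin_two]
  simp only [Algebra.leftMulMatrix_eq_repr_mul, h0, h1, map_add, map_smul, Module.Basis.repr_self]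
  simp
  ring

theorem natCard_quotient_of_norm {p : ℕ} {c d : ℤ} (hcd : (p : ℤ) = c ^ 2 - 32 * d ^ 2)
    (π : 𝓞 Q2) (hπ : ((π : Q2) : ℂ) = (c : ℂ) + 4 * (d : ℂ) * (Real.sqrt 2 : ℂ)) :
    Nat.card (𝓞 Q2 ⧸ (Ideal.span {π} : Ideal (𝓞 Q2))) = p := by
  have hn : Algebra.norm ℤ π = p := by
    have h : ((Algebra.norm ℤ π : ℤ) : ℚ) = ((p : ℤ) : ℚ) := by
      rw [Algebra.coe_norm_int, norm_Q2 c (4 * d) _ (by rw [hπ]; push_cast; ring), hcd]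
      push_cast
      ring
    exact_mod_cast h
  rw [← Submodule.cardQuot_apply, ← Ideal.absNorm_apply, Ideal.absNorm_span_singleton, hn]
  simp

theorem statement_12 (p : ℕ) (hp : p.Prime) (hp8 : p % 8 = 1)
    (c d : ℤ) (hcd : (p : ℤ) = c ^ 2 - 32 * d ^ 2)
    -- π = c + 4d√2 as an element of the ring of integers of ℚ(√2) :
    (π : 𝓞 Q2) (hπ : ((π : Q2) : ℂ) = (c : ℂ) + 4 * (d : ℂ) * (Real.sqrt 2 : ℂ))
    (hprime : (Ideal.span {π} : Ideal (𝓞 Q2)).IsPrime)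
    -- τ = 2 + √2 :
    (τ : 𝓞 Q2) (hτ : ((τ : Q2) : ℂ) = 2 + (Real.sqrt 2 : ℂ)) :
    (∃ z : 𝓞 Q2 ⧸ (Ideal.span {π} : Ideal (𝓞 Q2)), z ≠ 0 ∧
        z ^ 2 = Ideal.Quotient.mk (Ideal.span {π}) τ) ↔
      (-1 : ℤ) ^ ((p - 1) / 8) = 1 := by
  have hcard := natCard_quotient_of_norm hcd π hπ
  have hfin : Finite (𝓞 Q2 ⧸ (Ideal.span {π} : Ideal (𝓞 Q2))) :=
    Nat.finite_of_card_ne_zero (by rw [hcard]; exact hp.ne_zero)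
  have hmax : (Ideal.span {π} : Ideal (𝓞 Q2)).IsMaximal :=
    Ideal.Quotient.maximal_of_isField _ (Finite.isField_of_domain _)
  let _ : Field (𝓞 Q2 ⧸ (Ideal.span {π} : Ideal (𝓞 Q2))) := Ideal.Quotient.field _
  have hs : (τ - 2) ^ 2 = 2 := by
    apply RingOfIntegers.ext
    apply Subtype.ext
    simp only [map_pow, map_sub, map_ofNat]
    push_cast
    rw [hτ, show ((2 : Q2) : ℂ) = 2 from rfl]
    linear_combination sqrt_two_complex_sq
  -- `p` is odd, so `2` is invertible modulo a prime of residue cardinality `p`.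
  have h2 : (2 : 𝓞 Q2 ⧸ (Ideal.span {π} : Ideal (𝓞 Q2))) ≠ 0 := by
    intro h
    have hp0 : ((p : ℕ) : 𝓞 Q2 ⧸ (Ideal.span {π} : Ideal (𝓞 Q2))) = 0 := by
      rw [← hcard]
      have := Fintype.ofFinite (𝓞 Q2 ⧸ (Ideal.span {π} : Ideal (𝓞 Q2)))
      rw [Nat.card_eq_fintype_card]
      exact Nat.cast_card_eq_zero _
    rw [show p = 2 * (p / 2) + 1 by omega] at hp0
    push_cast at hp0
    rw [h, zero_mul, zero_add] at hp0
    exact one_ne_zero hp0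
  have key := two_add_sqrt_two_isSquare_iff (by rw [hcard]; exact hp8) h2
    (s := Ideal.Quotient.mk (Ideal.span {π}) (τ - 2))
    (by rw [← map_pow, hs, map_ofNat])
  rw [hcard] at key
  rw [← key, map_sub, map_ofNat, add_sub_cancel]
end
end
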